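/- arXiv:math/0611310 — 4 statements merged into one kernel-verified Lean document; each statement's English description precedes it below -/
import Mathlib

section
/- Let (A,ω,τ,K) be a C*-dynamical system which is ergodic with respect to some net (Λ_α) in Σ|_K with 0 < μ(Λ_α) < ∞ for α large enough. Then lim_α (1/μ(Λ_α⁻¹)) ∫_{Λ_α⁻¹} ω(a τ_g(b)) dg = ω(a)ω(b) for all a, b ∈ A; that is, (A,ω,τ,K⁻¹) is ergodic with respect to the net (Λ_α⁻¹). -/
open Filter Topology
open scoped Pointwise ComplexOrder

/-- A Følner net in a (sub)semigroup `K` of a measure group `(G, Σ, μ)`: a net `(Λ α)` of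
measurable subsets of `K`, indexed by a directed set, with `0 < μ (Λ α) < ∞` for `α` large
enough and `μ (Λ α ∆ (Λ α g)) / μ (Λ α) → 0` for every `g ∈ K`. -/
structure FolnerNetIn {G : Type*} [Group G] [MeasurableSpace G]
    (μ : MeasureTheory.Measure G) (K : Set G) where
  idx : Type
  [pre : Preorder idx]
  [ne : Nonempty idx]
  [dir : IsDirected idx (· ≤ ·)]
  Lam : idx → Set G
  meas : ∀ α, MeasurableSet (Lam α) ∧ Lam α ⊆ K
  fin : ∀ᶠ α in atTop, 0 < μ (Lam α) ∧ μ (Lam α) < ⊤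
  folner : ∀ g ∈ K, Tendsto
    (fun α => (μ (symmDiff (Lam α) (Lam α * {g}))).toReal / (μ (Lam α)).toReal)
    atTop (𝓝 0)

attribute [instance] FolnerNetIn.pre FolnerNetIn.ne FolnerNetIn.dir

open MeasureTheory

/-- **Lemma 4.1.** Let `(A, ω, τ, K)` be a C*-dynamical system which is ergodic with respect
to some net `(Λ α)` in `Σ|_K` (with `0 < μ (Λ α) < ∞` for `α` large enough).  Then
`lim_α (1/μ(Λ α⁻¹)) ∫_{Λ α⁻¹} ω (a τ_g(b)) dg = ω(a) ω(b)` for all `a b : A`,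
i.e. `(A, ω, τ, K⁻¹)` is ergodic with respect to `(Λ α⁻¹)`. -/
theorem ergodic_inverse_net
    -- a unital C*-algebra A
    {A : Type*} [NormedRing A] [StarRing A] [CStarRing A] [NormedAlgebra ℂ A]
    [CompleteSpace A] [StarModule ℂ A]
    -- a state ω on A
    (ω : A →ₗ[ℂ] ℂ) (hω_pos : ∀ a : A, 0 ≤ ω (star a * a)) (hω_one : ω 1 = 1)
    -- a right invariant measure group (G, Σ, μ) with G abelian
    {G : Type*} [CommGroup G] [MeasurableSpace G] (μ : Measure G)
    (hTrans : ∀ (V : Set G) (g : G), MeasurableSet V → MeasurableSet (V * {g}))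
    (hRight : ∀ (V : Set G) (g : G), MeasurableSet V → μ (V * {g}) = μ V)
    -- the inverse map is measurable and μ-invariant
    (hInvMeas : Measurable (fun g : G => g⁻¹))
    (hInvInv : ∀ V : Set G, MeasurableSet V → μ V⁻¹ = μ V)
    -- K is a Følner semigroup in G
    (K : Set G) (hKmeas : MeasurableSet K) (hKmul : ∀ g ∈ K, ∀ h ∈ K, g * h ∈ K)
    (hKFolner : Nonempty (FolnerNetIn μ K))
    -- the action τ, making (A, ω, τ, K) a C*-dynamical system
    (τ : G → A ≃⋆ₐ[ℂ] A)
    (hτ_one : ∀ a : A, τ 1 a = a)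
    (hτ_mul : ∀ g h a, τ g (τ h a) = τ (g * h) a)
    (hω_inv : ∀ g a, ω (τ g a) = ω a)
    (hτ_meas : ∀ a b : A, Measurable fun g : K => ω (a * τ (g : G) b))
    -- a net (Λ α) in Σ|_K with 0 < μ (Λ α) < ∞ for α large enough
    {ι : Type*} [Preorder ι] [Nonempty ι] [IsDirected ι (· ≤ ·)]
    (Λ : ι → Set G) (hΛ : ∀ α, MeasurableSet (Λ α) ∧ Λ α ⊆ K)
    (hΛfin : ∀ᶠ α in atTop, 0 < μ (Λ α) ∧ μ (Λ α) < ⊤)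
    -- the system is ergodic with respect to (Λ α)
    (hErg : ∀ a b : A,
      Tendsto (fun α => (μ (Λ α)).toReal⁻¹ • ∫ g in Λ α, ω (a * τ g b) ∂μ)
        atTop (𝓝 (ω a * ω b))) :
    -- conclusion: (A, ω, τ, K⁻¹) is ergodic with respect to (Λ α⁻¹)
    ∀ a b : A,
      Tendsto (fun α => (μ ((Λ α)⁻¹)).toReal⁻¹ • ∫ g in (Λ α)⁻¹, ω (a * τ g b) ∂μ)
        atTop (𝓝 (ω a * ω b)) := by
  have hstar : ∀ x : A, ω (star x) = (starRingEnd ℂ) (ω x) := by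
    intro x
    have h0 := (Complex.nonneg_iff.1 (hω_pos x)).2
    have h1 := (Complex.nonneg_iff.1 (hω_pos (1 + x))).2
    have h2 := (Complex.nonneg_iff.1 (hω_pos (1 + Complex.I • x))).2
    simp only [star_add, star_one, star_smul, add_mul, mul_add, one_mul, mul_one, map_add,
      hω_one, smul_mul_assoc, mul_smul_comm, map_smul, smul_eq_mul, Complex.add_im,
      Complex.one_im, Complex.mul_im, Complex.mul_re, Complex.I_re, Complex.I_im,
      Complex.star_def, Complex.conj_I, Complex.neg_re, Complex.neg_im] at h1 h2
    apply Complex.ext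
    · rw [Complex.conj_re]; linarith
    · rw [Complex.conj_im]; linarith
  have hkey : ∀ (a b : A) (g : G),
      ω (a * τ g⁻¹ b) = (starRingEnd ℂ) (ω (star b * τ g (star a))) := by
    intro a b g
    rw [← hstar, star_mul, star_star, map_star, star_star, ← hω_inv g (a * τ g⁻¹ b), map_mul,
      hτ_mul, mul_inv_cancel, hτ_one]
  let e : G ≃ᵐ G := ⟨Equiv.inv G, hInvMeas, hInvMeas⟩
  have hmp : MeasurePreserving e μ μ := by
    refine ⟨hInvMeas, ?_⟩
    ext V hV
    rw [e.map_apply]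
    exact hInvInv V hV
  intro a b
  have hlim := (Complex.continuous_conj.tendsto _).comp (hErg (star b) (star a))
  rw [hstar, hstar, map_mul, Complex.conj_conj, Complex.conj_conj, mul_comm] at hlim
  refine hlim.congr fun α => ?_
  have hint : ∫ g in (Λ α)⁻¹, ω (a * τ g b) ∂μ = ∫ g in Λ α, ω (a * τ g⁻¹ b) ∂μ := by
    have h := hmp.setIntegral_preimage_emb e.measurableEmbedding
      (fun g => ω (a * τ g⁻¹ b)) (Λ α)
    rw [← h]
    have h' : e ⁻¹' (Λ α) = (Λ α)⁻¹ := rfl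
    rw [h']
    congr 1
    funext g
    have h'' : e g = g⁻¹ := rfl
    rw [h'', inv_inv]
  rw [hInvInv _ (hΛ α).1, hint]
  simp only [hkey, Function.comp]
  rw [integral_conj, Complex.real_smul, Complex.real_smul, map_mul, Complex.conj_ofReal]
end

section
/- Let (A,ω,τ,K) be an ergodic C*-dynamical system and let (Λ_{1α}), (Λ_{2α}) be Følner nets in K over the same directed set. If (g,h) ↦ ω(τ_h(a) τ_{gh}(b) τ_g(c)) is (Σ|_K × Σ|_K)-measurable for all a, b, c ∈ A, then lim_α sup_{g₁,g₂ ∈ K} | M_{α,g₁,g₂}( ω(τ_g(a) τ_{gh}(b) τ_h(c)) ) − ω(a)ω(b)ω(c) | = 0 for all a, b, c ∈ A. -/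
open Filter Topology
open scoped Pointwise ComplexOrder

open MeasureTheory

/-- Ergodicity of `(A, ω, τ, K)` along a Følner net in `K`. -/
def FolnerNetIn.ErgodicAlong
    {A : Type*} [NormedRing A] [StarRing A] [CStarRing A] [NormedAlgebra ℂ A]
    [CompleteSpace A] [StarModule ℂ A]
    {G : Type*} [CommGroup G] [MeasurableSpace G] {μ : Measure G} {K : Set G}
    (F : FolnerNetIn μ K) (ω : A →ₗ[ℂ] ℂ) (τ : G → A ≃⋆ₐ[ℂ] A) : Prop :=
  ∀ a b : A,
    Tendsto (fun α => (μ (F.Lam α)).toReal⁻¹ • ∫ g in F.Lam α, ω (a * τ g b) ∂μ)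
      atTop (𝓝 (ω a * ω b))

set_option linter.unusedSectionVars false
set_option linter.style.haveILetI false

section aux

variable {A : Type*} [NormedRing A] [StarRing A] [CStarRing A] [NormedAlgebra ℂ A]
    [CompleteSpace A] [StarModule ℂ A]

lemma aux_herm (ω : A →ₗ[ℂ] ℂ) (hω_pos : ∀ a : A, 0 ≤ ω (star a * a)) (x : A) :
    ω (star x) = starRingEnd ℂ (ω x) := by
  have h0 : ∀ s : A, (ω (star s * s)).im = 0 := fun s => (Complex.le_def.1 (hω_pos s)).2.symm
  have h1 := h0 (1 + x)
  have h2 := h0 (1 + Complex.I • x)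
  have h3 := h0 x
  have h4 := h0 1
  simp only [star_add, star_one, add_mul, mul_add, one_mul, mul_one, map_add, star_smul,
    Complex.add_im, map_smul, smul_mul_assoc, mul_smul_comm] at h1 h2 h4
  simp at h1 h2 h4
  apply Complex.ext
  · simp; linarith
  · simp; linarith

/-- the seminorm of the state -/
noncomputable def qn (ω : A →ₗ[ℂ] ℂ) (x : A) : ℝ := Real.sqrt (ω (star x * x)).re

lemma qn_nonneg (ω : A →ₗ[ℂ] ℂ) (x : A) : 0 ≤ qn ω x := Real.sqrt_nonneg _

lemma qn_sq (ω : A →ₗ[ℂ] ℂ) (hω_pos : ∀ a : A, 0 ≤ ω (star a * a)) (x : A) :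
    qn ω x ^ 2 = (ω (star x * x)).re :=
  Real.sq_sqrt (Complex.le_def.1 (hω_pos x)).1

lemma aux_cs (ω : A →ₗ[ℂ] ℂ) (hω_pos : ∀ a : A, 0 ≤ ω (star a * a)) (x y : A) :
    ‖ω (star x * y)‖ ≤ qn ω x * qn ω y := by
  let c : PreInnerProductSpace.Core ℂ A :=
    { inner := fun x y => ω (star x * y)
      conj_inner_symm := fun x y => by
        rw [← aux_herm ω hω_pos]; simp
      re_inner_nonneg := fun x => (Complex.le_def.1 (hω_pos x)).1
      add_left := fun x y z => by simp [add_mul]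
      smul_left := fun x y r => by simp }
  have h := @InnerProductSpace.Core.inner_mul_inner_self_le ℂ A _ _ _ c x y
  change ‖ω (star x * y)‖ * ‖ω (star y * x)‖ ≤ (ω (star x * x)).re * (ω (star y * y)).re at h
  have h2 : ω (star y * x) = starRingEnd ℂ (ω (star x * y)) := by
    rw [← aux_herm ω hω_pos]; simp
  rw [h2, RCLike.norm_conj, ← qn_sq ω hω_pos, ← qn_sq ω hω_pos] at h
  apply abs_le_of_sq_le_sq' _ (mul_nonneg (qn_nonneg _ _) (qn_nonneg _ _)) |>.2
  nlinarith

lemma qn_expand (ω : A →ₗ[ℂ] ℂ) (hω_pos : ∀ a : A, 0 ≤ ω (star a * a)) (x y : A) (s t : ℝ) :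
    qn ω (s • x + t • y) ^ 2 =
      s ^ 2 * qn ω x ^ 2 + 2 * s * t * (ω (star x * y)).re + t ^ 2 * qn ω y ^ 2 := by
  have h2 : ω (star y * x) = starRingEnd ℂ (ω (star x * y)) := by
    rw [← aux_herm ω hω_pos]; simp
  rw [qn_sq ω hω_pos, qn_sq ω hω_pos, qn_sq ω hω_pos]
  rw [← Complex.coe_smul, ← Complex.coe_smul]
  simp only [star_add, star_smul, add_mul, mul_add, smul_mul_assoc, mul_smul_comm, map_add,
    map_smul, h2]
  simp
  ring

lemma qn_map (ω : A →ₗ[ℂ] ℂ) (f : A ≃⋆ₐ[ℂ] A) (hf : ∀ a, ω (f a) = ω a) (x : A) :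
    qn ω (f x) = qn ω x := by
  unfold qn
  rw [← map_star, ← map_mul, hf]

lemma exists_dominate {B : Type*} [CStarAlgebra B] (b : B) :
    ∃ M : ℝ, 0 ≤ M ∧ ∃ s : B, (M : ℂ) • (1 : B) - b * star b = star s * s := by
  letI := CStarAlgebra.spectralOrder B
  haveI := CStarAlgebra.spectralOrderedRing B
  refine ⟨‖b * star b‖, norm_nonneg _, ?_⟩
  have h : b * star b ≤ algebraMap ℝ B ‖b * star b‖ := IsSelfAdjoint.le_algebraMap_norm_self
  have h2 := CStarAlgebra.nonneg_iff_eq_star_mul_self.1 (sub_nonneg.2 h)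
  obtain ⟨s, hs⟩ := h2
  refine ⟨s, ?_⟩
  rw [← hs, Algebra.algebraMap_eq_smul_one]
  rw [Complex.coe_smul]

lemma qn_bound (ω : A →ₗ[ℂ] ℂ) (hω_pos : ∀ a : A, 0 ≤ ω (star a * a)) (a b : A) :
    ∃ M : ℝ, 0 ≤ M ∧ ∀ f : A ≃⋆ₐ[ℂ] A, qn ω (star (a * f b)) ≤ M := by
  letI : CStarAlgebra A := {}
  obtain ⟨M, hM, s, hs⟩ := exists_dominate b
  refine ⟨Real.sqrt (M * (ω (a * star a)).re), Real.sqrt_nonneg _, fun f => ?_⟩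
  unfold qn
  apply Real.sqrt_le_sqrt
  have h := (Complex.le_def.1 (hω_pos (f s * star a))).1
  have e : star (f s * star a) * (f s * star a) =
      (M : ℂ) • (a * star a) - a * f b * star (a * f b) := by
    have : star (f s) * f s = (M : ℂ) • 1 - f b * star (f b) := by
      rw [← map_star, ← map_mul, ← hs, map_sub, map_smul, map_one, map_mul, map_star]
    calc _ = a * (star (f s) * f s) * star a := by simp [mul_assoc]
      _ = _ := by rw [this]; simp [mul_assoc, mul_sub, sub_mul]
  rw [e] at h
  simp at h
  simp
  linarith

end aux

section meas
variable {X : Type*} [MeasurableSpace X]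

lemma meas_indicator {S : Set X} (hS : MeasurableSet S) {f : X → ℂ}
    (hf : Measurable fun x : S => f x) : Measurable (S.indicator f) := by
  apply measurable_of_restrict_of_restrict_compl hS
  · convert hf using 1
    ext x; simp
  · convert (measurable_const : Measurable fun _ : (Sᶜ : Set X) => (0 : ℂ)) using 1
    ext x; simpa using fun h => absurd h x.2

lemma int_on {μ : Measure X} {K S : Set X} (hK : MeasurableSet K) (hS : MeasurableSet S)
    (hSK : S ⊆ K) (hfin : μ S < ⊤) {f : X → ℂ} (hf : Measurable fun x : K => f x) {C : ℝ}
    (hC : ∀ x, ‖f x‖ ≤ C) : IntegrableOn f S μ := by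
  have h1 : IntegrableOn (K.indicator f) S μ := by
    refine Measure.integrableOn_of_bounded (M := C) hfin.ne
      (meas_indicator hK hf).aestronglyMeasurable ?_
    refine Eventually.of_forall fun x => ?_
    exact (norm_indicator_le_norm_self f x).trans (hC x)
  refine h1.congr_fun (fun x hx => ?_) hS
  simp [hSK hx]

lemma diff_bound {μ : Measure X} {S T : Set X} (hS : MeasurableSet S) (hT : MeasurableSet T)
    (hSf : μ S < ⊤) (hTf : μ T < ⊤) {f : X → ℂ} (h1 : IntegrableOn f S μ)
    (h2 : IntegrableOn f T μ) {C : ℝ} (hC : ∀ x, ‖f x‖ ≤ C) :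
    ‖∫ x in S, f x ∂μ - ∫ x in T, f x ∂μ‖ ≤ C * (μ (symmDiff S T)).toReal := by
  have hfin : μ (symmDiff S T) ≠ ⊤ :=
    (lt_of_le_of_lt (measure_mono Set.symmDiff_subset_union)
      (lt_of_le_of_lt (measure_union_le S T) (ENNReal.add_lt_top.2 ⟨hSf, hTf⟩))).ne
  rw [← integral_indicator hS, ← integral_indicator hT, ← integral_sub
    ((integrable_indicator_iff hS).2 h1) ((integrable_indicator_iff hT).2 h2)]
  have hm : MeasurableSet (symmDiff S T) := hS.symmDiff hT
  have key : ∀ x, ‖S.indicator f x - T.indicator f x‖ ≤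
      (symmDiff S T).indicator (fun _ => C) x := by
    intro x
    by_cases hs : x ∈ S <;> by_cases ht : x ∈ T <;>
      simp [Set.indicator, Set.mem_symmDiff, hs, ht, hC]
  refine (norm_integral_le_of_norm_le ?_ (Eventually.of_forall key)).trans ?_
  · exact (integrable_indicator_iff hm).2 (integrableOn_const hfin)
  · rw [integral_indicator hm, setIntegral_const, smul_eq_mul, mul_comm]; rfl

end meas

section trans
variable {G : Type*} [CommGroup G] [MeasurableSpace G] (μ : Measure G)

lemma trans_int 
    (hTrans : ∀ (V : Set G) (g : G), MeasurableSet V → MeasurableSet (V * {g}))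
    (hRight : ∀ (V : Set G) (g : G), MeasurableSet V → μ (V * {g}) = μ V)
    (S : Set G) (k : G) (f : G → ℂ) :
    ∫ x in S * {k}, f x ∂μ = ∫ x in S, f (x * k) ∂μ := by
  have hpre : ∀ (V : Set G) (g : G), (fun x => x * g) ⁻¹' V = V * {g⁻¹} := by
    intro V g
    simp
  have hm : ∀ g : G, Measurable fun x : G => x * g := fun g V hV => by
    rw [hpre]; exact hTrans V _ hV
  have hmp : MeasurePreserving (fun x : G => x * k) μ μ := by
    refine ⟨hm k, ?_⟩
    ext V hV
    rw [Measure.map_apply (hm k) hV, hpre, hRight V _ hV]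
  have he : MeasurableEmbedding (fun x : G => x * k) := by
    refine ⟨mul_left_injective k, hm k, fun {V} hV => ?_⟩
    have : (fun x => x * k) '' V = V * {k} := by simp
    rw [this]; exact hTrans V k hV
  have := hmp.setIntegral_image_emb he f S
  rw [← this]
  simp
end trans

section erg

variable {A : Type*} [NormedRing A] [StarRing A] [CStarRing A] [NormedAlgebra ℂ A]
    [CompleteSpace A] [StarModule ℂ A]

lemma orbit_small (ω : A →ₗ[ℂ] ℂ) (hω_pos : ∀ a : A, 0 ≤ ω (star a * a))
    {G : Type*} [CommGroup G] [MeasurableSpace G] (μ : Measure G)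
    (K : Set G) (hKmeas : MeasurableSet K)
    (τ : G → A ≃⋆ₐ[ℂ] A)
    (hω_inv : ∀ g a, ω (τ g a) = ω a)
    (hτ_meas : ∀ a b : A, Measurable fun g : K => ω (a * τ (g : G) b))
    (F : FolnerNetIn μ K) (hF : F.ErgodicAlong ω τ) (b : A) (hb : ω b = 0)
    (η : ℝ) (hη : 0 < η) :
    ∃ x ∈ convexHull ℝ ((fun k => τ k b) '' K), qn ω x < η := by
  by_contra! hcon
  set C := convexHull ℝ ((fun k => τ k b) '' K) with hC
  have hconv : Convex ℝ C := convex_convexHull ℝ _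
  have horb : ∀ k ∈ K, τ k b ∈ C := fun k hk => subset_convexHull ℝ _ ⟨k, hk, rfl⟩
  have hKne : K.Nonempty := by
    obtain ⟨α, hα⟩ := F.fin.exists
    by_contra hne
    rw [Set.not_nonempty_iff_eq_empty] at hne
    have : F.Lam α = ∅ := Set.subset_eq_empty (F.meas α).2 hne
    rw [this] at hα
    simp at hα
  obtain ⟨k0, hk0⟩ := hKne
  set D : Set ℝ := (fun x => qn ω x ^ 2) '' C with hD
  have hDne : D.Nonempty := ⟨_, _, horb k0 hk0, rfl⟩
  have hDbd : BddBelow D := ⟨0, by rintro _ ⟨x, -, rfl⟩; positivity⟩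
  set d := sInf D with hd
  have hdpos : 0 < d := by
    have : η ^ 2 ≤ d := le_csInf hDne (by
      rintro _ ⟨x, hx, rfl⟩
      exact pow_le_pow_left₀ hη.le (hcon x hx) 2)
    have := pow_pos hη 2
    linarith
  set B := qn ω b ^ 2 with hB
  have hB0 : 0 ≤ B := by positivity
  set t : ℝ := d / (2 * (d + B)) with ht
  have htpos : 0 < t := by positivity
  have ht2 : t * (d + B) = d / 2 := by rw [ht]; field_simp
  have ht1 : t ≤ 1 / 2 := by
    rw [ht, div_le_div_iff₀ (by positivity) (by norm_num)]; linarith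
  obtain ⟨_, ⟨v, hv, rfl⟩, hvd⟩ := exists_lt_of_csInf_lt hDne
    (show sInf D < d + t * d / 2 by rw [← hd]; have := mul_pos htpos hdpos; linarith)
  have hR : ∀ k ∈ K, d / 2 ≤ (ω (star v * τ k b)).re := by
    intro k hk
    have h1 : d ≤ qn ω ((1 - t) • v + t • τ k b) ^ 2 :=
      csInf_le hDbd ⟨_, hconv hv (horb k hk) (by linarith) htpos.le (by ring), rfl⟩
    rw [qn_expand ω hω_pos, qn_map ω _ (hω_inv k), ← hB] at h1
    set R := (ω (star v * τ k b)).re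
    simp only at hvd
    set V := qn ω v ^ 2
    have h2 : (1 - t) ^ 2 * V ≤ (1 - t) ^ 2 * d + t * d / 2 := by
      have : (1 - t) ^ 2 ≤ 1 := by nlinarith
      have h3 : 0 < t * d / 2 := by positivity
      nlinarith [sq_nonneg (1 - t)]
    have h3 : t * d ≤ t * (2 * (1 - t) * R) := by
      have : t * (t * (d + B)) = t * (d / 2) := by rw [ht2]
      nlinarith
    have h4 : d ≤ 2 * (1 - t) * R := le_of_mul_le_mul_left h3 htpos
    have h5 : 0 ≤ R := by
      by_contra hneg
      push Not at hneg
      nlinarith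
    nlinarith
  have hlim := hF (star v) b
  rw [hb, mul_zero] at hlim
  have hlim2 := (Complex.continuous_re.tendsto _).comp hlim
  have hev : ∀ᶠ α in atTop, d / 2 ≤
      (Complex.re ∘ fun α => (μ (F.Lam α)).toReal⁻¹ • ∫ g in F.Lam α, ω (star v * τ g b) ∂μ) α := by
    filter_upwards [F.fin] with α hα
    have hm : 0 < (μ (F.Lam α)).toReal := ENNReal.toReal_pos hα.1.ne' hα.2.ne
    have hint : IntegrableOn (fun g => ω (star v * τ g b)) (F.Lam α) μ :=
      int_on hKmeas (F.meas α).1 (F.meas α).2 hα.2 (hτ_meas _ _) (C := qn ω v * qn ω b)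
        (fun g => by simpa [qn_map ω _ (hω_inv g)] using aux_cs ω hω_pos v (τ g b))
    have hre : (∫ g in F.Lam α, ω (star v * τ g b) ∂μ).re =
        ∫ g in F.Lam α, (ω (star v * τ g b)).re ∂μ := (integral_re hint).symm
    have hle : d / 2 * (μ (F.Lam α)).toReal ≤ ∫ g in F.Lam α, (ω (star v * τ g b)).re ∂μ := by
      have := setIntegral_mono_on (μ := μ) (s := F.Lam α) (f := fun _ => d / 2)
        (g := fun g => (ω (star v * τ g b)).re) (integrableOn_const hα.2.ne) hint.re (F.meas α).1
        (fun g hg => hR g ((F.meas α).2 hg))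
      rw [setIntegral_const, smul_eq_mul, mul_comm] at this
      exact this
    simp only [Function.comp, Complex.real_smul, Complex.re_ofReal_mul, hre]
    rw [inv_mul_eq_div, le_div_iff₀ hm]
    exact hle
  have := ge_of_tendsto hlim2 hev
  simp at this
  linarith

lemma ume (ω : A →ₗ[ℂ] ℂ) (hω_pos : ∀ a : A, 0 ≤ ω (star a * a)) (hω_one : ω 1 = 1)
    {G : Type*} [CommGroup G] [MeasurableSpace G] (μ : Measure G)
    (hTrans : ∀ (V : Set G) (g : G), MeasurableSet V → MeasurableSet (V * {g}))
    (hRight : ∀ (V : Set G) (g : G), MeasurableSet V → μ (V * {g}) = μ V)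
    (K : Set G) (hKmeas : MeasurableSet K) (hKmul : ∀ g ∈ K, ∀ h ∈ K, g * h ∈ K)
    (τ : G → A ≃⋆ₐ[ℂ] A)
    (hτ_mul : ∀ g h a, τ g (τ h a) = τ (g * h) a)
    (hω_inv : ∀ g a, ω (τ g a) = ω a)
    (hτ_meas : ∀ a b : A, Measurable fun g : K => ω (a * τ (g : G) b))
    (F : FolnerNetIn μ K) (hF : F.ErgodicAlong ω τ)
    {ι : Type*} [Preorder ι] [Nonempty ι] [IsDirected ι (· ≤ ·)]
    (Λ : ι → Set G)
    (hΛ : ∀ α, MeasurableSet (Λ α) ∧ Λ α ⊆ K)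
    (hΛfin : ∀ᶠ α in atTop, 0 < μ (Λ α) ∧ μ (Λ α) < ⊤)
    (hΛfolner : ∀ g ∈ K, Tendsto
      (fun α => (μ (symmDiff (Λ α) (Λ α * {g}))).toReal / (μ (Λ α)).toReal) atTop (𝓝 0))
    (b : A) (ε : ℝ) (hε : 0 < ε) :
    ∀ᶠ α in atTop, ∀ v : A,
      ‖∫ g in Λ α, ω (star v * τ g b) ∂μ - (μ (Λ α)).toReal * (ω (star v) * ω b)‖
        ≤ ε * (μ (Λ α)).toReal * qn ω v := by
  have hcs : ∀ v x g, ‖ω (star v * τ g x)‖ ≤ qn ω v * qn ω x := fun v x g => by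
    simpa [qn_map ω _ (hω_inv g)] using aux_cs ω hω_pos v (τ g x)
  have hint : ∀ S : Set G, MeasurableSet S → S ⊆ K → μ S < ⊤ → ∀ v x : A,
      IntegrableOn (fun g => ω (star v * τ g x)) S μ := fun S hS hSK hSf v x =>
    int_on hKmeas hS hSK hSf (hτ_meas _ _) (hcs v x)
  -- centred case
  have main : ∀ b : A, ω b = 0 → ∀ ε : ℝ, 0 < ε → ∀ᶠ α in atTop, ∀ v : A,
      ‖∫ g in Λ α, ω (star v * τ g b) ∂μ‖ ≤ ε * (μ (Λ α)).toReal * qn ω v := by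
    intro b hb ε hε
    obtain ⟨x, hx, hxs⟩ := orbit_small ω hω_pos μ K hKmeas τ hω_inv hτ_meas F hF b hb (ε / 2)
      (by positivity)
    let P : Set A := {x | ∀ ε : ℝ, 0 < ε → ∀ᶠ α in atTop, ∀ v : A,
      ‖∫ g in Λ α, ω (star v * τ g b) ∂μ - ∫ g in Λ α, ω (star v * τ g x) ∂μ‖
        ≤ ε * (μ (Λ α)).toReal * qn ω v}
    have hP : Convex ℝ P := by
      intro x hx y hy s t hs ht hst ε hε
      filter_upwards [hx ε hε, hy ε hε, hΛfin] with α h1 h2 h3 v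
      have e : ∫ g in Λ α, ω (star v * τ g (s • x + t • y)) ∂μ =
          (s : ℂ) * ∫ g in Λ α, ω (star v * τ g x) ∂μ +
          (t : ℂ) * ∫ g in Λ α, ω (star v * τ g y) ∂μ := by
        rw [← integral_const_mul, ← integral_const_mul, ← integral_add
          ((hint _ (hΛ α).1 (hΛ α).2 h3.2 v x).const_mul _)
          ((hint _ (hΛ α).1 (hΛ α).2 h3.2 v y).const_mul _)]
        congr 1
        ext g
        rw [← Complex.coe_smul, ← Complex.coe_smul, map_add, map_smul, map_smul, mul_add,
          map_add, mul_smul_comm, mul_smul_comm, map_smul, map_smul, smul_eq_mul, smul_eq_mul]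
      rw [e]
      set I := ∫ g in Λ α, ω (star v * τ g b) ∂μ
      set I1 := ∫ g in Λ α, ω (star v * τ g x) ∂μ
      set I2 := ∫ g in Λ α, ω (star v * τ g y) ∂μ
      have hst' : (s : ℂ) + t = 1 := by exact_mod_cast hst
      have e2 : I - (s * I1 + t * I2) = s * (I - I1) + t * (I - I2) := by
        linear_combination - I * hst'
      rw [e2]
      refine (norm_add_le _ _).trans ?_
      rw [norm_mul, norm_mul, Complex.norm_of_nonneg hs, Complex.norm_of_nonneg ht]
      have a1 := mul_le_mul_of_nonneg_left (h1 v) hs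
      have a2 := mul_le_mul_of_nonneg_left (h2 v) ht
      have : s * (ε * (μ (Λ α)).toReal * qn ω v) + t * (ε * (μ (Λ α)).toReal * qn ω v) =
        ε * (μ (Λ α)).toReal * qn ω v := by rw [← add_mul, hst, one_mul]
      linarith
    have hPK : (fun k => τ k b) '' K ⊆ P := by
      rintro _ ⟨k, hk, rfl⟩ ε hε
      have hδ : 0 < ε / (qn ω b + 1) := div_pos hε (by linarith [qn_nonneg ω b])
      filter_upwards [hΛfin, (hΛfolner k hk).eventually (gt_mem_nhds hδ)] with α h1 h2 v
      have hm : 0 < (μ (Λ α)).toReal := ENNReal.toReal_pos h1.1.ne' h1.2.ne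
      have e : ∫ g in Λ α, ω (star v * τ g (τ k b)) ∂μ =
          ∫ g in Λ α * {k}, ω (star v * τ g b) ∂μ := by
        rw [trans_int μ hTrans hRight]
        simp only [hτ_mul]
      have hsub : Λ α * {k} ⊆ K := by
        rintro _ ⟨g, hg, k', hk', rfl⟩
        rw [Set.mem_singleton_iff] at hk'
        subst hk'
        exact hKmul _ ((hΛ α).2 hg) _ hk
      have hf2 : μ (Λ α * {k}) < ⊤ := by rw [hRight _ _ (hΛ α).1]; exact h1.2
      rw [e]
      refine (diff_bound (hΛ α).1 (hTrans _ k (hΛ α).1) h1.2 hf2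
        (hint _ (hΛ α).1 (hΛ α).2 h1.2 v b) (hint _ (hTrans _ k (hΛ α).1) hsub hf2 v b)
        (hcs v b)).trans ?_
      rw [div_lt_iff₀ hm] at h2
      have hqb := qn_nonneg ω b
      have hqv := qn_nonneg ω v
      have h4 : qn ω b * (μ (symmDiff (Λ α) (Λ α * {k}))).toReal ≤ ε * (μ (Λ α)).toReal := by
        calc _ ≤ (qn ω b + 1) * (ε / (qn ω b + 1) * (μ (Λ α)).toReal) := by
              apply mul_le_mul (by linarith) h2.le ENNReal.toReal_nonneg (by linarith)
          _ = _ := by field_simp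
      nlinarith
    have hxP : x ∈ P := convexHull_min hPK hP hx
    filter_upwards [hxP (ε / 2) (by positivity), hΛfin] with α h1 h2 v
    have hqv := qn_nonneg ω v
    have h3 : ‖∫ g in Λ α, ω (star v * τ g x) ∂μ‖ ≤ qn ω v * qn ω x * (μ (Λ α)).toReal :=
      norm_setIntegral_le_of_norm_le_const h2.2 (fun g _ => hcs v x g)
    have h4 : qn ω v * qn ω x * (μ (Λ α)).toReal ≤ ε / 2 * (μ (Λ α)).toReal * qn ω v := by
      have : 0 ≤ (μ (Λ α)).toReal * qn ω v := by positivity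
      nlinarith
    have h5 := norm_add_le (∫ g in Λ α, ω (star v * τ g b) ∂μ - ∫ g in Λ α, ω (star v * τ g x) ∂μ)
      (∫ g in Λ α, ω (star v * τ g x) ∂μ)
    rw [sub_add_cancel] at h5
    linarith [h1 v]
  filter_upwards [main (b - ω b • 1) (by simp [hω_one]) ε hε, hΛfin] with α h1 h2 v
  have e : ∫ g in Λ α, ω (star v * τ g (b - ω b • 1)) ∂μ =
      ∫ g in Λ α, ω (star v * τ g b) ∂μ - (μ (Λ α)).toReal * (ω (star v) * ω b) := by
    have : ∀ g, ω (star v * τ g (b - ω b • 1)) = ω (star v * τ g b) - ω (star v) * ω b := by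
      intro g
      rw [map_sub, map_smul, map_one, mul_sub, map_sub, mul_smul_comm, mul_one, map_smul,
        smul_eq_mul, mul_comm (ω b)]
    simp only [this]
    rw [integral_sub (hint _ (hΛ α).1 (hΛ α).2 h2.2 v b) (integrableOn_const h2.2.ne),
      setIntegral_const]
    simp [Measure.real]
  rw [← e]
  exact h1 v

lemma erg_inv (ω : A →ₗ[ℂ] ℂ) (hω_pos : ∀ a : A, 0 ≤ ω (star a * a))
    {G : Type*} [CommGroup G] (τ : G → A ≃⋆ₐ[ℂ] A)
    (hτ_one : ∀ a : A, τ 1 a = a)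
    (hτ_mul : ∀ g h a, τ g (τ h a) = τ (g * h) a)
    (hω_inv : ∀ g a, ω (τ g a) = ω a) (a b : A) (g : G) :
    ω (a * τ g⁻¹ b) = starRingEnd ℂ (ω (star b * τ g (star a))) := by
  rw [← aux_herm ω hω_pos, ← hω_inv g (a * τ g⁻¹ b), map_mul, hτ_mul, mul_inv_cancel, hτ_one,
    star_mul, star_star, map_star, star_star]

end erg
/-- **Proposition 4.3(1).** Let `(A, ω, τ, K)` be an ergodic C*-dynamical system and
`(Λ1 α)`, `(Λ2 α)` Følner nets in `K` over the same directed set.  If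
`(g, h) ↦ ω (τ_h(a) τ_{gh}(b) τ_g(c))` is `(Σ|_K × Σ|_K)`-measurable for all `a b c`, then
`lim_α sup_{g₁ g₂ ∈ K} |M_{α,g₁,g₂}(ω (τ_g(a) τ_{gh}(b) τ_h(c))) − ω(a)ω(b)ω(c)| = 0`. -/
theorem prop_4_3_1
    -- a unital C*-algebra A
    {A : Type*} [NormedRing A] [StarRing A] [CStarRing A] [NormedAlgebra ℂ A]
    [CompleteSpace A] [StarModule ℂ A]
    -- a state ω on A
    (ω : A →ₗ[ℂ] ℂ) (hω_pos : ∀ a : A, 0 ≤ ω (star a * a)) (hω_one : ω 1 = 1)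
    -- a right invariant measure group (G, Σ, μ) with G abelian
    {G : Type*} [CommGroup G] [MeasurableSpace G] (μ : Measure G)
    (hTrans : ∀ (V : Set G) (g : G), MeasurableSet V → MeasurableSet (V * {g}))
    (hRight : ∀ (V : Set G) (g : G), MeasurableSet V → μ (V * {g}) = μ V)
    (hInvMeas : Measurable (fun g : G => g⁻¹))
    (hInvInv : ∀ V : Set G, MeasurableSet V → μ V⁻¹ = μ V)
    -- K is a Følner semigroup in G
    (K : Set G) (hKmeas : MeasurableSet K) (hKmul : ∀ g ∈ K, ∀ h ∈ K, g * h ∈ K)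
    -- the action τ, making (A, ω, τ, K) a C*-dynamical system
    (τ : G → A ≃⋆ₐ[ℂ] A)
    (hτ_one : ∀ a : A, τ 1 a = a)
    (hτ_mul : ∀ g h a, τ g (τ h a) = τ (g * h) a)
    (hω_inv : ∀ g a, ω (τ g a) = ω a)
    (hτ_meas : ∀ a b : A, Measurable fun g : K => ω (a * τ (g : G) b))
    -- the system is ergodic (w.r.t. some, equivalently every, Følner net in K)
    (hErg : ∃ F : FolnerNetIn μ K, F.ErgodicAlong ω τ)
    -- the measurability hypothesis: (g,h) ↦ ω(τ_h(a) τ_{gh}(b) τ_g(c)) on K × K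
    (hmeas2 : ∀ a b c : A, Measurable fun p : K × K =>
      ω (τ (p.2 : G) a * τ ((p.1 : G) * (p.2 : G)) b * τ (p.1 : G) c))
    -- Følner nets (Λ1 α), (Λ2 α) in K indexed by the same directed set
    {ι : Type*} [Preorder ι] [Nonempty ι] [IsDirected ι (· ≤ ·)]
    (Λ1 Λ2 : ι → Set G)
    (hΛ1 : ∀ α, MeasurableSet (Λ1 α) ∧ Λ1 α ⊆ K)
    (hΛ1fin : ∀ᶠ α in atTop, 0 < μ (Λ1 α) ∧ μ (Λ1 α) < ⊤)
    (hΛ1folner : ∀ g ∈ K, Tendsto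
      (fun α => (μ (symmDiff (Λ1 α) (Λ1 α * {g}))).toReal / (μ (Λ1 α)).toReal) atTop (𝓝 0))
    (hΛ2 : ∀ α, MeasurableSet (Λ2 α) ∧ Λ2 α ⊆ K)
    (hΛ2fin : ∀ᶠ α in atTop, 0 < μ (Λ2 α) ∧ μ (Λ2 α) < ⊤)
    (hΛ2folner : ∀ g ∈ K, Tendsto
      (fun α => (μ (symmDiff (Λ2 α) (Λ2 α * {g}))).toReal / (μ (Λ2 α)).toReal) atTop (𝓝 0)) :
    -- conclusion, with the `lim sup = 0` expressed in ε-form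
    ∀ a b c : A, ∀ ε > (0 : ℝ), ∀ᶠ α in atTop, ∀ g₁ ∈ K, ∀ g₂ ∈ K,
      ‖((μ (Λ1 α)).toReal * (μ (Λ2 α)).toReal)⁻¹ •
          (∫ h in Λ1 α * {g₁}, ∫ g in Λ2 α * {g₂}, ω (τ g a * τ (g * h) b * τ h c) ∂μ ∂μ)
        - ω a * ω b * ω c‖ ≤ ε := by
  intro a b c ε hε
  obtain ⟨F, hF⟩ := hErg
  obtain ⟨M, hM, hMb⟩ := qn_bound ω hω_pos a b
  have hconj := erg_inv ω hω_pos τ hτ_one hτ_mul hω_inv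
  have hinv_meas : ∀ a b : A, Measurable fun g : K => ω (a * τ (g : G)⁻¹ b) := by
    intro a b
    simp only [hconj]
    exact Complex.continuous_conj.measurable.comp (hτ_meas _ _)
  have hF' : F.ErgodicAlong ω (fun g => τ g⁻¹) := by
    intro a b
    have h := (Complex.continuous_conj.tendsto _).comp (hF (star b) (star a))
    have e1 : starRingEnd ℂ (ω (star b) * ω (star a)) = ω a * ω b := by
      rw [map_mul, ← aux_herm ω hω_pos, ← aux_herm ω hω_pos, star_star, star_star, mul_comm]
    rw [e1] at h
    refine h.congr fun α => ?_
    simp only [hconj, Function.comp]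
    rw [integral_conj]
    simp
  set q := qn ω (star a) with hq
  have hq0 : 0 ≤ q := qn_nonneg _ _
  have hc0 : 0 ≤ ‖ω c‖ := norm_nonneg _
  set ε1 := ε / (2 * (M + 1)) with hε1
  set ε2 := ε / (2 * ((‖ω c‖ + 1) * (q + 1))) with hε2
  have hε1p : 0 < ε1 := by positivity
  have hε2p : 0 < ε2 := by positivity
  have E1 := ume ω hω_pos hω_one μ hTrans hRight K hKmeas hKmul (fun g => τ g⁻¹)
    (fun g h a => by rw [hτ_mul, mul_inv]) (fun g a => hω_inv _ a) hinv_meas F hF' Λ2 hΛ2 hΛ2fin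
    hΛ2folner c ε1 hε1p
  have E2 := ume ω hω_pos hω_one μ hTrans hRight K hKmeas hKmul τ
    hτ_mul hω_inv hτ_meas F hF Λ1 hΛ1 hΛ1fin hΛ1folner b ε2 hε2p
  filter_upwards [E1, E2, hΛ1fin, hΛ2fin] with α H1 H2 hf1 hf2 g₁ hg₁ g₂ hg₂
  have hm1 : 0 < (μ (Λ1 α)).toReal := ENNReal.toReal_pos hf1.1.ne' hf1.2.ne
  have hm2 : 0 < (μ (Λ2 α)).toReal := ENNReal.toReal_pos hf2.1.ne' hf2.2.ne
  have hsub : ∀ S ⊆ K, ∀ k ∈ K, S * {k} ⊆ K := by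
    rintro S hS k hk _ ⟨g, hg, k', hk', rfl⟩
    rw [Set.mem_singleton_iff] at hk'
    subst hk'
    exact hKmul _ (hS hg) _ hk
  have hS1m := hTrans _ g₁ (hΛ1 α).1
  have hS2m := hTrans _ g₂ (hΛ2 α).1
  have hS1K := hsub _ (hΛ1 α).2 g₁ hg₁
  have hS2K := hsub _ (hΛ2 α).2 g₂ hg₂
  have hS1μ : μ (Λ1 α * {g₁}) = μ (Λ1 α) := hRight _ _ (hΛ1 α).1
  have hS2μ : μ (Λ2 α * {g₂}) = μ (Λ2 α) := hRight _ _ (hΛ2 α).1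
  have hS1f : μ (Λ1 α * {g₁}) < ⊤ := by rw [hS1μ]; exact hf1.2
  have hS2f : μ (Λ2 α * {g₂}) < ⊤ := by rw [hS2μ]; exact hf2.2
  set inner : G → ℂ := fun h => ∫ g in Λ2 α * {g₂}, ω (τ g a * τ (g * h) b * τ h c) ∂μ with hinner
  set m1 := (μ (Λ1 α)).toReal with hm1d
  set m2 := (μ (Λ2 α)).toReal with hm2d
  have hin : ∀ h, ‖inner h - m2 * (ω (a * τ h b) * ω c)‖ ≤ ε1 * m2 * M := by
    intro h
    have e : inner h = ∫ g in Λ2 α,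
        ω (star (star (τ (g₂ * h⁻¹) (a * τ h b))) * τ g⁻¹ c) ∂μ := by
      simp only [hinner]
      rw [trans_int μ hTrans hRight]
      congr 1
      ext g
      rw [star_star, ← hω_inv (g * h) (τ (g₂ * h⁻¹) (a * τ h b) * τ g⁻¹ c)]
      simp only [map_mul, hτ_mul]
      have e1 : g * h * (g₂ * h⁻¹) = g * g₂ := by
        rw [mul_comm g₂, mul_assoc g, mul_inv_cancel_left]
      have e2 : g * h * (g₂ * h⁻¹ * h) = g * g₂ * h := by
        rw [inv_mul_cancel_right, mul_right_comm]
      have e3 : g * h * g⁻¹ = h := by rw [mul_comm g, mul_inv_cancel_right]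
      rw [e1, e2, e3]
    have h1 := H1 (star (τ (g₂ * h⁻¹) (a * τ h b)))
    rw [← e] at h1
    rw [star_star, hω_inv, ← map_star, qn_map ω _ (hω_inv _)] at h1
    exact h1.trans (mul_le_mul_of_nonneg_left (hMb (τ h)) (by positivity))
  have hJ : ‖∫ h in Λ1 α * {g₁}, ω (a * τ h b) ∂μ - m1 * (ω a * ω b)‖ ≤ ε2 * m1 * q := by
    have e : ∫ h in Λ1 α * {g₁}, ω (a * τ h b) ∂μ =
        ∫ h in Λ1 α, ω (star (star (τ g₁⁻¹ a)) * τ h b) ∂μ := by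
      rw [trans_int μ hTrans hRight]
      congr 1
      ext g
      rw [star_star, ← hω_inv g₁ (τ g₁⁻¹ a * τ g b), map_mul (τ g₁), hτ_mul, hτ_mul, mul_inv_cancel,
        hτ_one, mul_comm g]
    have h1 := H2 (star (τ g₁⁻¹ a))
    rw [← e, star_star, hω_inv, ← map_star, qn_map ω _ (hω_inv _)] at h1
    exact h1
  have hcsb : ∀ h, ‖ω (a * τ h b)‖ ≤ q * qn ω b := fun h => by
    simpa [qn_map ω _ (hω_inv h)] using aux_cs ω hω_pos (star a) (τ h b)
  have hJint : IntegrableOn (fun h => ω (a * τ h b)) (Λ1 α * {g₁}) μ :=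
    int_on hKmeas hS1m hS1K hS1f (hτ_meas a b) hcsb
  have hJint2 : IntegrableOn (fun h => m2 * (ω (a * τ h b) * ω c)) (Λ1 α * {g₁}) μ :=
    (hJint.mul_const _).const_mul _
  have hinner_meas : AEStronglyMeasurable inner (μ.restrict (Λ1 α * {g₁})) := by
    have hfm : Measurable ((K ×ˢ K).indicator
        (fun p : G × G => ω (τ p.2 a * τ (p.1 * p.2) b * τ p.1 c))) := by
      apply meas_indicator (hKmeas.prod hKmeas)
      have hmap : Measurable fun x : (K ×ˢ K : Set (G × G)) =>
          ((⟨x.1.1, x.2.1⟩, ⟨x.1.2, x.2.2⟩) : K × K) :=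
        ((measurable_fst.comp measurable_subtype_coe).subtype_mk).prodMk
          ((measurable_snd.comp measurable_subtype_coe).subtype_mk)
      exact (hmeas2 a b c).comp hmap
    haveI : IsFiniteMeasure (μ.restrict (Λ2 α * {g₂})) := ⟨by simpa using hS2f⟩
    have hsm := hfm.stronglyMeasurable.integral_prod_right' (ν := μ.restrict (Λ2 α * {g₂}))
    refine hsm.aestronglyMeasurable.congr ?_
    filter_upwards [ae_restrict_mem hS1m] with h hh
    refine setIntegral_congr_fun hS2m fun g hg => ?_
    have : (h, g) ∈ K ×ˢ K := ⟨hS1K hh, hS2K hg⟩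
    simp only [Set.indicator_of_mem this]
    rw [mul_comm h g]
  have hdint : IntegrableOn (fun h => inner h - m2 * (ω (a * τ h b) * ω c)) (Λ1 α * {g₁}) μ := by
    haveI : IsFiniteMeasure (μ.restrict (Λ1 α * {g₁})) := ⟨by simpa using hS1f⟩
    exact Integrable.of_bound (hinner_meas.sub hJint2.aestronglyMeasurable) _
      (Eventually.of_forall hin)
  have hiint : IntegrableOn inner (Λ1 α * {g₁}) μ := by
    have := hdint.add hJint2
    refine this.congr (Eventually.of_forall fun h => ?_)
    simp
  have hbig : ‖∫ h in Λ1 α * {g₁}, inner h ∂μ -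
      m2 * ((∫ h in Λ1 α * {g₁}, ω (a * τ h b) ∂μ) * ω c)‖ ≤ ε1 * m2 * M * m1 := by
    rw [← integral_mul_const, ← integral_const_mul, ← integral_sub hiint hJint2]
    have := norm_setIntegral_le_of_norm_le_const hS1f (fun h _ => hin h)
    rwa [Measure.real, hS1μ] at this
  set I := ∫ h in Λ1 α * {g₁}, inner h ∂μ
  set J := ∫ h in Λ1 α * {g₁}, ω (a * τ h b) ∂μ
  have hm1c : (m1 : ℂ) ≠ 0 := by exact_mod_cast hm1.ne'
  have hm2c : (m2 : ℂ) ≠ 0 := by exact_mod_cast hm2.ne'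
  have hfin : (m1 * m2)⁻¹ • I - ω a * ω b * ω c =
      ((m1 * m2)⁻¹ : ℝ) * (I - m2 * (J * ω c)) + (m1⁻¹ : ℝ) * (ω c * (J - m1 * (ω a * ω b))) := by
    rw [Complex.real_smul]
    push_cast
    field_simp
    ring
  rw [hfin]
  refine (norm_add_le _ _).trans ?_
  rw [norm_mul, norm_mul, norm_mul, Complex.norm_of_nonneg (by positivity),
    Complex.norm_of_nonneg (by positivity)]
  have t1 : (m1 * m2)⁻¹ * ‖I - m2 * (J * ω c)‖ ≤ ε / 2 := by
    calc _ ≤ (m1 * m2)⁻¹ * (ε1 * m2 * M * m1) := by gcongr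
      _ = ε1 * M := by field_simp
      _ ≤ ε1 * (M + 1) := by gcongr; linarith
      _ = ε / 2 := by rw [hε1]; field_simp
  have t2 : m1⁻¹ * (‖ω c‖ * ‖J - m1 * (ω a * ω b)‖) ≤ ε / 2 := by
    calc _ ≤ m1⁻¹ * (‖ω c‖ * (ε2 * m1 * q)) := by gcongr
      _ = ε2 * (‖ω c‖ * q) := by field_simp
      _ ≤ ε2 * ((‖ω c‖ + 1) * (q + 1)) := by gcongr <;> linarith
      _ = ε / 2 := by rw [hε2]; field_simp
  linarith
end

section
/- Let (A,ω,τ,K) be an ergodic C*-dynamical system which is asymptotically abelian with respect to a Følner net (Λ_{1α}) in K, with ω tracial, and let (Λ_{2α}) be a Følner net in K over the same directed set. If (g,h) ↦ ω(τ_h(a₁) τ_g(a₂) τ_{gh}(a₃) τ_g(a₄) τ_h(a₅)) is (Σ|_K × Σ|_K)-measurable for all a₁,...,a₅ ∈ A, then lim_α M_{α,e,e}( ω(τ_h(a₁) τ_g(a₂) τ_{gh}(a₃) τ_g(a₄) τ_h(a₅)) ) = ω(a₅a₁) ω(a₃) ω(a₂a₄) for all a₁, a₂, a₃, a₄, a₅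 ∈ A. -/
open Filter Topology
open scoped Pointwise ComplexOrder

open MeasureTheory

set_option linter.unusedSectionVars false


namespace P432

section meas
variable {G : Type*} [CommGroup G] [MeasurableSpace G]

structure Fol {ι : Type*} (μ : Measure G) (K : Set G) (l : Filter ι) (Λ : ι → Set G) : Prop where
  meas : ∀ α, MeasurableSet (Λ α) ∧ Λ α ⊆ K
  fin : ∀ᶠ α in l, 0 < μ (Λ α) ∧ μ (Λ α) < ⊤
  folner : ∀ g ∈ K, Tendsto (fun α => (μ (symmDiff (Λ α) (Λ α * {g}))).toReal /
    (μ (Λ α)).toReal) l (𝓝 0)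

structure OK (μ : Measure G) (K Λ : Set G) : Prop where
  hK : MeasurableSet K
  meas : MeasurableSet Λ
  sub : Λ ⊆ K
  pos : 0 < (μ Λ).toReal
  fin : μ Λ < ⊤

structure BM {E : Type*} [NormedAddCommGroup E] [MeasurableSpace E] (K : Set G) (f : G → E) :
    Prop where
  meas : Measurable fun g : K => f g
  bdd : ∃ C, ∀ g, ‖f g‖ ≤ C

noncomputable def avg (μ : Measure G) (Λ : Set G) (f : G → ℂ) : ℂ :=
  (μ Λ).toReal⁻¹ • ∫ g in Λ, f g ∂μ

theorem Fol.ok {ι : Type*} {μ : Measure G} {K : Set G} {l : Filter ι} {Λ : ι → Set G}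
    (h : Fol μ K l Λ) (hK : MeasurableSet K) : ∀ᶠ α in l, OK μ K (Λ α) := by
  filter_upwards [h.fin] with α hα
  exact ⟨hK, (h.meas α).1, (h.meas α).2, ENNReal.toReal_pos hα.1.ne' hα.2.ne, hα.2⟩

theorem aesm {E : Type*} [NormedAddCommGroup E] [MeasurableSpace E] [BorelSpace E]
    [SecondCountableTopology E] {μ : Measure G} {K Λ : Set G} (hK : MeasurableSet K)
    (hs : Λ ⊆ K) {f : G → E} (hf : Measurable fun g : K => f g) :
    AEStronglyMeasurable f (μ.restrict Λ) := by
  have : AEMeasurable f (μ.restrict K) :=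
    (aemeasurable_restrict_iff_comap_subtype hK).2 hf.aemeasurable
  exact (this.mono_measure (Measure.restrict_mono hs le_rfl)).aestronglyMeasurable

theorem BM.integrable {E : Type*} [NormedAddCommGroup E] [MeasurableSpace E] [BorelSpace E]
    [SecondCountableTopology E] {μ : Measure G} {K Λ : Set G} {f : G → E} (hf : BM K f)
    (h : OK μ K Λ) : Integrable f (μ.restrict Λ) := by
  obtain ⟨C, hC⟩ := hf.bdd
  haveI : IsFiniteMeasure (μ.restrict Λ) := ⟨by simpa using h.fin⟩
  exact Integrable.of_bound (aesm h.hK h.sub hf.meas) C (ae_of_all _ hC)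

theorem BM.add {K : Set G} {f g : G → ℂ} (hf : BM K f) (hg : BM K g) :
    BM K (fun x => f x + g x) := by
  obtain ⟨C, hC⟩ := hf.bdd
  obtain ⟨D, hD⟩ := hg.bdd
  exact ⟨hf.meas.add hg.meas, C + D, fun x => norm_add_le_of_le (hC x) (hD x)⟩

theorem BM.mul {K : Set G} {f g : G → ℂ} (hf : BM K f) (hg : BM K g) :
    BM K (fun x => f x * g x) := by
  obtain ⟨C, hC⟩ := hf.bdd
  obtain ⟨D, hD⟩ := hg.bdd
  exact ⟨hf.meas.mul hg.meas, C * D, fun x => norm_mul_le_of_le (hC x) (hD x)⟩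

theorem BM.const {K : Set G} (c : ℂ) : BM K (fun _ : G => c) :=
  ⟨measurable_const, ‖c‖, fun _ => le_rfl⟩

theorem BM.sum {K : Set G} {J : Type*} (s : Finset J) {f : J → G → ℂ}
    (hf : ∀ i ∈ s, BM K (f i)) :
    BM K (fun x => ∑ i ∈ s, f i x) := by
  classical
  induction s using Finset.induction_on with
  | empty => simpa using BM.const (K := K) 0
  | insert i s hi ih =>
    simp only [Finset.sum_insert hi]
    exact (hf i (by simp)).add (ih fun j hj => hf j (by simp [hj]))

theorem avg_add {μ : Measure G} {K Λ : Set G} (h : OK μ K Λ) {f g : G → ℂ} (hf : BM K f)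
    (hg : BM K g) : avg μ Λ (fun x => f x + g x) = avg μ Λ f + avg μ Λ g := by
  unfold avg
  rw [integral_add (hf.integrable h) (hg.integrable h), smul_add]

theorem avg_sub {μ : Measure G} {K Λ : Set G} (h : OK μ K Λ) {f g : G → ℂ} (hf : BM K f)
    (hg : BM K g) : avg μ Λ (fun x => f x - g x) = avg μ Λ f - avg μ Λ g := by
  unfold avg
  rw [integral_sub (hf.integrable h) (hg.integrable h), smul_sub]

theorem avg_mul_const {μ : Measure G} {Λ : Set G} (f : G → ℂ) (c : ℂ) :
    avg μ Λ (fun x => c * f x) = c * avg μ Λ f := by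
  unfold avg
  rw [integral_const_mul, mul_smul_comm]

theorem avg_const {μ : Measure G} {K Λ : Set G} (h : OK μ K Λ) (c : ℂ) :
    avg μ Λ (fun _ => c) = c := by
  have := h.pos.ne'
  unfold avg
  rw [integral_const]
  simp only [Measure.real, smul_smul, Measure.restrict_apply_univ]
  rw [inv_mul_cancel₀ this, one_smul]

theorem avg_conj {μ : Measure G} {Λ : Set G} (f : G → ℂ) :
    avg μ Λ (fun x => (starRingEnd ℂ) (f x)) = (starRingEnd ℂ) (avg μ Λ f) := by
  unfold avg
  rw [integral_conj]
  simp

theorem avg_sum {μ : Measure G} {K Λ : Set G} (h : OK μ K Λ) {J : Type*} (s : Finset J)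
    {f : J → G → ℂ} (hf : ∀ i ∈ s, BM K (f i)) :
    avg μ Λ (fun x => ∑ i ∈ s, f i x) = ∑ i ∈ s, avg μ Λ (f i) := by
  unfold avg
  rw [integral_finsetSum _ (fun i hi => (hf i hi).integrable h), Finset.smul_sum]

theorem norm_avg_le {μ : Measure G} {K Λ : Set G} (h : OK μ K Λ) {f : G → ℂ} {C : ℝ}
    (hf : ∀ g ∈ Λ, ‖f g‖ ≤ C) : ‖avg μ Λ f‖ ≤ C := by
  unfold avg
  have := norm_setIntegral_le_of_norm_le_const (μ := μ) h.fin hf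
  rw [norm_smul, norm_inv, Real.norm_of_nonneg h.pos.le]
  calc _ ≤ (μ Λ).toReal⁻¹ * (C * (μ Λ).toReal) := by
        exact mul_le_mul_of_nonneg_left this (inv_nonneg.2 h.pos.le)
    _ = C := by have := h.pos.ne'; field_simp

theorem norm_avg_le_re {μ : Measure G} {K Λ : Set G} (h : OK μ K Λ) {f q : G → ℂ} (hq : BM K q)
    (hf : ∀ g ∈ Λ, ‖f g‖ ≤ (q g).re) : ‖avg μ Λ f‖ ≤ (avg μ Λ q).re := by
  unfold avg
  have h1 : ‖∫ g in Λ, f g ∂μ‖ ≤ ∫ g in Λ, (q g).re ∂μ := by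
    apply norm_integral_le_of_norm_le (hq.integrable h).re
    exact (ae_restrict_iff' h.meas).2 (ae_of_all _ hf)
  have h2 : ∫ g in Λ, (q g).re ∂μ = (∫ g in Λ, q g ∂μ).re := integral_re (hq.integrable h)
  rw [norm_smul, norm_inv, Real.norm_of_nonneg h.pos.le, Complex.smul_re, smul_eq_mul, ← h2]
  exact mul_le_mul_of_nonneg_left h1 (inv_nonneg.2 h.pos.le)

theorem avg_shift {μ : Measure G} {K Λ : Set G} 
    (hTrans : ∀ (V : Set G) (g : G), MeasurableSet V → MeasurableSet (V * {g}))
    (hRight : ∀ (V : Set G) (g : G), MeasurableSet V → μ (V * {g}) = μ V)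
    (hKmul : ∀ g ∈ K, ∀ h ∈ K, g * h ∈ K)
    (h : OK μ K Λ) {f : G → ℂ} (hf : Measurable fun g : K => f g) {C : ℝ}
    (hC : ∀ g, ‖f g‖ ≤ C) {k : G} (hk : k ∈ K) :
    ‖avg μ Λ f - avg μ Λ (fun g => f (g * k))‖ ≤
      C * ((μ (symmDiff Λ (Λ * {k}))).toReal / (μ Λ).toReal) := by
  have hpre : ∀ (V : Set G) (g : G), (fun x => x * g) ⁻¹' V = V * {g⁻¹} := by
    intro V g; ext x; simp
  have hm : ∀ g : G, Measurable (fun x : G => x * g) := by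
    intro g V hV
    rw [hpre]; exact hTrans _ _ hV
  let e : G ≃ᵐ G := ⟨Equiv.mulRight k, hm k, hm k⁻¹⟩
  have he : MeasurePreserving e μ μ := by
    refine ⟨e.measurable, ?_⟩
    ext V hV
    rw [e.map_apply]
    change μ ((fun x => x * k) ⁻¹' V) = _
    rw [hpre, hRight _ _ hV]
  have hL : e ⁻¹' (Λ * {k}) = Λ := by
    change (fun x => x * k) ⁻¹' _ = _
    rw [hpre, mul_assoc]; simp
  have hLm := hTrans Λ k h.meas
  have hLs : Λ * {k} ⊆ K := by
    rintro x ⟨y, hy, z, hz, rfl⟩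
    rw [Set.mem_singleton_iff.1 hz]
    exact hKmul _ (h.sub hy) _ hk
  have h1 : ∫ g in Λ, f (g * k) ∂μ = ∫ g in Λ * {k}, f g ∂μ := by
    have := he.setIntegral_preimage_emb e.measurableEmbedding f (Λ * {k})
    rw [hL] at this
    exact this
  have hbm : BM K f := ⟨hf, C, hC⟩
  have hok2 : OK μ K (Λ * {k}) :=
    ⟨h.hK, hLm, hLs, by rw [hRight _ _ h.meas]; exact h.pos, by rw [hRight _ _ h.meas]; exact h.fin⟩
  have i1 : IntegrableOn f Λ μ := hbm.integrable h
  have i2 : IntegrableOn f (Λ * {k}) μ := hbm.integrable hok2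
  have hC0 : 0 ≤ C := (norm_nonneg _).trans (hC 1)
  have key : ‖(∫ g in Λ, f g ∂μ) - ∫ g in Λ * {k}, f g ∂μ‖ ≤
      C * (μ (symmDiff Λ (Λ * {k}))).toReal := by
    have e1 := integral_inter_add_sdiff (f := f) (s := Λ) (t := Λ * {k}) (μ := μ) hLm i1
    have e2 := integral_inter_add_sdiff (f := f) (s := Λ * {k}) (t := Λ) (μ := μ) h.meas i2
    rw [← e1, ← e2, Set.inter_comm (Λ * {k} : Set G) Λ, add_sub_add_left_eq_sub]
    have f1 : μ (Λ \ (Λ * {k})) < ⊤ := (measure_mono Set.diff_subset).trans_lt h.fin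
    have f2 : μ ((Λ * {k}) \ Λ) < ⊤ := (measure_mono Set.diff_subset).trans_lt hok2.fin
    have n1 := norm_setIntegral_le_of_norm_le_const (μ := μ) (f := f) (C := C) f1 (fun x _ => hC x)
    have n2 := norm_setIntegral_le_of_norm_le_const (μ := μ) (f := f) (C := C) f2 (fun x _ => hC x)
    have : (μ (symmDiff Λ (Λ * {k}))).toReal =
        (μ (Λ \ (Λ * {k}))).toReal + (μ ((Λ * {k}) \ Λ)).toReal := by
      rw [Set.symmDiff_def, measure_union disjoint_sdiff_sdiff (hLm.diff h.meas),
        ENNReal.toReal_add f1.ne f2.ne]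
    rw [this, mul_add]
    exact (norm_sub_le _ _).trans (add_le_add n1 n2)
  unfold avg
  rw [h1, ← smul_sub, norm_smul, norm_inv, Real.norm_of_nonneg h.pos.le]
  calc _ ≤ (μ Λ).toReal⁻¹ * (C * (μ (symmDiff Λ (Λ * {k}))).toReal) :=
        mul_le_mul_of_nonneg_left key (inv_nonneg.2 h.pos.le)
    _ = _ := by rw [div_eq_inv_mul]; ring

end meas


section rep
open scoped InnerProductSpace

universe u

structure Rep {A : Type*} [NormedRing A] [StarRing A] [NormedAlgebra ℂ A]
    {G : Type*} [CommGroup G] (ω : A →ₗ[ℂ] ℂ) (τ : G → A ≃⋆ₐ[ℂ] A)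
    (H : Type*) [NormedAddCommGroup H] [InnerProductSpace ℂ H] where
  U : G → H →L[ℂ] H
  π : A → H →L[ℂ] H
  j : A →ₗ[ℂ] H
  dense : DenseRange j
  j_inner : ∀ a b, ⟪j a, j b⟫_ℂ = ω (star a * b)
  U_j : ∀ g a, U g (j a) = j (τ g a)
  π_j : ∀ a b, π a (j b) = j (a * b)
  norm_π : ∀ a x, ‖π a x‖ ≤ ‖a‖ * ‖x‖

theorem exists_rep {A : Type u} [NormedRing A] [StarRing A] [CStarRing A] [NormedAlgebra ℂ A]
    [CompleteSpace A] [StarModule ℂ A]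
    (ω : A →ₗ[ℂ] ℂ) (hω_pos : ∀ a : A, 0 ≤ ω (star a * a))
    {G : Type*} [CommGroup G] (τ : G → A ≃⋆ₐ[ℂ] A) (hω_inv : ∀ g a, ω (τ g a) = ω a) :
    ∃ (H : Type u) (_ : NormedAddCommGroup H) (_ : InnerProductSpace ℂ H) (_ : CompleteSpace H),
      Nonempty (Rep ω τ H) := by
  letI : CStarAlgebra A := { }
  letI : PartialOrder A := CStarAlgebra.spectralOrder A
  haveI : StarOrderedRing A := CStarAlgebra.spectralOrderedRing A
  let f : A →ₚ[ℂ] ℂ := PositiveLinearMap.mk₀ ω (by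
    intro x hx
    obtain ⟨y, rfl⟩ := CStarAlgebra.nonneg_iff_eq_star_mul_self.1 hx
    exact hω_pos y)
  have hf : ∀ a, f a = ω a := fun a => rfl
  let U0 : G → f.PreGNS →L[ℂ] f.PreGNS := fun g =>
    (f.toPreGNS.toLinearMap ∘ₗ (τ g).toAlgEquiv.toLinearMap ∘ₗ
      f.ofPreGNS.toLinearMap).mkContinuous 1 (by
        intro x
        have : ‖f.toPreGNS (τ g (f.ofPreGNS x))‖ = ‖x‖ := by
          rw [PositiveLinearMap.preGNS_norm_def, PositiveLinearMap.preGNS_norm_def]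
          simp only [PositiveLinearMap.ofPreGNS_toPreGNS]
          rw [← map_star, ← map_mul, hf, hω_inv, hf]
        rw [one_mul]
        exact this.le)
  refine ⟨f.GNS, inferInstance, inferInstance, inferInstance, ⟨{
    U := fun g => (U0 g).completion
    π := fun a => (f.leftMulMapPreGNS a).completion
    j := (UniformSpace.Completion.toComplL (𝕜 := ℂ) (E := f.PreGNS)).toLinearMap ∘ₗ
      f.toPreGNS.toLinearMap
    dense := ?_
    j_inner := ?_
    U_j := ?_
    π_j := ?_
    norm_π := ?_ }⟩⟩
  · exact UniformSpace.Completion.denseRange_coe.comp f.toPreGNS.surjective.denseRange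
      (UniformSpace.Completion.continuous_coe _)
  · intro a b
    simp [PositiveLinearMap.preGNS_inner_def, hf]
  · intro g a
    simp [U0]
  · intro a b
    simp
  · intro a x
    induction x using UniformSpace.Completion.induction_on with
    | hp => apply isClosed_le <;> fun_prop
    | ih x =>
      simp only [ContinuousLinearMap.completion_apply_coe, UniformSpace.Completion.norm_coe]
      exact (f.leftMulMapPreGNS a).le_of_opNorm_le
        (LinearMap.mkContinuous_norm_le _ (norm_nonneg _) _) x

end rep


section core
open scoped InnerProductSpace

structure Sys {A : Type*} [NormedRing A] [StarRing A] [NormedAlgebra ℂ A]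
    {G : Type*} [CommGroup G] [MeasurableSpace G] (ω : A →ₗ[ℂ] ℂ) (τ : G → A ≃⋆ₐ[ℂ] A)
    (μ : Measure G) (K : Set G) : Prop where
  hω_one : ω 1 = 1
  tracial : ∀ a b : A, ω (a * b) = ω (b * a)
  hTrans : ∀ (V : Set G) (g : G), MeasurableSet V → MeasurableSet (V * {g})
  hRight : ∀ (V : Set G) (g : G), MeasurableSet V → μ (V * {g}) = μ V
  hK : MeasurableSet K
  hKmul : ∀ g ∈ K, ∀ h ∈ K, g * h ∈ K
  hτ_one : ∀ a : A, τ 1 a = a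
  hτ_mul : ∀ g h a, τ g (τ h a) = τ (g * h) a
  hω_inv : ∀ g a, ω (τ g a) = ω a
  hτ_meas : ∀ a b : A, Measurable fun g : K => ω (a * τ (g : G) b)

variable {A : Type*} [NormedRing A] [StarRing A] [CStarRing A] [NormedAlgebra ℂ A]
    [CompleteSpace A] [StarModule ℂ A]
    {G : Type*} [CommGroup G] [MeasurableSpace G] {ω : A →ₗ[ℂ] ℂ} {τ : G → A ≃⋆ₐ[ℂ] A}
    {μ : Measure G} {K : Set G}
    {H : Type*} [NormedAddCommGroup H] [InnerProductSpace ℂ H] 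

theorem norm_tau (τ : G → A ≃⋆ₐ[ℂ] A) (g : G) (a : A) : ‖τ g a‖ = ‖a‖ := by
  letI : CStarAlgebra A := { }
  exact NonUnitalStarAlgHom.norm_map (τ g) (τ g).injective a

namespace Rep
variable (R : Rep ω τ H)

theorem seq (x : H) : ∃ a : ℕ → A, Tendsto (fun n => R.j (a n)) atTop (𝓝 x) := by
  obtain ⟨y, hy, hx⟩ := mem_closure_iff_seq_limit.1 (R.dense x)
  choose a ha using hy
  exact ⟨a, by simpa only [ha] using hx⟩

include R in
theorem eq_of_dense {X : Type*} [TopologicalSpace X] [T2Space X] {f g : H → X}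
    (hf : Continuous f) (hg : Continuous g) (h : ∀ a, f (R.j a) = g (R.j a)) (x : H) :
    f x = g x :=
  congrFun (DenseRange.equalizer R.dense hf hg (funext h)) x

noncomputable def Om : H := R.j 1

theorem om_inner (a : A) : ⟪R.Om, R.j a⟫_ℂ = ω a := by
  simp [Om, R.j_inner]

theorem inner_om (a : A) : ⟪R.j a, R.Om⟫_ℂ = ω (star a) := by
  simp [Om, R.j_inner]

variable (S : Sys ω τ μ K)
include S

theorem U_one (x : H) : R.U 1 x = x := by
  apply R.eq_of_dense (R.U 1).continuous continuous_id
  intro a; simp [R.U_j, S.hτ_one]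

theorem U_mul (g h : G) (x : H) : R.U g (R.U h x) = R.U (g * h) x := by
  apply R.eq_of_dense (f := fun x => R.U g (R.U h x)) (by fun_prop) (R.U (g * h)).continuous
  intro a; simp [R.U_j, S.hτ_mul]

theorem U_comm (g h : G) (x : H) : R.U g (R.U h x) = R.U h (R.U g x) := by
  rw [R.U_mul S, R.U_mul S, mul_comm]

theorem U_inv (g : G) (x : H) : R.U g (R.U g⁻¹ x) = x := by
  rw [R.U_mul S, mul_inv_cancel, R.U_one S]

theorem U_inv' (g : G) (x : H) : R.U g⁻¹ (R.U g x) = x := by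
  rw [R.U_mul S, inv_mul_cancel, R.U_one S]

theorem U_inner (g : G) (x y : H) : ⟪R.U g x, R.U g y⟫_ℂ = ⟪x, y⟫_ℂ := by
  apply R.eq_of_dense (f := fun x => ⟪R.U g x, R.U g y⟫_ℂ) (g := fun x => ⟪x, y⟫_ℂ)
    (by fun_prop) (by fun_prop)
  intro a
  apply R.eq_of_dense (f := fun y => ⟪R.U g (R.j a), R.U g y⟫_ℂ) (g := fun y => ⟪R.j a, y⟫_ℂ)
    (by fun_prop) (by fun_prop)
  intro b
  simp only [R.U_j, R.j_inner]
  rw [← map_star, ← map_mul, S.hω_inv]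

theorem U_adj (g : G) (x y : H) : ⟪x, R.U g y⟫_ℂ = ⟪R.U g⁻¹ x, y⟫_ℂ := by
  rw [← R.U_inner S g⁻¹, R.U_inv' S]

theorem U_norm (g : G) (x : H) : ‖R.U g x‖ = ‖x‖ := by
  rw [norm_eq_sqrt_re_inner (𝕜 := ℂ), R.U_inner S, ← norm_eq_sqrt_re_inner]

theorem U_om (g : G) : R.U g R.Om = R.Om := by
  simp [Om, R.U_j]

theorem norm_om : ‖R.Om‖ = 1 := by
  rw [norm_eq_sqrt_re_inner (𝕜 := ℂ), Om, R.j_inner]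
  simp [S.hω_one]

theorem om_om : ⟪R.Om, R.Om⟫_ℂ = 1 := by
  rw [Om, R.j_inner]
  simp [S.hω_one]

theorem U_π (g : G) (a : A) (x : H) : R.U g (R.π a x) = R.π (τ g a) (R.U g x) := by
  apply R.eq_of_dense (f := fun x => R.U g (R.π a x)) (g := fun x => R.π (τ g a) (R.U g x))
    (by fun_prop) (by fun_prop)
  intro b; simp [R.U_j, R.π_j]

omit S in
theorem π_mul (a b : A) (x : H) : R.π a (R.π b x) = R.π (a * b) x := by
  apply R.eq_of_dense (f := fun x => R.π a (R.π b x)) (g := fun x => R.π (a * b) x)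
    (by fun_prop) (by fun_prop)
  intro c; simp [R.π_j, mul_assoc]

omit S in
theorem π_adj (a : A) (x y : H) : ⟪R.π a x, y⟫_ℂ = ⟪x, R.π (star a) y⟫_ℂ := by
  apply R.eq_of_dense (f := fun x => ⟪R.π a x, y⟫_ℂ) (g := fun x => ⟪x, R.π (star a) y⟫_ℂ)
    (by fun_prop) (by fun_prop)
  intro b
  apply R.eq_of_dense (f := fun y => ⟪R.π a (R.j b), y⟫_ℂ)
    (g := fun y => ⟪R.j b, R.π (star a) y⟫_ℂ) (by fun_prop) (by fun_prop)
  intro c; simp [R.π_j, R.j_inner, mul_assoc]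

theorem bm_U (y x : H) : BM K (fun g => ⟪y, R.U g x⟫_ℂ) := by
  refine ⟨?_, ‖y‖ * ‖x‖, fun g => (norm_inner_le_norm _ _).trans_eq (by rw [R.U_norm S])⟩
  obtain ⟨a, ha⟩ := R.seq y
  obtain ⟨b, hb⟩ := R.seq x
  refine measurable_of_tendsto_metrizable
    (f := fun n (g : K) => ⟪R.j (a n), R.U g (R.j (b n))⟫_ℂ) ?_ ?_
  · intro n
    simp only [R.U_j, R.j_inner]
    exact S.hτ_meas _ _
  · rw [tendsto_pi_nhds]
    intro g
    exact ha.inner (((R.U g).continuous.tendsto _).comp hb)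

theorem bm_π (u v : H) (d : A) : BM K (fun h => ⟪u, R.π (τ h d) v⟫_ℂ) := by
  refine ⟨?_, ‖u‖ * (‖d‖ * ‖v‖), fun g => (norm_inner_le_norm _ _).trans ?_⟩
  · obtain ⟨a, ha⟩ := R.seq u
    obtain ⟨b, hb⟩ := R.seq v
    refine measurable_of_tendsto_metrizable
      (f := fun n (g : K) => ⟪R.j (a n), R.π (τ g d) (R.j (b n))⟫_ℂ) ?_ ?_
    · intro n
      simp only [R.π_j, R.j_inner]
      have : ∀ g : K, ω (star (a n) * (τ g d * b n)) = ω ((b n * star (a n)) * τ g d) := by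
        intro g
        rw [← mul_assoc, S.tracial, mul_assoc]
      simp only [this]
      exact S.hτ_meas _ _
    · rw [tendsto_pi_nhds]
      intro g
      exact ha.inner (((R.π (τ g d)).continuous.tendsto _).comp hb)
  · refine mul_le_mul_of_nonneg_left ?_ (norm_nonneg _)
    exact (R.norm_π _ _).trans_eq (by rw [norm_tau])

end Rep

inductive Good (R : Rep ω τ H) (K : Set G) : (H →L[ℂ] H) → Prop
  | one : Good R K 1
  | U (k : G) (hk : k ∈ K) : Good R K (R.U k)
  | mul (V W : H →L[ℂ] H) (hV : Good R K V) (hW : Good R K W) : Good R K (V * W)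
  | avg (n : ℕ) (hn : 0 < n) (V : ℕ → H →L[ℂ] H) (hV : ∀ i, Good R K (V i)) :
      Good R K ((n : ℂ)⁻¹ • ∑ i ∈ Finset.range n, V i)

section good
variable {R : Rep ω τ H} (S : Sys ω τ μ K) {V : H →L[ℂ] H}
include S

theorem Good.norm (h : Good R K V) : ∀ x, ‖V x‖ ≤ ‖x‖ := by
  induction h with
  | one => intro x; simp
  | U k hk => intro x; exact (R.U_norm S k x).le
  | mul V W hV hW h1 h2 => intro x; exact (h1 _).trans (h2 _)
  | avg n hn V hV h =>
    intro x
    have hn' : (n : ℝ) ≠ 0 := by positivity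
    simp only [smul_apply, sum_apply, norm_smul, norm_inv,
      Complex.norm_natCast]
    calc _ ≤ (n : ℝ)⁻¹ * ∑ i ∈ Finset.range n, ‖x‖ := by
          gcongr
          exact norm_sum_le_of_le _ fun i _ => h i x
      _ = ‖x‖ := by simp; field_simp

theorem Good.comm (h : Good R K V) (g : G) : ∀ x, V (R.U g x) = R.U g (V x) := by
  induction h with
  | one => intro x; simp
  | U k hk => intro x; exact R.U_comm S _ _ _
  | mul V W hV hW h1 h2 => intro x; simp [h1, h2]
  | avg n hn V hV h =>
    intro x
    simp [h]

theorem Good.om (h : Good R K V) : V R.Om = R.Om := by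
  induction h with
  | one => simp
  | U k hk => exact R.U_om S _
  | mul V W hV hW h1 h2 => simp [h1, h2]
  | avg n hn V hV h =>
    have hn' : (n : ℂ) ≠ 0 := by simpa using hn.ne'
    simp [h, ← Nat.cast_smul_eq_nsmul ℂ, smul_smul, hn']

theorem Good.inner (h : Good R K V) : ∀ x, ⟪R.Om, V x⟫_ℂ = ⟪R.Om, x⟫_ℂ := by
  induction h with
  | one => simp
  | U k hk => intro x; rw [R.U_adj S, R.U_om S]
  | mul V W hV hW h1 h2 => simp [h1, h2]
  | avg n hn V hV h =>
    intro x
    have hn' : (n : ℂ) ≠ 0 := by simpa using hn.ne'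
    simp [h, hn']

theorem Good.asym (h : Good R K V) {ι : Type*} {l : Filter ι} {Λ : ι → Set G}
    (F : Fol μ K l Λ) : ∀ ε > 0, ∀ᶠ α in l, ∀ x y : H,
      ‖P432.avg μ (Λ α) (fun g => ⟪y, R.U g x⟫_ℂ) - P432.avg μ (Λ α) (fun g => ⟪y, R.U g (V x)⟫_ℂ)‖
        ≤ ε * (‖y‖ * ‖x‖) := by
  induction h with
  | one => intro ε hε; filter_upwards with α x y; simp; positivity
  | U k hk =>
    intro ε hε
    filter_upwards [F.ok S.hK, (F.folner k hk).eventually_le_const hε] with α hα h1 x y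
    have := avg_shift S.hTrans S.hRight S.hKmul hα (f := fun g => ⟪y, R.U g x⟫_ℂ)
      (R.bm_U S y x).meas (C := ‖y‖ * ‖x‖)
      (fun g => (norm_inner_le_norm _ _).trans_eq (by rw [R.U_norm S])) hk
    simp only [R.U_mul S]
    refine this.trans ?_
    rw [mul_comm]
    gcongr
  | mul V W hV hW h1 h2 =>
    intro ε hε
    filter_upwards [h1 (ε / 2) (by positivity), h2 (ε / 2) (by positivity)] with α a1 a2 x y
    have b1 := a1 (W x) y
    have b2 := a2 x y
    have b3 : ε / 2 * (‖y‖ * ‖W x‖) ≤ ε / 2 * (‖y‖ * ‖x‖) := by gcongr; exact hW.norm S x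
    calc _ ≤ _ := norm_sub_le_norm_sub_add_norm_sub _
            (P432.avg μ (Λ α) (fun g => ⟪y, R.U g (W x)⟫_ℂ)) _
      _ ≤ ε / 2 * (‖y‖ * ‖x‖) + ε / 2 * (‖y‖ * ‖x‖) := add_le_add b2 (b1.trans b3)
      _ = _ := by ring
  | avg n hn V hV h =>
    intro ε hε
    have hall : ∀ᶠ α in l, ∀ i ∈ Finset.range n, ∀ x y : H,
      ‖P432.avg μ (Λ α) (fun g => ⟪y, R.U g x⟫_ℂ) -
        P432.avg μ (Λ α) (fun g => ⟪y, R.U g (V i x)⟫_ℂ)‖ ≤ ε * (‖y‖ * ‖x‖) :=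
      (Filter.eventually_all_finset _).2 fun i _ => h i ε hε
    filter_upwards [F.ok S.hK, hall] with α hα ha x y
    have hn' : (n : ℂ) ≠ 0 := by simpa using hn.ne'
    have hn'' : (n : ℝ) ≠ 0 := by positivity
    have e : P432.avg μ (Λ α) (fun g => ⟪y, R.U g (((n : ℂ)⁻¹ • ∑ i ∈ Finset.range n, V i) x)⟫_ℂ)
        = (n : ℂ)⁻¹ * ∑ i ∈ Finset.range n, P432.avg μ (Λ α) (fun g => ⟪y, R.U g (V i x)⟫_ℂ) := by
      rw [← avg_sum hα _ (fun i _ => R.bm_U S y (V i x)), ← avg_mul_const]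
      congr 1
      ext g
      simp
    have e2 : P432.avg μ (Λ α) (fun g => ⟪y, R.U g x⟫_ℂ) =
        (n : ℂ)⁻¹ * ∑ i ∈ Finset.range n, P432.avg μ (Λ α) (fun g => ⟪y, R.U g x⟫_ℂ) := by
      simp [hn']
    rw [e, e2, ← mul_sub, ← Finset.sum_sub_distrib, norm_mul, norm_inv, Complex.norm_natCast]
    calc _ ≤ (n : ℝ)⁻¹ * ∑ i ∈ Finset.range n, ε * (‖y‖ * ‖x‖) := by
          gcongr
          exact norm_sum_le_of_le _ fun i hi => ha i hi x y
      _ = _ := by simp; field_simp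

end good


section erg
variable [CompleteSpace H] {R : Rep ω τ H} (S : Sys ω τ μ K)
include S

theorem inv_vec (F : FolnerNetIn μ K) (hF : F.ErgodicAlong ω τ) (y : H)
    (hy : ∀ k ∈ K, R.U k y = y) : y = ⟪R.Om, y⟫_ℂ • R.Om := by
  refine ext_inner_left ℂ fun x => ?_
  refine R.eq_of_dense (f := fun x => ⟪x, y⟫_ℂ) (g := fun x => ⟪x, ⟪R.Om, y⟫_ℂ • R.Om⟫_ℂ)
    (by fun_prop) (by fun_prop) (fun a => ?_) x
  obtain ⟨b, hb⟩ := R.seq y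
  have hFol : Fol μ K atTop F.Lam := ⟨F.meas, F.fin, F.folner⟩
  have key : ∀ n, ‖⟪R.j a, y⟫_ℂ - ω (star a) * ω (b n)‖ ≤ ‖R.j a‖ * ‖y - R.j (b n)‖ := by
    intro n
    have ht := hF (star a) (b n)
    refine le_of_tendsto (ht.const_sub ⟪R.j a, y⟫_ℂ).norm ?_
    filter_upwards [hFol.ok S.hK] with α hα
    change ‖_ - avg μ (F.Lam α) _‖ ≤ _
    rw [← avg_const hα ⟪R.j a, y⟫_ℂ, ← avg_sub hα (BM.const _)]
    · refine norm_avg_le hα fun g hg => ?_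
      nth_rewrite 1 [← hy g (hα.sub hg)]
      rw [← R.j_inner, ← R.U_j, ← inner_sub_right, ← map_sub]
      exact (norm_inner_le_norm _ _).trans_eq (by rw [R.U_norm S])
    · have := R.bm_U S (R.j a) (R.j (b n))
      simpa only [R.U_j, R.j_inner] using this
  have h1 : Tendsto (fun n => ω (b n)) atTop (𝓝 ⟪R.Om, y⟫_ℂ) := by
    have : Tendsto (fun n => ⟪R.Om, R.j (b n)⟫_ℂ) atTop (𝓝 ⟪R.Om, y⟫_ℂ) :=
      tendsto_const_nhds.inner hb
    simpa only [R.om_inner] using this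
  have h2 := le_of_tendsto_of_tendsto' ((h1.const_mul (ω (star a))).const_sub ⟪R.j a, y⟫_ℂ).norm
    ((hb.const_sub y).norm.const_mul ‖R.j a‖) key
  rw [sub_self, norm_zero, mul_zero] at h2
  have h3 := sub_eq_zero.1 (norm_le_zero_iff.1 h2)
  simp only [h3, inner_smul_right, R.inner_om]
  ring

omit [CompleteSpace H] in
theorem Good.mulR {V W : H →L[ℂ] H} (hV : Good R K V) (hW : Good R K W) : Good R K (V * W) :=
  Good.mul V W hV hW

def Sm (R : Rep ω τ H) (K : Set G) (x : H) : Prop :=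
  ∀ V, Good R K V → ∀ ε > 0, ∃ W, Good R K W ∧ ‖W (V x)‖ ≤ ε

theorem sm_of (F : FolnerNetIn μ K) (hF : F.ErgodicAlong ω τ) (x : H)
    (hx : ⟪R.Om, x⟫_ℂ = 0) : Sm R K x := by
  let M : Submodule ℂ H :=
    { carrier := {x | Sm R K x}
      zero_mem' := by
        intro V hV ε hε
        exact ⟨1, Good.one, by simp [hε.le]⟩
      add_mem' := by
        intro x y hx hy V hV ε hε
        obtain ⟨W, hW, h1⟩ := hx V hV (ε / 2) (by positivity)
        obtain ⟨W', hW', h2⟩ := hy (W * V) (hW.mulR S hV) (ε / 2) (by positivity)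
        refine ⟨W' * W, hW'.mulR S hW, ?_⟩
        have h3 : ‖W' (W (V x))‖ ≤ ε / 2 := (hW'.norm S _).trans h1
        have h4 : ‖W' (W (V y))‖ ≤ ε / 2 := h2
        have : (W' * W) (V (x + y)) = W' (W (V x)) + W' (W (V y)) := by simp
        rw [this]
        exact (norm_add_le_of_le h3 h4).trans_eq (by ring)
      smul_mem' := by
        intro c x hx V hV ε hε
        obtain ⟨W, hW, h1⟩ := hx V hV (ε / (‖c‖ + 1)) (by positivity)
        refine ⟨W, hW, ?_⟩
        rw [map_smul, map_smul, norm_smul]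
        calc _ ≤ (‖c‖ + 1) * (ε / (‖c‖ + 1)) := by gcongr; linarith
          _ = ε := by field_simp }
  have hM : ∀ x, x ∈ M ↔ Sm R K x := fun x => Iff.rfl
  have hcl : IsClosed (M : Set H) := by
    rw [← isSeqClosed_iff_isClosed]
    intro u x hu hux V hV ε hε
    obtain ⟨n, hn⟩ := ((Metric.tendsto_atTop.1 hux) (ε / 2) (by positivity))
    obtain ⟨W, hW, h1⟩ := hu n V hV (ε / 2) (by positivity)
    refine ⟨W, hW, ?_⟩
    have h2 : ‖W (V (x - u n))‖ ≤ ε / 2 := by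
      refine ((hW.norm S _).trans (hV.norm S _)).trans ?_
      rw [← dist_eq_norm, dist_comm]
      exact (hn n le_rfl).le
    have : W (V x) = W (V (x - u n)) + W (V (u n)) := by simp
    rw [this]
    exact (norm_add_le_of_le h2 h1).trans_eq (by ring)
  have hcob : ∀ k ∈ K, ∀ z, R.U k z - z ∈ M := by
    intro k hk z V hV ε hε
    obtain ⟨n, hn⟩ := exists_nat_gt (2 * ‖z‖ / ε)
    have hn0 : (0 : ℝ) < n := lt_of_le_of_lt (by positivity) hn
    have hgp : ∀ i, Good R K ((R.U k) ^ i) := by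
      intro i
      induction i with
      | zero => simpa using Good.one
      | succ i ih => rw [pow_succ]; exact ih.mulR S (Good.U k hk)
    refine ⟨_, Good.avg n (by exact_mod_cast hn0) (fun i => (R.U k) ^ i) hgp, ?_⟩
    have e : (((n : ℂ)⁻¹ • ∑ i ∈ Finset.range n, R.U k ^ i) (V (R.U k z - z))) =
        (n : ℂ)⁻¹ • ((R.U k ^ n) (V z) - V z) := by
      rw [map_sub, hV.comm S]
      simp only [smul_apply, sum_apply, map_sub]
      have := Finset.sum_range_sub (fun i => (R.U k ^ i) (V z)) n
      simp only [pow_zero, one_apply_eq_self] at this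
      rw [← this, ← smul_sub, ← Finset.sum_sub_distrib]
      congr 1
    rw [e, norm_smul, norm_inv, Complex.norm_natCast]
    have b1 : ‖(R.U k ^ n) (V z) - V z‖ ≤ 2 * ‖z‖ := by
      refine (norm_sub_le _ _).trans ?_
      have := (hgp n).norm S (V z)
      have := hV.norm S z
      linarith
    calc _ ≤ (n : ℝ)⁻¹ * (2 * ‖z‖) := by gcongr
      _ ≤ ε := by
        rw [div_lt_iff₀ hε] at hn
        rw [inv_mul_le_iff₀ hn0]; exact hn.le
  have hcomp : CompleteSpace M := hcl.completeSpace_coe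
  have : x ∈ Mᗮᗮ := by
    rw [Submodule.mem_orthogonal]
    intro y hy
    rw [Submodule.mem_orthogonal] at hy
    have hinv : ∀ k ∈ K, R.U k y = y := by
      intro k hk
      have : R.U k⁻¹ y = y := by
        refine ext_inner_left ℂ fun z => ?_
        have := hy _ (hcob k hk z)
        rw [inner_sub_left, sub_eq_zero] at this
        rw [← this, R.U_adj S, inv_inv]
      nth_rewrite 1 [← this]
      exact R.U_inv S k y
    rw [inv_vec S F hF y hinv, inner_smul_left, hx, mul_zero]
  rw [Submodule.orthogonal_orthogonal] at this
  exact this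

theorem good_fin (F : FolnerNetIn μ K) (hF : F.ErgodicAlong ω τ) {J : Type*} (s : Finset J)
    (x : J → H) (V : H →L[ℂ] H) (hV : Good R K V) (ε : ℝ) (hε : 0 < ε) :
    ∃ W, Good R K W ∧ ∀ i ∈ s, ‖W (V (x i)) - ⟪R.Om, x i⟫_ℂ • R.Om‖ ≤ ε := by
  classical
  induction s using Finset.induction_on with
  | empty => exact ⟨1, Good.one, by simp⟩
  | insert i s hi ih =>
    obtain ⟨W, hW, h⟩ := ih
    have h0 : ⟪R.Om, x i - ⟪R.Om, x i⟫_ℂ • R.Om⟫_ℂ = 0 := by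
      rw [inner_sub_right, inner_smul_right, R.om_om S]; simp
    obtain ⟨W', hW', h'⟩ := sm_of S F hF _ h0 (W * V) (hW.mulR S hV) ε hε
    refine ⟨W' * W, hW'.mulR S hW, fun k hk => ?_⟩
    rcases Finset.mem_insert.1 hk with rfl | hk
    · have : W' ((W * V) (x k - ⟪R.Om, x k⟫_ℂ • R.Om)) =
        (W' * W) (V (x k)) - ⟪R.Om, x k⟫_ℂ • R.Om := by
        simp [hW.om S, hV.om S, hW'.om S]
      rwa [this] at h'
    · have : (W' * W) (V (x k)) - ⟪R.Om, x k⟫_ℂ • R.Om =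
        W' (W (V (x k)) - ⟪R.Om, x k⟫_ℂ • R.Om) := by
        simp [hW'.om S]
      rw [this]
      exact (hW'.norm S _).trans (h k hk)

theorem erg_any (F : FolnerNetIn μ K) (hF : F.ErgodicAlong ω τ) {ι : Type*} {l : Filter ι}
    {Λ : ι → Set G} (hΛ : Fol μ K l Λ) (y x : H) :
    Tendsto (fun α => avg μ (Λ α) (fun g => ⟪y, R.U g x⟫_ℂ)) l
      (𝓝 (⟪y, R.Om⟫_ℂ * ⟪R.Om, x⟫_ℂ)) := by
  rw [Metric.tendsto_nhds]
  intro ε hε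
  obtain ⟨W, hW, h⟩ := good_fin (R := R) S F hF {()} (fun _ => x) 1 Good.one
    (ε / (2 * (‖y‖ + 1))) (by positivity)
  have h1 := h () (by simp)
  filter_upwards [hΛ.ok S.hK, hW.asym S hΛ (ε / (4 * (‖y‖ * ‖x‖ + 1))) (by positivity)]
    with α hα h2
  have h2 := h2 x y
  rw [dist_eq_norm]
  have h3 : ‖avg μ (Λ α) (fun g => ⟪y, R.U g (W x)⟫_ℂ) - ⟪y, R.Om⟫_ℂ * ⟪R.Om, x⟫_ℂ‖ ≤ ε / 2 := by
    rw [← avg_const hα (⟪y, R.Om⟫_ℂ * ⟪R.Om, x⟫_ℂ), ← avg_sub hα (R.bm_U S _ _) (BM.const _)]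
    refine norm_avg_le hα fun g hg => ?_
    have : ⟪y, R.U g (W x)⟫_ℂ - ⟪y, R.Om⟫_ℂ * ⟪R.Om, x⟫_ℂ =
        ⟪y, R.U g (W x - ⟪R.Om, x⟫_ℂ • R.Om)⟫_ℂ := by
      simp only [map_sub, map_smul, R.U_om S, inner_sub_right, inner_smul_right]
      ring
    rw [this]
    calc _ ≤ ‖y‖ * (ε / (2 * (‖y‖ + 1))) := by
          refine (norm_inner_le_norm _ _).trans ?_
          rw [R.U_norm S]
          exact mul_le_mul_of_nonneg_left h1 (norm_nonneg _)
      _ ≤ (‖y‖ + 1) * (ε / (2 * (‖y‖ + 1))) := by gcongr; linarith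
      _ = ε / 2 := by field_simp
  have h4 : ε / (4 * (‖y‖ * ‖x‖ + 1)) * (‖y‖ * ‖x‖) ≤ ε / 4 := by
    calc _ ≤ ε / (4 * (‖y‖ * ‖x‖ + 1)) * (‖y‖ * ‖x‖ + 1) := by gcongr; linarith
      _ = ε / 4 := by field_simp
  refine (norm_sub_le_norm_sub_add_norm_sub _
    (avg μ (Λ α) (fun g => ⟪y, R.U g (W x)⟫_ℂ)) _).trans_lt ?_
  linarith

omit S [CompleteSpace H] in
theorem dens1 (R : Rep ω τ H) {ι : Type*} {l : Filter ι} {T : ι → H → ℂ} {T0 : H → ℂ} {C : ℝ}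
    (hC : 0 ≤ C)
    (h1 : ∀ᶠ α in l, ∀ x y, ‖T α x - T α y‖ ≤ C * ‖x - y‖)
    (h2 : ∀ x y, ‖T0 x - T0 y‖ ≤ C * ‖x - y‖)
    (h : ∀ a, Tendsto (fun α => T α (R.j a)) l (𝓝 (T0 (R.j a)))) (x : H) :
    Tendsto (fun α => T α x) l (𝓝 (T0 x)) := by
  rw [Metric.tendsto_nhds]
  intro ε hε
  obtain ⟨a, ha⟩ := R.dense.exists_dist_lt x (show 0 < ε / (3 * (C + 1)) by positivity)
  rw [dist_eq_norm] at ha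
  have hb : C * ‖x - R.j a‖ ≤ ε / 3 := by
    calc _ ≤ (C + 1) * (ε / (3 * (C + 1))) := by gcongr; linarith
      _ = ε / 3 := by field_simp
  filter_upwards [h1, (Metric.tendsto_nhds.1 (h a)) (ε / 3) (by positivity)] with α k1 k2
  have e1 := (k1 x (R.j a)).trans hb
  have e2 := (h2 x (R.j a)).trans hb
  rw [dist_eq_norm] at *
  have : T α x - T0 x = (T α x - T α (R.j a)) + (T α (R.j a) - T0 (R.j a)) -
    (T0 x - T0 (R.j a)) := by ring
  rw [this]
  refine (norm_sub_le _ _).trans_lt ?_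
  have := norm_add_le (T α x - T α (R.j a)) (T α (R.j a) - T0 (R.j a))
  linarith

theorem π_lim (F : FolnerNetIn μ K) (hF : F.ErgodicAlong ω τ) {ι : Type*} {l : Filter ι}
    {Λ : ι → Set G} (hΛ : Fol μ K l Λ) (d : A) (u v : H) :
    Tendsto (fun α => avg μ (Λ α) (fun h => ⟪u, R.π (τ h d) v⟫_ℂ)) l
      (𝓝 (ω d * ⟪u, v⟫_ℂ)) := by
  have hb : ∀ (u v : H) g, ‖⟪u, R.π (τ g d) v⟫_ℂ‖ ≤ ‖d‖ * ‖u‖ * ‖v‖ := by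
    intro u v g
    refine (norm_inner_le_norm _ _).trans ?_
    have := R.norm_π (τ g d) v
    rw [norm_tau] at this
    calc _ ≤ ‖u‖ * (‖d‖ * ‖v‖) := by gcongr
      _ = _ := by ring
  have hc : ∀ u v : H, ‖ω d * ⟪u, v⟫_ℂ‖ ≤ ‖ω d‖ * ‖u‖ * ‖v‖ := by
    intro u v
    rw [norm_mul, mul_assoc]
    gcongr
    exact norm_inner_le_norm _ _
  refine dens1 R (T := fun α v => avg μ (Λ α) (fun h => ⟪u, R.π (τ h d) v⟫_ℂ))
    (T0 := fun v => ω d * ⟪u, v⟫_ℂ) (C := (‖d‖ + ‖ω d‖) * ‖u‖) (by positivity) ?_ ?_ ?_ v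
  · filter_upwards [hΛ.ok S.hK] with α hα x y
    rw [← avg_sub hα (R.bm_π S _ _ _) (R.bm_π S _ _ _)]
    refine norm_avg_le hα fun g hg => ?_
    rw [← inner_sub_right, ← map_sub]
    refine (hb _ _ _).trans ?_
    gcongr
    linarith [norm_nonneg (ω d)]
  · intro x y
    rw [← mul_sub, ← inner_sub_right]
    refine (hc _ _).trans ?_
    gcongr
    linarith [norm_nonneg d]
  intro b
  refine dens1 R (T := fun α u => avg μ (Λ α) (fun h => ⟪u, R.π (τ h d) (R.j b)⟫_ℂ))
    (T0 := fun u => ω d * ⟪u, R.j b⟫_ℂ) (C := (‖d‖ + ‖ω d‖) * ‖R.j b‖) (by positivity) ?_ ?_ ?_ u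
  · filter_upwards [hΛ.ok S.hK] with α hα x y
    rw [← avg_sub hα (R.bm_π S _ _ _) (R.bm_π S _ _ _)]
    refine norm_avg_le hα fun g hg => ?_
    rw [← inner_sub_left]
    refine (hb _ _ _).trans ?_
    rw [mul_right_comm]
    gcongr
    linarith [norm_nonneg (ω d)]
  · intro x y
    rw [← mul_sub, ← inner_sub_left]
    refine (hc _ _).trans ?_
    rw [mul_right_comm]
    gcongr
    linarith [norm_nonneg d]
  intro a
  have := erg_any (R := R) S F hF hΛ (R.j (star (b * star a))) (R.j d)
  rw [R.om_inner, R.inner_om, star_star] at this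
  simp only [R.U_j, R.π_j, R.j_inner, star_star] at this ⊢
  have e : ∀ h, ω (star a * (τ h d * b)) = ω (b * star a * τ h d) := by
    intro h
    rw [← mul_assoc, S.tracial, mul_assoc]
  simp only [e]
  rwa [mul_comm (ω d), S.tracial (star a) b]

end erg


section slim
theorem BM.conj {f : G → ℂ} (hf : BM K f) : BM K (fun x => (starRingEnd ℂ) (f x)) := by
  obtain ⟨C, hC⟩ := hf.bdd
  exact ⟨(Complex.continuous_conj.measurable).comp hf.meas, C, fun x => by simpa using hC x⟩

variable {R : Rep ω τ H} (S : Sys ω τ μ K)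

noncomputable def ff (R : Rep ω τ H) (c x w : H) (h : G) : ℂ := ⟪x, R.U h c⟫_ℂ * ⟪R.U h c, w⟫_ℂ

def SLim {ι : Type*} (μ : Measure G) (R : Rep ω τ H) (l : Filter ι) (Λ : ι → Set G) (c : H)
    (s : H → H → ℂ) : Prop :=
  ∀ x w, Tendsto (fun α => avg μ (Λ α) (ff R c x w)) l (𝓝 (s x w))

include S

theorem bm_ff (c x w : H) : BM K (ff R c x w) := by
  have := (R.bm_U S x c).mul (R.bm_U S w c).conj
  simp only [inner_conj_symm] at this
  exact this

theorem norm_ff (c x w : H) (h : G) : ‖ff R c x w h‖ ≤ ‖c‖ ^ 2 * ‖x‖ * ‖w‖ := by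
  unfold ff
  rw [norm_mul]
  calc _ ≤ (‖x‖ * ‖R.U h c‖) * (‖R.U h c‖ * ‖w‖) := by
        gcongr <;> exact norm_inner_le_norm _ _
    _ = _ := by rw [R.U_norm S]; ring

omit S in
theorem ff_self (c x : H) (h : G) : ff R c x x h = ((‖⟪x, R.U h c⟫_ℂ‖ ^ 2 : ℝ) : ℂ) := by
  unfold ff
  rw [← inner_conj_symm (R.U h c) x, RCLike.mul_conj]
  simp

theorem exists_slim {ι : Type*} (l : Ultrafilter ι) {Λ : ι → Set G} (F : Fol μ K l Λ) (c : H) :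
    ∃ s, SLim μ R l Λ c s := by
  have : ∀ x w, ∃ z, Tendsto (fun α => avg μ (Λ α) (ff R c x w)) l (𝓝 z) := by
    intro x w
    have hb : ∀ᶠ α in (l : Filter ι), avg μ (Λ α) (ff R c x w) ∈
        Metric.closedBall (0 : ℂ) (‖c‖ ^ 2 * ‖x‖ * ‖w‖) := by
      filter_upwards [F.ok S.hK] with α hα
      rw [mem_closedBall_zero_iff]
      exact norm_avg_le hα fun g _ => norm_ff S c x w g
    obtain ⟨z, _, hz⟩ := (isCompact_closedBall (0 : ℂ) (‖c‖ ^ 2 * ‖x‖ * ‖w‖)).ultrafilter_le_nhds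
      (l.map (fun α => avg μ (Λ α) (ff R c x w))) (by
        rw [Ultrafilter.coe_map, le_principal_iff]; exact hb)
    exact ⟨z, hz⟩
  choose s hs using this
  exact ⟨s, hs⟩

namespace SLim
variable {ι : Type*} {l : Filter ι} [l.NeBot] {Λ : ι → Set G} (F : Fol μ K l Λ) {c : H}
  {s : H → H → ℂ} (hs : SLim μ R l Λ c s)
include F hs

theorem add_left (x y w : H) : s (x + y) w = s x w + s y w := by
  refine tendsto_nhds_unique (hs (x + y) w) (((hs x w).add (hs y w)).congr' ?_)
  filter_upwards [F.ok S.hK] with α hα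
  rw [← avg_add hα (bm_ff S _ _ _) (bm_ff S _ _ _)]
  congr 1; ext h; simp [ff]; ring

theorem add_right (x y w : H) : s w (x + y) = s w x + s w y := by
  refine tendsto_nhds_unique (hs w (x + y)) (((hs w x).add (hs w y)).congr' ?_)
  filter_upwards [F.ok S.hK] with α hα
  rw [← avg_add hα (bm_ff S _ _ _) (bm_ff S _ _ _)]
  congr 1; ext h; simp [ff]; ring

theorem smul_left (k : ℂ) (x w : H) : s (k • x) w = (starRingEnd ℂ) k * s x w := by
  refine tendsto_nhds_unique (hs (k • x) w) (((hs x w).const_mul _).congr' ?_)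
  filter_upwards with α
  rw [← avg_mul_const]
  congr 1; ext h; simp [ff]; ring

theorem smul_right (k : ℂ) (x w : H) : s w (k • x) = k * s w x := by
  refine tendsto_nhds_unique (hs w (k • x)) (((hs w x).const_mul _).congr' ?_)
  filter_upwards with α
  rw [← avg_mul_const]
  congr 1; ext h; simp [ff]; ring

theorem bound (x w : H) : ‖s x w‖ ≤ ‖c‖ ^ 2 * ‖x‖ * ‖w‖ := by
  refine le_of_tendsto (hs x w).norm ?_
  filter_upwards [F.ok S.hK] with α hα
  exact norm_avg_le hα fun g _ => norm_ff S c x w g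

theorem inv (k : G) (hk : k ∈ K) (x w : H) : s (R.U k x) (R.U k w) = s x w := by
  have h1 := hs (R.U k x) (R.U k w)
  have h2 : Tendsto (fun α => avg μ (Λ α) (ff R c (R.U k x) (R.U k w)) -
      avg μ (Λ α) (ff R c x w)) l (𝓝 0) := by
    refine squeeze_zero_norm' (a := fun α => (‖c‖ ^ 2 * ‖x‖ * ‖w‖) *
      ((μ (symmDiff (Λ α) (Λ α * {k}))).toReal / (μ (Λ α)).toReal)) ?_ ?_
    · filter_upwards [F.ok S.hK] with α hα
      have := avg_shift S.hTrans S.hRight S.hKmul hα (bm_ff (R := R) S c (R.U k x) (R.U k w)).meas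
        (C := ‖c‖ ^ 2 * ‖x‖ * ‖w‖) (fun g => (norm_ff S _ _ _ g).trans_eq
          (by rw [R.U_norm S, R.U_norm S])) hk
      have e : (fun g => ff R c (R.U k x) (R.U k w) (g * k)) = ff R c x w := by
        ext g
        simp only [ff, mul_comm g k, ← R.U_mul S, R.U_inner S]
      rwa [e] at this
    · simpa using (F.folner k hk).const_mul (‖c‖ ^ 2 * ‖x‖ * ‖w‖)
  have := h1.sub h2
  rw [sub_zero] at this
  refine (tendsto_nhds_unique_of_eventuallyEq (hs x w) this ?_).symm
  filter_upwards with α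
  ring

theorem ams (t : ℝ) (ht : 0 < t) (x w : H) :
    ‖s x w‖ ≤ (t * (s x x).re + t⁻¹ * (s w w).re) / 2 := by
  have h1 : Tendsto (fun α => (avg μ (Λ α) (fun h => ((t / 2 : ℝ) : ℂ) * ff R c x x h +
      ((t⁻¹ / 2 : ℝ) : ℂ) * ff R c w w h)).re) l
      (𝓝 ((t * (s x x).re + t⁻¹ * (s w w).re) / 2)) := by
    have := (((hs x x).const_mul ((t / 2 : ℝ) : ℂ)).add
      ((hs w w).const_mul ((t⁻¹ / 2 : ℝ) : ℂ)))
    have h3 := (Complex.continuous_re.tendsto _).comp this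
    have e : ((t * (s x x).re + t⁻¹ * (s w w).re) / 2) =
      (((t / 2 : ℝ) : ℂ) * s x x + ((t⁻¹ / 2 : ℝ) : ℂ) * s w w).re := by
      rw [Complex.add_re, Complex.re_ofReal_mul, Complex.re_ofReal_mul]; ring
    rw [e]
    refine h3.congr' ?_
    filter_upwards [F.ok S.hK] with α hα
    rw [avg_add hα ((BM.const _).mul (bm_ff S _ _ _)) ((BM.const _).mul (bm_ff S _ _ _)),
      avg_mul_const, avg_mul_const]
    rfl
  refine le_of_tendsto_of_tendsto (hs x w).norm h1 ?_
  filter_upwards [F.ok S.hK] with α hα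
  refine norm_avg_le_re hα
    (((BM.const _).mul (bm_ff S _ _ _)).add ((BM.const _).mul (bm_ff S _ _ _))) fun h _ => ?_
  rw [Complex.add_re, Complex.re_ofReal_mul, Complex.re_ofReal_mul, ff_self, ff_self,
    Complex.ofReal_re, Complex.ofReal_re]
  unfold ff
  rw [norm_mul, norm_inner_symm (R.U h c) w]
  generalize ‖⟪x, R.U h c⟫_ℂ‖ = p
  generalize ‖⟪w, R.U h c⟫_ℂ‖ = q
  have : t / 2 * p ^ 2 + t⁻¹ / 2 * q ^ 2 - p * q = t⁻¹ / 2 * (t * p - q) ^ 2 := by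
    field_simp; ring
  have : 0 ≤ t⁻¹ / 2 * (t * p - q) ^ 2 := by positivity
  linarith

theorem bessel {n : ℕ} (v : Fin n → H) (hv : Orthonormal ℂ v) :
    ∑ i, (s (v i) (v i)).re ≤ ‖c‖ ^ 2 := by
  have h1 : Tendsto (fun α => (avg μ (Λ α) (fun h => ∑ i, ff R c (v i) (v i) h)).re) l
      (𝓝 (∑ i, (s (v i) (v i)).re)) := by
    have := tendsto_finsetSum (Finset.univ : Finset (Fin n)) fun i _ => hs (v i) (v i)
    have h3 := (Complex.continuous_re.tendsto _).comp this
    rw [Complex.re_sum] at h3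
    refine h3.congr' ?_
    filter_upwards [F.ok S.hK] with α hα
    rw [avg_sum hα _ fun i _ => bm_ff S _ _ _]
    rfl
  refine le_of_tendsto h1 ?_
  filter_upwards [F.ok S.hK] with α hα
  refine (Complex.re_le_norm _).trans (norm_avg_le hα fun h _ => ?_)
  simp only [ff_self]
  rw [← Complex.ofReal_sum, Complex.norm_real, Real.norm_of_nonneg (by positivity)]
  exact (hv.sum_inner_products_le _).trans_eq (by rw [R.U_norm S])

theorem exists_op [CompleteSpace H] : ∃ T : H →L[ℂ] H, ∀ x w, ⟪T x, w⟫_ℂ = s x w := by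
  let B0 := LinearMap.mk₂'ₛₗ (starRingEnd ℂ) (RingHom.id ℂ) s
    (fun x y w => add_left S F hs x y w)
    (fun k x w => smul_left S F hs k x w) (fun w x y => add_right S F hs x y w)
    (fun k w x => smul_right S F hs k x w)
  let B := B0.mkContinuous₂ (‖c‖ ^ 2) (fun x y => bound S F hs x y)
  refine ⟨InnerProductSpace.continuousLinearMapOfBilin B, fun x w => ?_⟩
  rw [InnerProductSpace.continuousLinearMapOfBilin_apply]
  rfl

end SLim
end slim


section cpt
variable {R : Rep ω τ H} (S : Sys ω τ μ K)
  {ι : Type*} {l : Filter ι} [l.NeBot] {Λ : ι → Set G} (F : Fol μ K l Λ) {c : H}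
  {s : H → H → ℂ} (hs : SLim μ R l Λ c s)
include S F hs

theorem fin_family (δ : ℝ) (hδ : 0 < δ) : ∃ (n : ℕ) (v : Fin n → H), Orthonormal ℂ v ∧
    ∀ w, (∀ i, ⟪w, v i⟫_ℂ = 0) → (s w w).re ≤ δ * ‖w‖ ^ 2 := by
  by_contra hcon
  push Not at hcon
  have hall : ∀ n : ℕ, ∃ v : Fin n → H, Orthonormal ℂ v ∧ ∀ i, δ ≤ (s (v i) (v i)).re := by
    intro n
    induction n with
    | zero => exact ⟨fun i => i.elim0, ⟨fun i => i.elim0, fun i => i.elim0⟩, fun i => i.elim0⟩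
    | succ n ih =>
      obtain ⟨v, hv, hd⟩ := ih
      obtain ⟨w, hw, hlt⟩ := hcon n v hv
      have hw0 : w ≠ 0 := by
        rintro rfl
        have h0 := SLim.bound S F hs 0 0
        simp only [norm_zero, mul_zero] at h0
        have : s 0 0 = 0 := norm_le_zero_iff.1 h0
        simp [this] at hlt
      have hn : 0 < ‖w‖ := norm_pos_iff.2 hw0
      refine ⟨Matrix.vecCons (((‖w‖⁻¹ : ℝ) : ℂ) • w) v, orthonormal_vecCons_iff.2 ⟨?_, ?_, hv⟩, ?_⟩
      · rw [norm_smul, Complex.norm_real, norm_inv, norm_norm, inv_mul_cancel₀ hn.ne']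
      · intro i; rw [inner_smul_left, hw, mul_zero]
      · intro i
        refine Fin.cases ?_ (fun i => ?_) i
        · rw [Matrix.cons_val_zero, SLim.smul_left S F hs, SLim.smul_right S F hs,
            Complex.conj_ofReal, Complex.re_ofReal_mul, Complex.re_ofReal_mul]
          have : δ = ‖w‖⁻¹ * (‖w‖⁻¹ * (δ * ‖w‖ ^ 2)) := by field_simp
          rw [this]
          gcongr
        · rw [Matrix.cons_val_succ]; exact hd i
  obtain ⟨n, hn⟩ := exists_nat_gt (‖c‖ ^ 2 / δ)
  obtain ⟨v, hv, hd⟩ := hall n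
  have h1 := SLim.bessel S F hs v hv
  have h2 : ∑ i : Fin n, δ ≤ ∑ i, (s (v i) (v i)).re := Finset.sum_le_sum fun i _ => hd i
  rw [div_lt_iff₀ hδ] at hn
  simp at h2
  linarith

theorem cpt {T : H →L[ℂ] H} (hT : ∀ x w, ⟪T x, w⟫_ℂ = s x w) (ε : ℝ) (hε : 0 < ε) :
    ∃ (n : ℕ) (e : Fin n → H), ∀ z, ‖z‖ ≤ ‖c‖ → ∃ k : Fin n → ℂ, (∀ i, ‖k i‖ ≤ ‖c‖) ∧
      ‖T z - ∑ i, k i • e i‖ ≤ ε := by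
  set C : ℝ := (‖c‖ ^ 6 + 1) * (2 * ‖c‖) ^ 2 + 1 with hCdef
  have hC : 0 < C := by positivity
  set t : ℝ := ε ^ 2 / C with ht
  have ht0 : 0 < t := by positivity
  obtain ⟨n, v, hv, hsm⟩ := fin_family S F hs (t ^ 2) (by positivity)
  refine ⟨n, fun i => T (v i), fun z hz => ⟨fun i => ⟪v i, z⟫_ℂ, fun i => ?_, ?_⟩⟩
  · refine (norm_inner_le_norm _ _).trans ?_
    rw [hv.1 i, one_mul]; exact hz
  set p : H := ∑ i, ⟪v i, z⟫_ℂ • v i with hp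
  set w : H := z - p with hw
  have e1 : T z - ∑ i, ⟪v i, z⟫_ℂ • T (v i) = T w := by
    simp [hw, hp]
  rw [e1]
  have hperp : ∀ i, ⟪w, v i⟫_ℂ = 0 := by
    intro i
    rw [← inner_conj_symm, hw, inner_sub_right, hp, hv.inner_right_fintype, sub_self, map_zero]
  have hpw : ⟪w, p⟫_ℂ = 0 := by
    rw [hp, inner_sum]
    exact Finset.sum_eq_zero fun i _ => by rw [inner_smul_right, hperp, mul_zero]
  have hwn : ‖w‖ ≤ ‖c‖ := by
    have h1 := norm_add_sq_eq_norm_sq_add_norm_sq_of_inner_eq_zero (𝕜 := ℂ) w p hpw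
    have h2 : w + p = z := by simp [hw]
    rw [h2] at h1
    have : ‖w‖ ≤ ‖z‖ := by
      nlinarith [norm_nonneg w, norm_nonneg z, norm_nonneg p]
    exact this.trans hz
  have hTw : ‖T w‖ ^ 2 ≤ ‖s w (T w)‖ := by
    rw [← hT, inner_self_eq_norm_sq_to_K]
    simp
  have hTn : ‖T w‖ ≤ ‖c‖ ^ 2 * ‖w‖ := by
    have := hTw.trans (SLim.bound S F hs w (T w))
    by_cases h0 : ‖T w‖ = 0
    · rw [h0]; positivity
    · have : 0 < ‖T w‖ := lt_of_le_of_ne (norm_nonneg _) (Ne.symm h0)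
      nlinarith
  have hA := SLim.ams S F hs t⁻¹ (by positivity) w (T w)
  rw [inv_inv] at hA
  have hB : (s (T w) (T w)).re ≤ ‖c‖ ^ 6 * ‖w‖ ^ 2 := by
    calc _ ≤ ‖s (T w) (T w)‖ := Complex.re_le_norm _
      _ ≤ _ := SLim.bound S F hs _ _
      _ ≤ ‖c‖ ^ 2 * (‖c‖ ^ 2 * ‖w‖) * (‖c‖ ^ 2 * ‖w‖) := by gcongr
      _ = _ := by ring
  have hD := hsm w hperp
  have hE : ‖T w‖ ^ 2 ≤ ε ^ 2 := by
    calc ‖T w‖ ^ 2 ≤ (t⁻¹ * (t ^ 2 * ‖w‖ ^ 2) + t * (‖c‖ ^ 6 * ‖w‖ ^ 2)) / 2 := by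
          refine hTw.trans (hA.trans ?_)
          gcongr
      _ = t * ((‖c‖ ^ 6 + 1) * ‖w‖ ^ 2) / 2 := by field_simp; ring
      _ ≤ t * C := by
          have : (‖c‖ ^ 6 + 1) * ‖w‖ ^ 2 ≤ (‖c‖ ^ 6 + 1) * ‖c‖ ^ 2 := by gcongr
          have h3 : 0 ≤ (‖c‖ ^ 6 + 1) * ‖c‖ ^ 2 := by positivity
          have : (‖c‖ ^ 6 + 1) * ‖w‖ ^ 2 / 2 ≤ C := by rw [hCdef]; nlinarith
          calc _ = t * ((‖c‖ ^ 6 + 1) * ‖w‖ ^ 2 / 2) := by ring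
            _ ≤ _ := by gcongr
      _ = ε ^ 2 := by rw [ht]; field_simp
  exact abs_le_of_sq_le_sq' hE hε.le |>.2

theorem T_inv {T : H →L[ℂ] H} (hT : ∀ x w, ⟪T x, w⟫_ℂ = s x w) (k : G) (hk : k ∈ K) (x : H) :
    R.U k⁻¹ (T x) = T (R.U k⁻¹ x) := by
  refine ext_inner_right ℂ fun w => ?_
  rw [hT, ← SLim.inv S F hs k hk, R.U_inv S, ← hT, R.U_adj S]

end cpt


section nn
variable {R : Rep ω τ H} (S : Sys ω τ μ K)
  {ι : Type*} {l : Filter ι} {Λ : ι → Set G}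

noncomputable def DD (R : Rep ω τ H) (a : A) (h : G) (c : H) : H :=
  R.π (τ h a) c - ⟪R.Om, R.π (τ h a) c⟫_ℂ • R.Om

def Nm (μ : Measure G) (R : Rep ω τ H) (K : Set G) (l : Filter ι) (Λ : ι → Set G) (a : A)
    (c : H) : Prop :=
  ∀ V, Good R K V → ∀ ε > 0, ∃ W, Good R K W ∧ ∃ q : G → ℂ, BM K q ∧
    (∀ h ∈ K, ‖W (V (DD R a h c))‖ ≤ (q h).re) ∧ ∀ᶠ α in l, (avg μ (Λ α) q).re ≤ ε

theorem DD_add (a : A) (h : G) (x y : H) : DD R a h (x + y) = DD R a h x + DD R a h y := by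
  simp only [DD, map_add, inner_add_right, add_smul]; abel

theorem DD_smul (a : A) (h : G) (k : ℂ) (x : H) : DD R a h (k • x) = k • DD R a h x := by
  simp only [DD, map_smul, inner_smul_right, smul_sub, smul_smul]

include S

theorem Pr_norm (x : H) : ‖x - ⟪R.Om, x⟫_ℂ • R.Om‖ ≤ 2 * ‖x‖ := by
  have h1 : ‖⟪R.Om, x⟫_ℂ • R.Om‖ ≤ ‖x‖ := by
    rw [norm_smul, R.norm_om S, mul_one]
    exact (norm_inner_le_norm _ _).trans_eq (by rw [R.norm_om S, one_mul])
  exact (norm_sub_le _ _).trans (by linarith)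

theorem DD_norm (a : A) (h : G) (x : H) : ‖DD R a h x‖ ≤ 2 * (‖a‖ * ‖x‖) := by
  refine (Pr_norm S _).trans ?_
  have := R.norm_π (τ h a) x
  rw [norm_tau] at this
  linarith

theorem Good.DD {W : H →L[ℂ] H} (hW : Good R K W) (x : H) :
    W (x - ⟪R.Om, x⟫_ℂ • R.Om) = W x - ⟪R.Om, W x⟫_ℂ • R.Om := by
  simp [hW.om S, hW.inner S]

theorem DD_eq (a : A) (h : G) (x : H) :
    P432.DD R a h x = R.U h (R.π a (R.U h⁻¹ x) - ⟪R.Om, R.π a (R.U h⁻¹ x)⟫_ℂ • R.Om) := by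
  have e : R.π (τ h a) x = R.U h (R.π a (R.U h⁻¹ x)) := by
    rw [R.U_π S, R.U_inv S]
  have e2 : ⟪R.Om, R.π (τ h a) x⟫_ℂ = ⟪R.Om, R.π a (R.U h⁻¹ x)⟫_ℂ := by
    rw [e, R.U_adj S, R.U_om S]
  rw [P432.DD, e2, e]
  simp [R.U_om S]

variable (F : Fol μ K l Λ)
include F

theorem Nm_add (a : A) {x y : H} (hx : Nm μ R K l Λ a x) (hy : Nm μ R K l Λ a y) :
    Nm μ R K l Λ a (x + y) := by
  intro V hV ε hε
  obtain ⟨W, hW, q, hq, h1, h2⟩ := hx V hV (ε / 2) (by positivity)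
  obtain ⟨W', hW', q', hq', h1', h2'⟩ := hy (W * V) (hW.mulR S hV) (ε / 2) (by positivity)
  refine ⟨W' * W, hW'.mulR S hW, _, hq.add hq', fun h hh => ?_, ?_⟩
  · have e : (W' * W) (V (DD R a h (x + y))) = W' (W (V (DD R a h x))) +
      W' ((W * V) (DD R a h y)) := by rw [DD_add]; simp
    rw [e, Complex.add_re]
    exact norm_add_le_of_le ((hW'.norm S _).trans (h1 h hh)) (h1' h hh)
  · filter_upwards [F.ok S.hK, h2, h2'] with α hα b1 b2
    rw [avg_add hα hq hq', Complex.add_re]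
    linarith

theorem Nm_smul (a : A) (k : ℂ) {x : H} (hx : Nm μ R K l Λ a x) :
    Nm μ R K l Λ a (k • x) := by
  intro V hV ε hε
  obtain ⟨W, hW, q, hq, h1, h2⟩ := hx V hV (ε / (‖k‖ + 1)) (by positivity)
  refine ⟨W, hW, _, (BM.const ((‖k‖ : ℝ) : ℂ)).mul hq, fun h hh => ?_, ?_⟩
  · rw [DD_smul, map_smul, map_smul, norm_smul, Complex.re_ofReal_mul]
    exact mul_le_mul_of_nonneg_left (h1 h hh) (norm_nonneg _)
  · filter_upwards [h2] with α b1
    rw [avg_mul_const, Complex.re_ofReal_mul]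
    calc _ ≤ ‖k‖ * (ε / (‖k‖ + 1)) := by gcongr
      _ ≤ (‖k‖ + 1) * (ε / (‖k‖ + 1)) := by gcongr; linarith
      _ = ε := by field_simp

theorem Nm_of_small (a : A) {x : H}
    (hx : ∀ δ > 0, ∃ y, Nm μ R K l Λ a y ∧ ‖x - y‖ ≤ δ) :
    Nm μ R K l Λ a x := by
  intro V hV ε hε
  obtain ⟨y, hy, hd⟩ := hx (ε / (4 * (‖a‖ + 1))) (by positivity)
  obtain ⟨W, hW, q, hq, h1, h2⟩ := hy V hV (ε / 2) (by positivity)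
  refine ⟨W, hW, _, (BM.const ((ε / 2 : ℝ) : ℂ)).add hq, fun h hh => ?_, ?_⟩
  · have e : DD R a h x = DD R a h (x - y) + DD R a h y := by rw [← DD_add, sub_add_cancel]
    rw [e, map_add, map_add, Complex.add_re, Complex.ofReal_re]
    refine norm_add_le_of_le ?_ (h1 h hh)
    refine ((hW.norm S _).trans (hV.norm S _)).trans ((DD_norm S _ _ _).trans ?_)
    calc 2 * (‖a‖ * ‖x - y‖) ≤ 2 * ((‖a‖ + 1) * (ε / (4 * (‖a‖ + 1)))) := by
          gcongr; linarith
      _ = ε / 2 := by field_simp; norm_num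
  · filter_upwards [F.ok S.hK, h2] with α hα b1
    rw [avg_add hα (BM.const _) hq, avg_const hα, Complex.add_re, Complex.ofReal_re]
    linarith

theorem Nm_cpt [CompleteSpace H] (Fe : FolnerNetIn μ K) (hF : Fe.ErgodicAlong ω τ) [l.NeBot] {c : H}
    {s : H → H → ℂ} (hs : SLim μ R l Λ c s) {T : H →L[ℂ] H} (hT : ∀ x w, ⟪T x, w⟫_ℂ = s x w)
    (a : A) : Nm μ R K l Λ a (T c) := by
  intro V hV ε hε
  obtain ⟨n, e, he⟩ := cpt S F hs hT (ε / (4 * (‖a‖ + 1))) (by positivity)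
  obtain ⟨W, hW, h1⟩ := good_fin (R := R) S Fe hF Finset.univ (fun i => R.π a (e i)) V hV
    (ε / (2 * (n * ‖c‖ + 1))) (by positivity)
  refine ⟨W, hW, fun _ => ((ε : ℝ) : ℂ), BM.const _, fun h hh => ?_, ?_⟩
  · rw [Complex.ofReal_re]
    obtain ⟨k, hk, hd⟩ := he (R.U h⁻¹ c) (R.U_norm S _ _).le
    rw [← T_inv S F hs hT h hh] at hd
    rw [DD_eq S, hV.comm S, hW.comm S, R.U_norm S]
    set y := R.U h⁻¹ (T c)
    set r := y - ∑ i, k i • e i with hr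
    have hy : y = r + ∑ i, k i • e i := by simp [hr]
    have e1 : W (V (R.π a y - ⟪R.Om, R.π a y⟫_ℂ • R.Om)) =
        W (V (R.π a r - ⟪R.Om, R.π a r⟫_ℂ • R.Om)) +
        ∑ i, k i • (W (V (R.π a (e i))) - ⟪R.Om, R.π a (e i)⟫_ℂ • R.Om) := by
      rw [hy]
      simp only [map_add, map_sub, map_smul, map_sum, inner_add_right, inner_sum,
        inner_smul_right, hV.om S, hW.om S, smul_sub, Finset.sum_sub_distrib, add_smul,
        Finset.sum_smul, smul_smul]
      abel
    rw [e1]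
    have b1 : ‖W (V (R.π a r - ⟪R.Om, R.π a r⟫_ℂ • R.Om))‖ ≤ ε / 2 := by
      refine ((hW.norm S _).trans (hV.norm S _)).trans ((Pr_norm S _).trans ?_)
      calc 2 * ‖R.π a r‖ ≤ 2 * (‖a‖ * ‖r‖) := by gcongr; exact R.norm_π _ _
        _ ≤ 2 * ((‖a‖ + 1) * (ε / (4 * (‖a‖ + 1)))) := by
          gcongr; linarith
        _ = ε / 2 := by field_simp; norm_num
    have b2 : ‖∑ i, k i • (W (V (R.π a (e i))) - ⟪R.Om, R.π a (e i)⟫_ℂ • R.Om)‖ ≤ ε / 2 := by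
      calc _ ≤ ∑ i : Fin n, ‖c‖ * (ε / (2 * (n * ‖c‖ + 1))) := by
            refine norm_sum_le_of_le _ fun i _ => ?_
            rw [norm_smul]
            exact mul_le_mul (hk i) (h1 i (Finset.mem_univ _)) (norm_nonneg _) (norm_nonneg _)
        _ = (n * ‖c‖) * (ε / (2 * (n * ‖c‖ + 1))) := by simp; ring
        _ ≤ (n * ‖c‖ + 1) * (ε / (2 * (n * ‖c‖ + 1))) := by gcongr; linarith
        _ = ε / 2 := by field_simp
    exact (norm_add_le_of_le b1 b2).trans_eq (by ring)
  · filter_upwards [F.ok S.hK] with α hα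
    rw [avg_const hα, Complex.ofReal_re]

theorem exists_ks [l.NeBot] {c : H} {s : H → H → ℂ} (hs : SLim μ R l Λ c s) (h0 : s c c = 0)
    (η : ℝ) (hη : 0 < η) :
    ∃ k : ℕ → G, (∀ n, k n ∈ K) ∧ ∀ m n, m < n → ‖⟪R.U (k m) c, R.U (k n) c⟫_ℂ‖ ≤ η := by
  refine exists_seq_of_forall_finset_exists (· ∈ K)
    (fun x y => ‖⟪R.U x c, R.U y c⟫_ℂ‖ ≤ η) fun t ht => ?_
  by_contra hcon
  push Not at hcon
  have h1 : Tendsto (fun α => (avg μ (Λ α) (fun h => ∑ x ∈ t, ff R c (R.U x c) (R.U x c) h)).re) l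
      (𝓝 0) := by
    have := tendsto_finsetSum t fun i _ => hs (R.U i c) (R.U i c)
    rw [Finset.sum_eq_zero (s := t) fun i hi => by
      rw [SLim.inv S F hs i (ht i hi), h0]] at this
    have h3 := (Complex.continuous_re.tendsto _).comp this
    rw [Complex.zero_re] at h3
    refine h3.congr' ?_
    filter_upwards [F.ok S.hK] with α hα
    rw [avg_sum hα _ fun i _ => bm_ff S _ _ _]
    rfl
  have h2 : η ^ 2 ≤ 0 := by
    refine ge_of_tendsto h1 ?_
    filter_upwards [F.ok S.hK] with α hα
    have := norm_avg_le_re hα (f := fun _ => ((η ^ 2 : ℝ) : ℂ))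
      (BM.sum t fun x _ => bm_ff (R := R) S c (R.U x c) (R.U x c)) (fun h hh => ?_)
    · rw [avg_const hα, Complex.norm_real, Real.norm_of_nonneg (by positivity)] at this
      exact this
    · obtain ⟨x, hx, hlt⟩ := hcon h (hα.sub hh)
      simp only [ff_self, ← Complex.ofReal_sum, Complex.ofReal_re]
      rw [Complex.norm_real, Real.norm_of_nonneg (by positivity)]
      calc η ^ 2 ≤ ‖⟪R.U x c, R.U h c⟫_ℂ‖ ^ 2 := by gcongr
        _ ≤ _ := Finset.single_le_sum (f := fun x => ‖⟪R.U x c, R.U h c⟫_ℂ‖ ^ 2)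
          (fun i _ => by positivity) hx
  nlinarith

end nn


section wm
variable {R : Rep ω τ H} (S : Sys ω τ μ K)
  {ι : Type*} {l : Filter ι} {Λ : ι → Set G}
include S

theorem om_bound (R : Rep ω τ H) (d : A) : ‖ω d‖ ≤ ‖d‖ := by
  have e : ω d = ⟪R.Om, R.π d R.Om⟫_ℂ := by
    rw [Rep.Om, R.π_j, R.j_inner]; simp
  rw [e]
  refine (norm_inner_le_norm _ _).trans ?_
  have := R.norm_π d R.Om
  rw [R.norm_om S] at this ⊢
  linarith

theorem two_corr (a : A) (c : H) (k m h : G) :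
    ⟪R.U k (R.π (τ h a) c), R.U m (R.π (τ h a) c)⟫_ℂ =
      ⟪R.U k c, R.π (τ h (star (τ k a) * τ m a)) (R.U m c)⟫_ℂ := by
  rw [R.U_π S, R.U_π S, R.π_adj, R.π_mul, ← map_star, map_mul, map_star, map_star,
    S.hτ_mul, S.hτ_mul, S.hτ_mul, S.hτ_mul, mul_comm k h, mul_comm m h]

variable (F : Fol μ K l Λ)
include F

theorem Nm_wm [CompleteSpace H] (Fe : FolnerNetIn μ K) (hF : Fe.ErgodicAlong ω τ) [l.NeBot] {c : H}
    {s : H → H → ℂ} (hs : SLim μ R l Λ c s) (h0 : s c c = 0) (a : A) : Nm μ R K l Λ a c := by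
  intro V hV ε hε
  set D : ℝ := ‖a‖ ^ 2 * (‖c‖ ^ 2 + 1) + 1 with hD
  have hDp : 0 < D := by positivity
  set η : ℝ := ε ^ 2 / (16 * D) with hη
  have hηp : 0 < η := by positivity
  obtain ⟨k, hk, hkk⟩ := exists_ks S F hs h0 η hηp
  obtain ⟨n, hn⟩ := exists_nat_gt (1 / η)
  have hn0 : (0 : ℝ) < n := lt_trans (by positivity) hn
  have hn0' : 0 < n := by exact_mod_cast hn0
  set W : H →L[ℂ] H := (n : ℂ)⁻¹ • ∑ i ∈ Finset.range n, R.U (k i) with hWd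
  have hW : Good R K W := Good.avg n hn0' (fun i => R.U (k i)) fun i => Good.U _ (hk i)
  have hWV : ∀ x, W (V x) = V (W x) := by
    intro x
    simp [hWd, hV.comm S]
  let d : ℕ → ℕ → A := fun i j => star (τ (k i) a) * τ (k j) a
  let Q : G → ℂ := fun h => ((n : ℂ)⁻¹ * (n : ℂ)⁻¹) * ∑ i ∈ Finset.range n, ∑ j ∈ Finset.range n,
    ⟪R.U (k i) c, R.π (τ h (d i j)) (R.U (k j) c)⟫_ℂ
  have hQb : ∀ i ∈ Finset.range n, BM K (fun h => ∑ j ∈ Finset.range n,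
      ⟪R.U (k i) c, R.π (τ h (d i j)) (R.U (k j) c)⟫_ℂ) :=
    fun i _ => BM.sum _ fun j _ => R.bm_π S _ _ _
  have hQ : BM K Q := (BM.const _).mul (BM.sum _ hQb)
  have hQn : ∀ h, (Q h).re = ‖W (R.π (τ h a) c)‖ ^ 2 := by
    intro h
    have : ((‖W (R.π (τ h a) c)‖ ^ 2 : ℝ) : ℂ) = Q h := by
      have e := inner_self_eq_norm_sq_to_K (𝕜 := ℂ) (W (R.π (τ h a) c))
      have e2 : ((‖W (R.π (τ h a) c)‖ ^ 2 : ℝ) : ℂ) =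
        ⟪W (R.π (τ h a) c), W (R.π (τ h a) c)⟫_ℂ := by rw [e]; simp
      rw [e2, hWd]
      simp only [smul_apply, sum_apply, inner_smul_left, inner_smul_right, sum_inner, inner_sum,
        two_corr S, Q, d]
      simp [mul_assoc]
      left
      rw [← Finset.mul_sum, Finset.sum_comm]
    rw [← this, Complex.ofReal_re]
  have hlim : Tendsto (fun α => avg μ (Λ α) Q) l (𝓝 (((n : ℂ)⁻¹ * (n : ℂ)⁻¹) *
      ∑ i ∈ Finset.range n, ∑ j ∈ Finset.range n, ω (d i j) * ⟪R.U (k i) c, R.U (k j) c⟫_ℂ)) := by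
    have := (tendsto_finsetSum (Finset.range n) fun i _ => tendsto_finsetSum (Finset.range n)
      fun j _ => π_lim (R := R) S Fe hF F (d i j) (R.U (k i) c) (R.U (k j) c)).const_mul
        ((n : ℂ)⁻¹ * (n : ℂ)⁻¹)
    refine this.congr' ?_
    filter_upwards [F.ok S.hK] with α hα
    rw [avg_mul_const, avg_sum hα _ hQb]
    congr 1
    refine Finset.sum_congr rfl fun i _ => ?_
    rw [avg_sum hα _ fun j _ => R.bm_π S _ _ _]
  have hdn : ∀ i j, ‖ω (d i j)‖ ≤ ‖a‖ ^ 2 := by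
    intro i j
    refine (om_bound S R _).trans ((norm_mul_le _ _).trans_eq ?_)
    rw [norm_star, norm_tau, norm_tau, sq]
  have hin : ∀ i j, ‖⟪R.U (k i) c, R.U (k j) c⟫_ℂ‖ ≤ η + if i = j then ‖c‖ ^ 2 else 0 := by
    intro i j
    rcases lt_trichotomy i j with h | h | h
    · rw [if_neg h.ne, add_zero]; exact hkk i j h
    · subst h
      rw [if_pos rfl]
      have := norm_inner_le_norm (𝕜 := ℂ) (R.U (k i) c) (R.U (k i) c)
      rw [R.U_norm S] at this
      nlinarith
    · rw [if_neg h.ne', add_zero, norm_inner_symm]; exact hkk j i h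
  have hbd : ‖((n : ℂ)⁻¹ * (n : ℂ)⁻¹) *
      ∑ i ∈ Finset.range n, ∑ j ∈ Finset.range n, ω (d i j) * ⟪R.U (k i) c, R.U (k j) c⟫_ℂ‖
      < ε ^ 2 / 16 := by
    rw [norm_mul, norm_mul, norm_inv, Complex.norm_natCast]
    calc _ ≤ (n : ℝ)⁻¹ * (n : ℝ)⁻¹ * ∑ i ∈ Finset.range n, ∑ j ∈ Finset.range n,
          ‖a‖ ^ 2 * (η + if i = j then ‖c‖ ^ 2 else 0) := by
          gcongr
          refine norm_sum_le_of_le _ fun i _ => norm_sum_le_of_le _ fun j _ => ?_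
          rw [norm_mul]
          exact mul_le_mul (hdn i j) (hin i j) (norm_nonneg _) (by positivity)
      _ = ‖a‖ ^ 2 * (η + ‖c‖ ^ 2 * (n : ℝ)⁻¹) := by
          have : ∀ i ∈ Finset.range n, ∑ j ∈ Finset.range n,
              ‖a‖ ^ 2 * (η + if i = j then ‖c‖ ^ 2 else 0) = ‖a‖ ^ 2 * (n * η + ‖c‖ ^ 2) := by
            intro i hi
            rw [← Finset.mul_sum, Finset.sum_add_distrib, Finset.sum_ite_eq, if_pos hi]
            simp
          rw [Finset.sum_congr rfl this]
          simp
          field_simp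
      _ ≤ ‖a‖ ^ 2 * (η + ‖c‖ ^ 2 * η) := by
          gcongr
          rw [div_lt_iff₀ hηp] at hn
          rw [inv_le_iff_one_le_mul₀ hn0, mul_comm]
          exact hn.le
      _ = (‖a‖ ^ 2 * (‖c‖ ^ 2 + 1)) * η := by ring
      _ < D * η := by
          apply mul_lt_mul_of_pos_right _ hηp
          rw [hD]; linarith
      _ = ε ^ 2 / 16 := by rw [hη]; field_simp
  refine ⟨W, hW, _, (BM.const ((ε / 2 : ℝ) : ℂ)).add ((BM.const ((2 / ε : ℝ) : ℂ)).mul hQ),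
    fun h hh => ?_, ?_⟩
  · rw [Complex.add_re, Complex.re_ofReal_mul, Complex.ofReal_re, hQn, hWV]
    refine (hV.norm S _).trans ?_
    rw [DD, hW.DD S]
    refine (Pr_norm S _).trans ?_
    generalize ‖W (R.π (τ h a) c)‖ = t
    have : ε / 2 + 2 / ε * t ^ 2 - 2 * t = (2 / ε) * (t - ε / 2) ^ 2 := by field_simp; ring
    have : 0 ≤ (2 / ε) * (t - ε / 2) ^ 2 := by positivity
    linarith
  · filter_upwards [F.ok S.hK, hlim.norm.eventually_lt_const hbd] with α hα b
    rw [avg_add hα (BM.const _) ((BM.const _).mul hQ), avg_const hα, avg_mul_const,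
      Complex.add_re, Complex.re_ofReal_mul, Complex.ofReal_re]
    have := (Complex.re_le_norm (avg μ (Λ α) Q)).trans b.le
    calc _ ≤ ε / 2 + 2 / ε * (ε ^ 2 / 16) := by gcongr
      _ ≤ ε := by
        have : 2 / ε * (ε ^ 2 / 16) = ε / 8 := by field_simp; norm_num
        linarith

omit F in
theorem Nm_all [CompleteSpace H] (Fe : FolnerNetIn μ K) (hF : Fe.ErgodicAlong ω τ)
    (l : Ultrafilter ι) (F : Fol μ K l Λ) (a : A) (c : H) : Nm μ R K l Λ a c := by
  let M : Submodule ℂ H :=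
    { carrier := {x | Nm μ R K (l : Filter ι) Λ a x}
      zero_mem' := by
        intro V hV ε hε
        refine ⟨1, Good.one, fun _ => 0, BM.const _, fun h _ => by simp [DD], ?_⟩
        filter_upwards [F.ok S.hK] with α hα
        rw [avg_const hα]; exact hε.le
      add_mem' := fun hx hy => Nm_add S F a hx hy
      smul_mem' := fun k x hx => Nm_smul S F a k hx }
  have hcl : IsClosed (M : Set H) := by
    rw [← isSeqClosed_iff_isClosed]
    intro u x hu hux
    refine Nm_of_small S F a fun δ hδ => ?_
    obtain ⟨n, hn⟩ := ((Metric.tendsto_atTop.1 hux) δ hδ)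
    refine ⟨u n, hu n, ?_⟩
    rw [← dist_eq_norm, dist_comm]
    exact (hn n le_rfl).le
  have hcomp : CompleteSpace M := hcl.completeSpace_coe
  have hbot : Mᗮ = ⊥ := by
    rw [Submodule.eq_bot_iff]
    intro y hy
    obtain ⟨s, hs⟩ := exists_slim (R := R) S l F y
    obtain ⟨T, hT⟩ := SLim.exists_op S F hs
    have h1 : T y ∈ M := Nm_cpt S F Fe hF hs hT a
    have h2 : s y y = 0 := by
      rw [← hT]
      exact (Submodule.mem_orthogonal _ _).1 hy _ h1
    have h3 : y ∈ M := Nm_wm S F Fe hF hs h2 a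
    exact inner_self_eq_zero (𝕜 := ℂ).1 ((Submodule.mem_orthogonal _ _).1 hy _ h3)
  have : M = ⊤ := by rwa [Submodule.orthogonal_eq_bot_iff] at hbot
  have h4 : c ∈ M := by rw [this]; trivial
  exact h4

end wm


section fin
variable {R : Rep ω τ H} (S : Sys ω τ μ K)

theorem meas_inner {K Λ : Set G} (h : OK μ K Λ) {f : G → G → ℂ}
    (hf : Measurable fun p : K × K => f p.1 p.2) :
    Measurable fun y : K => avg μ Λ (fun g => f g y) := by
  haveI : IsFiniteMeasure (μ.restrict Λ) := ⟨by simpa using h.fin⟩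
  have hmap : ((μ.restrict Λ).comap ((↑) : K → G)).map ((↑) : K → G) = μ.restrict Λ := by
    rw [map_comap_subtype_coe h.hK, Measure.restrict_restrict h.hK,
      Set.inter_eq_right.2 h.sub]
  haveI : IsFiniteMeasure ((μ.restrict Λ).comap ((↑) : K → G)) := by
    constructor
    rw [comap_subtype_coe_apply h.hK]
    exact measure_lt_top _ _
  have e : ∀ φ : G → ℂ, ∫ g in Λ, φ g ∂μ =
      ∫ g : K, φ g ∂((μ.restrict Λ).comap ((↑) : K → G)) := by
    intro φ
    conv_lhs => rw [← hmap]
    exact (MeasurableEmbedding.subtype_coe h.hK).integral_map _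
  unfold avg
  simp only [e]
  have := (hf.stronglyMeasurable.integral_prod_left'
    (μ := (μ.restrict Λ).comap ((↑) : K → G))).measurable
  exact this.const_smul (M := ℝ) _

include S

theorem norm_j (R : Rep ω τ H) (d : A) : ‖R.j d‖ ≤ ‖d‖ := by
  have e : R.j d = R.π d R.Om := by rw [Rep.Om, R.π_j, mul_one]
  rw [e]
  refine (R.norm_π _ _).trans_eq ?_
  rw [R.norm_om S, mul_one]

theorem core_lim [CompleteSpace H] (R : Rep ω τ H) (Fe : FolnerNetIn μ K)
    (hF : Fe.ErgodicAlong ω τ) {ι : Type*} (l : Ultrafilter ι) {Λ1 Λ2 : ι → Set G}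
    (F1 : Fol μ K l Λ1) (F2 : Fol μ K l Λ2) (a₁ a₂ a₃ a₄ a₅ : A)
    (hcm : Measurable fun g : K => ‖a₂ * τ (g : G) a₃ - τ (g : G) a₃ * a₂‖)
    (hm5 : Measurable fun p : K × K =>
      ω (τ (p.2 : G) a₁ * τ (p.1 : G) a₂ * τ ((p.1 : G) * (p.2 : G)) a₃ *
          τ (p.1 : G) a₄ * τ (p.2 : G) a₅))
    (hAA : Tendsto (fun α => (μ (Λ1 α)).toReal⁻¹ *
      ∫ g in Λ1 α, ‖a₂ * τ g a₃ - τ g a₃ * a₂‖ ∂μ) l (𝓝 0)) :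
    Tendsto (fun α => avg μ (Λ1 α) fun h => avg μ (Λ2 α) fun g =>
      ω (τ h a₁ * τ g a₂ * τ (g * h) a₃ * τ g a₄ * τ h a₅)) l
      (𝓝 (ω (a₅ * a₁) * ω a₃ * ω (a₂ * a₄))) := by
  set b := a₅ * a₁ with hb
  set c := a₂ * a₄ with hc
  set f : G → G → ℂ := fun g h => ω (τ h a₁ * τ g a₂ * τ (g * h) a₃ * τ g a₄ * τ h a₅) with hf
  have f1 : ∀ g h, f g h = ω (τ h b * τ g (a₂ * τ h a₃ * a₄)) := by
    intro g h
    simp only [hf, hb]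
    rw [S.tracial, map_mul (τ h), map_mul (τ g), map_mul (τ g), S.hτ_mul]
    simp only [mul_assoc]
  have f2 : ∀ g h d, ω (τ h b * τ g d) = ⟪R.j (star (τ h b)), R.U g (R.j d)⟫_ℂ := by
    intro g h d
    rw [R.U_j, R.j_inner, star_star]
  have hy : ∀ h, ‖R.j (star (τ h b))‖ ≤ ‖b‖ := by
    intro h
    refine (norm_j S R _).trans_eq ?_
    rw [norm_star, norm_tau]
  have hX : ∀ h, ‖a₂ * τ h a₃ * a₄‖ ≤ ‖a₂‖ * ‖a₃‖ * ‖a₄‖ := by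
    intro h
    refine (norm_mul_le _ _).trans ?_
    gcongr
    exact (norm_mul_le _ _).trans_eq (by rw [norm_tau])
  have hfb : ∀ g h, ‖f g h‖ ≤ ‖b‖ * (‖a₂‖ * ‖a₃‖ * ‖a₄‖) := by
    intro g h
    rw [f1, f2]
    refine (norm_inner_le_norm _ _).trans ?_
    rw [R.U_norm S]
    exact mul_le_mul (hy h) ((norm_j S R _).trans (hX h)) (norm_nonneg _) (norm_nonneg _)
  have hfBM : ∀ h, BM K (fun g => f g h) := by
    intro h
    simp only [f1, f2]
    exact R.bm_U S _ _
  let x : G → H := fun h => R.π (τ h a₃) (R.j c)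
  let κ : G → ℂ := fun h => ((‖a₂ * τ h a₃ - τ h a₃ * a₂‖ : ℝ) : ℂ)
  have hκ : BM K κ := by
    refine ⟨Complex.measurable_ofReal.comp hcm, 2 * (‖a₂‖ * ‖a₃‖), fun h => ?_⟩
    simp only [κ, Complex.norm_real, norm_norm]
    refine (norm_sub_le _ _).trans ?_
    have h1 := norm_mul_le a₂ (τ h a₃)
    have h2 := norm_mul_le (τ h a₃) a₂
    rw [norm_tau] at h1 h2
    linarith
  have hκlim : Tendsto (fun α => (avg μ (Λ1 α) κ).re) l (𝓝 0) := by
    refine hAA.congr fun α => ?_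
    simp only [avg, κ]
    rw [integral_complex_ofReal]
    simp
  have hxn : ∀ h, ‖x h‖ ≤ ‖a₃‖ * ‖R.j c‖ := by
    intro h
    refine (R.norm_π _ _).trans_eq ?_
    rw [norm_tau]
  have hlim2 : Tendsto (fun α => avg μ (Λ1 α) (fun h => ω b * ⟪R.Om, x h⟫_ℂ)) l
      (𝓝 (ω b * ω a₃ * ω c)) := by
    have := (π_lim (R := R) S Fe hF F1 a₃ R.Om (R.j c)).const_mul (ω b)
    rw [R.om_inner, ← mul_assoc] at this
    simp only [avg_mul_const]
    exact this
  have hdiff : Tendsto (fun α => (avg μ (Λ1 α) fun h => avg μ (Λ2 α) fun g => f g h) -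
      avg μ (Λ1 α) (fun h => ω b * ⟪R.Om, x h⟫_ℂ)) l (𝓝 0) := by
    rw [Metric.tendsto_nhds]
    intro ε hε
    obtain ⟨W, hW, q, hq, hq1, hq2⟩ := Nm_all (R := R) S Fe hF l F1 a₃ (R.j c) 1 Good.one
      (ε / (4 * (‖b‖ + 1))) (by positivity)
    set B : ℝ := ‖b‖ * (‖a₃‖ * ‖R.j c‖) with hB
    have hB0 : 0 ≤ B := by positivity
    have hk1 : ∀ᶠ α in (l : Filter ι), (avg μ (Λ1 α) κ).re ≤ ε / (4 * (‖b‖ * ‖a₄‖ + 1)) :=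
      hκlim.eventually_le_const (by positivity)
    filter_upwards [F1.ok S.hK, F2.ok S.hK, hq2, hk1,
      hW.asym S F2 (ε / (4 * (B + 1))) (by positivity)] with α o1 o2 e1 e2 e3
    rw [dist_zero_right]
    have hH : BM K (fun h => avg μ (Λ2 α) fun g => f g h) :=
      ⟨meas_inner o2 hm5, _, fun h => norm_avg_le o2 fun g _ => hfb g h⟩
    rw [← avg_sub o1 hH ((BM.const _).mul (R.bm_π S _ _ _))]
    have hqq : BM K (fun h => ((ε / 4 : ℝ) : ℂ) + (((‖b‖ * ‖a₄‖ : ℝ) : ℂ) * κ h +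
        ((‖b‖ : ℝ) : ℂ) * q h)) :=
      (BM.const _).add (((BM.const _).mul hκ).add ((BM.const _).mul hq))
    have main := norm_avg_le_re o1 (f := fun h => (avg μ (Λ2 α) fun g => f g h) -
      ω b * ⟪R.Om, x h⟫_ℂ) hqq ?_
    · refine main.trans_lt ?_
      rw [avg_add o1 (BM.const _) (((BM.const _).mul hκ).add ((BM.const _).mul hq)),
        avg_add o1 ((BM.const _).mul hκ) ((BM.const _).mul hq), avg_const o1, avg_mul_const,
        avg_mul_const, Complex.add_re, Complex.add_re, Complex.re_ofReal_mul,
        Complex.re_ofReal_mul, Complex.ofReal_re]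
      have i1 : ‖b‖ * ‖a₄‖ * (avg μ (Λ1 α) κ).re ≤ ε / 4 := by
        calc _ ≤ ‖b‖ * ‖a₄‖ * (ε / (4 * (‖b‖ * ‖a₄‖ + 1))) := by gcongr
          _ ≤ (‖b‖ * ‖a₄‖ + 1) * (ε / (4 * (‖b‖ * ‖a₄‖ + 1))) := by gcongr; linarith
          _ = ε / 4 := by field_simp
      have i2 : ‖b‖ * (avg μ (Λ1 α) q).re ≤ ε / 4 := by
        calc _ ≤ ‖b‖ * (ε / (4 * (‖b‖ + 1))) := by gcongr
          _ ≤ (‖b‖ + 1) * (ε / (4 * (‖b‖ + 1))) := by gcongr; linarith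
          _ = ε / 4 := by field_simp
      linarith
    · intro h hh
      have hhK := o1.sub hh
      rw [Complex.add_re, Complex.add_re, Complex.re_ofReal_mul, Complex.re_ofReal_mul,
        Complex.ofReal_re]
      set y := R.j (star (τ h b)) with hyd
      have t1 : ‖avg μ (Λ2 α) (fun g => f g h) - avg μ (Λ2 α) (fun g => ⟪y, R.U g (x h)⟫_ℂ)‖ ≤
          ‖b‖ * ‖a₄‖ * (κ h).re := by
        rw [← avg_sub o2 (hfBM h) (R.bm_U S _ _)]
        refine norm_avg_le o2 fun g _ => ?_
        have ex : x h = R.j (τ h a₃ * c) := R.π_j _ _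
        have eX : a₂ * τ h a₃ * a₄ - τ h a₃ * c = (a₂ * τ h a₃ - τ h a₃ * a₂) * a₄ := by
          rw [hc, sub_mul]; simp only [mul_assoc]
        rw [f1, f2, ex, ← inner_sub_right, ← map_sub, ← map_sub, eX]
        refine (norm_inner_le_norm _ _).trans ?_
        rw [R.U_norm S]
        simp only [κ, Complex.ofReal_re]
        calc _ ≤ ‖b‖ * (‖a₂ * τ h a₃ - τ h a₃ * a₂‖ * ‖a₄‖) :=
              mul_le_mul (hy h) ((norm_j S R _).trans (norm_mul_le _ _)) (norm_nonneg _)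
                (norm_nonneg _)
          _ = _ := by ring
      have t2 := e3 (x h) y
      have t2' : ε / (4 * (B + 1)) * (‖y‖ * ‖x h‖) ≤ ε / 4 := by
        calc _ ≤ ε / (4 * (B + 1)) * (B + 1) := by
              gcongr
              have : ‖y‖ * ‖x h‖ ≤ B :=
                mul_le_mul (hy h) (hxn h) (norm_nonneg _) (norm_nonneg _)
              linarith
          _ = ε / 4 := by field_simp
      have t3 : ‖avg μ (Λ2 α) (fun g => ⟪y, R.U g (W (x h))⟫_ℂ) - ω b * ⟪R.Om, x h⟫_ℂ‖ ≤
          ‖b‖ * (q h).re := by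
        rw [← avg_const o2 (ω b * ⟪R.Om, x h⟫_ℂ), ← avg_sub o2 (R.bm_U S _ _) (BM.const _)]
        refine norm_avg_le o2 fun g _ => ?_
        have hyo : ⟪y, R.Om⟫_ℂ = ω b := by
          rw [hyd, R.inner_om, star_star, S.hω_inv]
        have e : ⟪y, R.U g (W (x h))⟫_ℂ - ω b * ⟪R.Om, x h⟫_ℂ =
            ⟪y, R.U g (W (DD R a₃ h (R.j c)))⟫_ℂ := by
          simp only [DD, x, map_sub, map_smul, hW.om S, R.U_om S, inner_sub_right,
            inner_smul_right, hyo]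
          ring
        rw [e]
        refine (norm_inner_le_norm _ _).trans ?_
        rw [R.U_norm S]
        exact mul_le_mul (hy h) (hq1 h hhK) (norm_nonneg _) (norm_nonneg _)
      have t4 := norm_sub_le_norm_sub_add_norm_sub (avg μ (Λ2 α) (fun g => f g h))
        (avg μ (Λ2 α) (fun g => ⟪y, R.U g (x h)⟫_ℂ)) (ω b * ⟪R.Om, x h⟫_ℂ)
      have t5 := norm_sub_le_norm_sub_add_norm_sub (avg μ (Λ2 α) (fun g => ⟪y, R.U g (x h)⟫_ℂ))
        (avg μ (Λ2 α) (fun g => ⟪y, R.U g (W (x h))⟫_ℂ)) (ω b * ⟪R.Om, x h⟫_ℂ)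
      linarith
  have := hdiff.add hlim2
  simpa using this

end fin

end core
end P432

/-- **Proposition 4.3(2).** If moreover `(A, ω, τ, K)` is asymptotically abelian with respect
to `(Λ1 α)` and `ω` is tracial, then
`lim_α M_{α,e,e}(ω (τ_h(a₁) τ_g(a₂) τ_{gh}(a₃) τ_g(a₄) τ_h(a₅))) = ω(a₅a₁) ω(a₃) ω(a₂a₄)`. -/
theorem prop_4_3_2
    -- a unital C*-algebra A
    {A : Type*} [NormedRing A] [StarRing A] [CStarRing A] [NormedAlgebra ℂ A]
    [CompleteSpace A] [StarModule ℂ A]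
    -- a tracial state ω on A
    (ω : A →ₗ[ℂ] ℂ) (hω_pos : ∀ a : A, 0 ≤ ω (star a * a)) (hω_one : ω 1 = 1)
    (hω_tracial : ∀ a b : A, ω (a * b) = ω (b * a))
    -- a right invariant measure group (G, Σ, μ) with G abelian
    {G : Type*} [CommGroup G] [MeasurableSpace G] (μ : Measure G)
    (hTrans : ∀ (V : Set G) (g : G), MeasurableSet V → MeasurableSet (V * {g}))
    (hRight : ∀ (V : Set G) (g : G), MeasurableSet V → μ (V * {g}) = μ V)
    (hInvMeas : Measurable (fun g : G => g⁻¹))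
    (hInvInv : ∀ V : Set G, MeasurableSet V → μ V⁻¹ = μ V)
    -- K is a Følner semigroup in G
    (K : Set G) (hKmeas : MeasurableSet K) (hKmul : ∀ g ∈ K, ∀ h ∈ K, g * h ∈ K)
    -- the action τ, making (A, ω, τ, K) a C*-dynamical system
    (τ : G → A ≃⋆ₐ[ℂ] A)
    (hτ_one : ∀ a : A, τ 1 a = a)
    (hτ_mul : ∀ g h a, τ g (τ h a) = τ (g * h) a)
    (hω_inv : ∀ g a, ω (τ g a) = ω a)
    (hτ_meas : ∀ a b : A, Measurable fun g : K => ω (a * τ (g : G) b))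
    -- g ↦ ‖[a, τ_g(b)]‖ is Σ|_K-measurable
    (hcomm_meas : ∀ a b : A, Measurable fun g : K => ‖a * τ (g : G) b - τ (g : G) b * a‖)
    -- the system is ergodic (w.r.t. some, equivalently every, Følner net in K)
    (hErg : ∃ F : FolnerNetIn μ K, F.ErgodicAlong ω τ)
    -- the measurability hypothesis: (g,h) ↦ ω(τ_h(a₁) τ_g(a₂) τ_{gh}(a₃) τ_g(a₄) τ_h(a₅))
    (hmeas5 : ∀ a₁ a₂ a₃ a₄ a₅ : A, Measurable fun p : K × K =>
      ω (τ (p.2 : G) a₁ * τ (p.1 : G) a₂ * τ ((p.1 : G) * (p.2 : G)) a₃ *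
          τ (p.1 : G) a₄ * τ (p.2 : G) a₅))
    -- Følner nets (Λ1 α), (Λ2 α) in K indexed by the same directed set
    {ι : Type*} [Preorder ι] [Nonempty ι] [IsDirected ι (· ≤ ·)]
    (Λ1 Λ2 : ι → Set G)
    (hΛ1 : ∀ α, MeasurableSet (Λ1 α) ∧ Λ1 α ⊆ K)
    (hΛ1fin : ∀ᶠ α in atTop, 0 < μ (Λ1 α) ∧ μ (Λ1 α) < ⊤)
    (hΛ1folner : ∀ g ∈ K, Tendsto
      (fun α => (μ (symmDiff (Λ1 α) (Λ1 α * {g}))).toReal / (μ (Λ1 α)).toReal) atTop (𝓝 0))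
    (hΛ2 : ∀ α, MeasurableSet (Λ2 α) ∧ Λ2 α ⊆ K)
    (hΛ2fin : ∀ᶠ α in atTop, 0 < μ (Λ2 α) ∧ μ (Λ2 α) < ⊤)
    (hΛ2folner : ∀ g ∈ K, Tendsto
      (fun α => (μ (symmDiff (Λ2 α) (Λ2 α * {g}))).toReal / (μ (Λ2 α)).toReal) atTop (𝓝 0))
    -- the system is asymptotically abelian with respect to (Λ1 α)
    (hAA : ∀ a b : A, Tendsto
      (fun α => (μ (Λ1 α)).toReal⁻¹ * ∫ g in Λ1 α, ‖a * τ g b - τ g b * a‖ ∂μ)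
      atTop (𝓝 0)) :
    -- conclusion
    ∀ a₁ a₂ a₃ a₄ a₅ : A,
      Tendsto (fun α => ((μ (Λ1 α)).toReal * (μ (Λ2 α)).toReal)⁻¹ •
          ∫ h in Λ1 α, ∫ g in Λ2 α,
            ω (τ h a₁ * τ g a₂ * τ (g * h) a₃ * τ g a₄ * τ h a₅) ∂μ ∂μ)
        atTop (𝓝 (ω (a₅ * a₁) * ω a₃ * ω (a₂ * a₄))) := by
  intro a₁ a₂ a₃ a₄ a₅
  obtain ⟨Fe, hF⟩ := hErg
  have S : P432.Sys ω τ μ K := ⟨hω_one, hω_tracial, hTrans, hRight, hKmeas, hKmul, hτ_one, hτ_mul,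
    hω_inv, hτ_meas⟩
  obtain ⟨H, i1, i2, i3, ⟨R⟩⟩ := P432.exists_rep ω hω_pos τ hω_inv
  rw [tendsto_iff_ultrafilter]
  intro l hl
  have F1 : P432.Fol μ K (l : Filter ι) Λ1 :=
    ⟨hΛ1, hl hΛ1fin, fun g hg => (hΛ1folner g hg).mono_left hl⟩
  have F2 : P432.Fol μ K (l : Filter ι) Λ2 :=
    ⟨hΛ2, hl hΛ2fin, fun g hg => (hΛ2folner g hg).mono_left hl⟩
  have := P432.core_lim S R Fe hF l F1 F2 a₁ a₂ a₃ a₄ a₅ (hcomm_meas a₂ a₃)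
    (hmeas5 a₁ a₂ a₃ a₄ a₅) ((hAA a₂ a₃).mono_left hl)
  refine this.congr fun α => ?_
  unfold P432.avg
  rw [integral_smul, smul_smul, mul_inv]
end

section
/- Let (A,ω,τ,K) be an ergodic C*-dynamical system which is uniformly asymptotically abelian with respect to a Følner net (Λ_{1α}) in K, with ω tracial, and let (Λ_{2α}) be a Følner net in K over the same directed set. If (g,h) ↦ ω(τ_h(a₁) τ_g(a₂) τ_{gh}(a₃) τ_g(a₄) τ_h(a₅)) is (Σ|_K × Σ|_K)-measurable for all a₁,...,a₅ ∈ A, then lim_α sup_{g₁,g₂ ∈ K} | M_{α,g₁,g₂}( ω(τ_h(a₁) τ_g(a₂) τ_{gh}(a₃) τ_g(a₄) τ_h(a₅)) ) − ω(a₅a₁) ω(a₃) ω(a₂a₄) | = 0 for all a₁, a₂, a₃, a₄, a₅ ∈ A. -/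
open Filter Topology
open scoped Pointwise ComplexOrder

open MeasureTheory

theorem aux_gns.{u} {A : Type u} [NormedRing A] [StarRing A] [CStarRing A] [NormedAlgebra ℂ A]
    [CompleteSpace A] [StarModule ℂ A]
    (ω : A →ₗ[ℂ] ℂ) (hω_pos : ∀ a : A, 0 ≤ ω (star a * a)) (hω_one : ω 1 = 1) :
    ∃ (E : Type u) (_ : SeminormedAddCommGroup E) (_ : InnerProductSpace ℂ E) (ι : A →ₗ[ℂ] E),
      (∀ x y, inner ℂ (ι x) (ι y) = ω (star x * y)) ∧ ∀ x, ‖ι x‖ ≤ ‖x‖ := by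
  let _ : CStarAlgebra A := {}
  let _ : PartialOrder A := CStarAlgebra.spectralOrder A
  have _ : StarOrderedRing A := CStarAlgebra.spectralOrderedRing A
  let f : A →ₚ[ℂ] ℂ := PositiveLinearMap.mk₀ ω (by
    intro x hx
    obtain ⟨b, rfl⟩ := CStarAlgebra.nonneg_iff_eq_star_mul_self.mp hx
    exact hω_pos b)
  refine ⟨f.PreGNS, inferInstance, inferInstance, f.toPreGNS.toLinearMap, ?_, ?_⟩
  · intro x y
    exact f.preGNS_inner_def _ _
  · intro x
    have h1 : ‖f.toPreGNS 1‖ = 1 := by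
      rw [PositiveLinearMap.preGNS_norm_def]
      have : f (star (1 : A) * 1) = 1 := by
        rw [star_one, one_mul]; exact hω_one
      simp only [PositiveLinearMap.ofPreGNS_toPreGNS]
      rw [this]; simp
    have h2 : ‖f.leftMulMapPreGNS x‖ ≤ ‖x‖ := LinearMap.mkContinuous_norm_le _ (norm_nonneg _) _
    have h3 := (f.leftMulMapPreGNS x).le_of_opNorm_le h2 (f.toPreGNS 1)
    rw [h1, mul_one] at h3
    have h4 : f.leftMulMapPreGNS x (f.toPreGNS 1) = f.toPreGNS x := by
      simp
    rw [h4] at h3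
    exact h3

theorem aux_approx {E : Type*} [SeminormedAddCommGroup E] [InnerProductSpace ℂ E]
    (N : Submodule ℂ E) (c : E)
    (H : ∀ η > (0:ℝ), ∀ w, c - w ∈ N → (∀ n ∈ N, ‖inner ℂ w n‖ ≤ η * ‖n‖) → ‖w‖ ≤ 2 * η)
    (ε : ℝ) (hε : 0 < ε) : ∃ n ∈ N, ‖c - n‖ ≤ ε := by
  set δ := Metric.infDist c (N : Set E) with hδ
  have hne : (N : Set E).Nonempty := ⟨0, N.zero_mem⟩
  have hδ0 : 0 ≤ δ := Metric.infDist_nonneg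
  have hη : 0 < ε / 2 := by positivity
  have hlt : δ < √(δ ^ 2 + (ε / 2) ^ 2) := by
    apply Real.lt_sqrt_of_sq_lt; nlinarith [sq_pos_of_pos hη]
  obtain ⟨n0, hn0, hn0'⟩ := (Metric.infDist_lt_iff hne).1 hlt
  rw [dist_eq_norm] at hn0'
  have hw : ‖c - n0‖ ^ 2 < δ ^ 2 + (ε / 2) ^ 2 := by
    rwa [Real.lt_sqrt (norm_nonneg _)] at hn0'
  refine ⟨n0, hn0, ?_⟩
  have := H (ε / 2) hη (c - n0) (by simpa using hn0) ?_
  · linarith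
  intro n hn
  set w := c - n0 with hwdef
  by_cases hz : ‖n‖ = 0
  · have := norm_inner_le_norm (𝕜 := ℂ) w n
    rw [hz] at this ⊢; simpa using this
  have hnpos : 0 < ‖n‖ := lt_of_le_of_ne (norm_nonneg _) (Ne.symm hz)
  set t : ℂ := inner ℂ n w / (‖n‖ : ℂ) ^ 2 with ht
  have hge : δ ≤ ‖w - t • n‖ := by
    have := Metric.infDist_le_dist_of_mem (x := c) (s := (N : Set E)) (y := n0 + t • n)
      (N.add_mem hn0 (N.smul_mem t hn))
    rw [dist_eq_norm] at this
    rwa [hwdef, sub_sub]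
  have hsq : ‖w - t • n‖ ^ 2 = ‖w‖ ^ 2 - ‖inner ℂ w n‖ ^ 2 / ‖n‖ ^ 2 := by
    rw [norm_sub_sq (𝕜 := ℂ), norm_smul, inner_smul_right, ht]
    have e1 : (inner ℂ n w / (‖n‖ : ℂ) ^ 2) * inner ℂ w n
        = ((‖inner ℂ w n‖ ^ 2 / ‖n‖ ^ 2 : ℝ) : ℂ) := by
      rw [← inner_conj_symm n w, div_mul_eq_mul_div, Complex.conj_mul']
      push_cast; rfl
    rw [e1]
    have e2 : ‖inner ℂ n w / (‖n‖ : ℂ) ^ 2‖ = ‖inner ℂ w n‖ / ‖n‖ ^ 2 := by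
      rw [norm_div, norm_inner_symm]; simp
    rw [e2]
    simp only [RCLike.re_to_complex, Complex.ofReal_re]
    field_simp
    ring
  have h1 : δ ^ 2 ≤ ‖w - t • n‖ ^ 2 := by gcongr
  have h2 : ‖inner ℂ w n‖ ^ 2 / ‖n‖ ^ 2 ≤ (ε / 2) ^ 2 := by linarith
  rw [div_le_iff₀ (by positivity), ← mul_pow] at h2
  exact le_of_sq_le_sq h2 (by positivity)

theorem aux_int {G : Type*} [MeasurableSpace G] {μ : Measure G} {K : Set G}
    (hK : MeasurableSet K) {f : G → ℂ} (hf : Measurable fun g : K => f g)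
    {S : Set G} (hSK : S ⊆ K) (hS : MeasurableSet S) (hfin : μ S < ⊤) {C : ℝ}
    (hC : ∀ g ∈ S, ‖f g‖ ≤ C) : IntegrableOn f S μ := by
  have h1 : AEMeasurable f (μ.restrict S) :=
    (aemeasurable_restrict_of_measurable_subtype hK hf).mono_measure
      (Measure.restrict_mono hSK le_rfl)
  have : IsFiniteMeasure (μ.restrict S) := ⟨by rwa [Measure.restrict_apply_univ]⟩
  exact Integrable.of_bound h1.aestronglyMeasurable C
    ((ae_restrict_iff' hS).2 (Eventually.of_forall hC))

theorem aux_avg {G : Type*} [MeasurableSpace G] {μ : Measure G} {f : G → ℂ}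
    {S : Set G} (h0 : 0 < μ S) (hfin : μ S < ⊤)
    (hf : IntegrableOn f S μ) {C : ℝ} {z : ℂ}
    (hC : ∀ g ∈ S, ‖f g - z‖ ≤ C) : ‖(μ S).toReal⁻¹ • ∫ g in S, f g ∂μ - z‖ ≤ C := by
  have hm : 0 < (μ S).toReal := ENNReal.toReal_pos h0.ne' hfin.ne
  have hz : IntegrableOn (fun _ => z) S μ := integrableOn_const hfin.ne
  have h1 : ∫ g in S, (f g - z) ∂μ = ∫ g in S, f g ∂μ - (μ S).toReal • z := by
    rw [integral_sub hf hz, setIntegral_const]; rfl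
  have h2 : ‖∫ g in S, (f g - z) ∂μ‖ ≤ C * μ.real S :=
    norm_setIntegral_le_of_norm_le_const hfin hC
  have h3 : (μ S).toReal⁻¹ • ∫ g in S, f g ∂μ - z
      = (μ S).toReal⁻¹ • ∫ g in S, (f g - z) ∂μ := by
    rw [h1, smul_sub, smul_smul, inv_mul_cancel₀ hm.ne', one_smul]
  rw [h3, norm_smul, norm_inv, Real.norm_of_nonneg hm.le, inv_mul_le_iff₀ hm]
  rw [mul_comm]; exact h2

theorem aux_shift {G : Type*} [CommGroup G] [MeasurableSpace G] {μ : Measure G}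
    (hTrans : ∀ (V : Set G) (g : G), MeasurableSet V → MeasurableSet (V * {g}))
    (hRight : ∀ (V : Set G) (g : G), MeasurableSet V → μ (V * {g}) = μ V)
    (f : G → ℂ) (S : Set G) (k : G) :
    ∫ g in S * {k}, f g ∂μ = ∫ g in S, f (g * k) ∂μ := by
  have hpre : ∀ (V : Set G) (k : G), (fun g => g * k) ⁻¹' V = V * {k⁻¹} := by
    intro V k; ext x; simp
  have hm : ∀ k : G, Measurable fun g : G => g * k := by
    intro k V hV; rw [hpre]; exact hTrans _ _ hV
  let e : G ≃ᵐ G :=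
    { toEquiv := Equiv.mulRight k
      measurable_toFun := hm k
      measurable_invFun := by
        have := hm k⁻¹
        exact this }
  have hp : MeasurePreserving (fun g : G => g * k) μ μ := by
    refine ⟨hm k, ?_⟩
    ext V hV
    rw [Measure.map_apply (hm k) hV, hpre, hRight _ _ hV]
  have hS : S * {k} = (fun g => g * k) '' S := by simp
  rw [hS]
  exact hp.setIntegral_image_emb e.measurableEmbedding f S

theorem aux_diff {G : Type*} [MeasurableSpace G] {μ : Measure G}
    {f : G → ℂ} {S T : Set G} (hS : MeasurableSet S) (hT : MeasurableSet T)
    (hSf : μ S < ⊤) (hTf : μ T < ⊤) (hfS : IntegrableOn f S μ) (hfT : IntegrableOn f T μ)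
    {C : ℝ} (hC : ∀ g, ‖f g‖ ≤ C) :
    ‖∫ g in S, f g ∂μ - ∫ g in T, f g ∂μ‖ ≤ C * (μ (symmDiff S T)).toReal := by
  have h1 := integral_inter_add_sdiff hT hfS
  have h2 := integral_inter_add_sdiff hS hfT
  rw [Set.inter_comm] at h2
  rw [← h1, ← h2, add_sub_add_left_eq_sub]
  have hSd : μ (S \ T) < ⊤ := (measure_mono Set.sdiff_subset).trans_lt hSf
  have hTd : μ (T \ S) < ⊤ := (measure_mono Set.sdiff_subset).trans_lt hTf
  have h3 := norm_setIntegral_le_of_norm_le_const hSd (f := f) (fun x _ => hC x)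
  have h4 := norm_setIntegral_le_of_norm_le_const hTd (f := f) (fun x _ => hC x)
  have h5 : (μ (symmDiff S T)).toReal = μ.real (S \ T) + μ.real (T \ S) := by
    rw [measure_symmDiff_eq hS.nullMeasurableSet hT.nullMeasurableSet,
      ENNReal.toReal_add hSd.ne hTd.ne]; rfl
  rw [h5, mul_add]
  exact (norm_sub_le _ _).trans (add_le_add h3 h4)

theorem aux_bound {A : Type*} [NormedRing A] [StarRing A] [CStarRing A] [NormedAlgebra ℂ A]
    [CompleteSpace A] [StarModule ℂ A]
    (ω : A →ₗ[ℂ] ℂ) (hω_pos : ∀ a : A, 0 ≤ ω (star a * a)) (hω_one : ω 1 = 1) (x : A) :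
    ‖ω x‖ ≤ ‖x‖ := by
  obtain ⟨E, _, _, ι, h1, h2⟩ := aux_gns ω hω_pos hω_one
  have h3 : ‖ι 1‖ ^ 2 = 1 := by
    have : ((‖ι 1‖ ^ 2 : ℝ) : ℂ) = ω (star 1 * 1) := by
      rw [← h1, inner_self_eq_norm_sq_to_K]; norm_cast
    rw [star_one, one_mul, hω_one] at this
    exact_mod_cast this
  have h4 : ‖ι 1‖ = 1 := by
    have := norm_nonneg (ι 1); nlinarith
  have h5 := norm_inner_le_norm (𝕜 := ℂ) (ι 1) (ι x)
  rw [h1, h4] at h5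
  simp only [star_one, one_mul] at h5
  exact h5.trans (h2 x)

theorem aux_norm {A : Type*} [NormedRing A] [StarRing A] [CStarRing A] [NormedAlgebra ℂ A]
    [CompleteSpace A] [StarModule ℂ A] (φ : A ≃⋆ₐ[ℂ] A) (x : A) : ‖φ x‖ ≤ ‖x‖ := by
  let _ : CStarAlgebra A := {}
  exact NonUnitalStarAlgHom.norm_apply_le φ x

theorem aux_cob
    {A : Type*} [NormedRing A] [StarRing A] [CStarRing A] [NormedAlgebra ℂ A]
    [CompleteSpace A] [StarModule ℂ A]
    (ω : A →ₗ[ℂ] ℂ) (hω_pos : ∀ a : A, 0 ≤ ω (star a * a)) (hω_one : ω 1 = 1)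
    (hω_tracial : ∀ a b : A, ω (a * b) = ω (b * a))
    {G : Type*} [CommGroup G] [MeasurableSpace G] (μ : Measure G)
    (K : Set G) (hKmeas : MeasurableSet K)
    (τ : G → A ≃⋆ₐ[ℂ] A)
    (hτ_one : ∀ a : A, τ 1 a = a)
    (hτ_mul : ∀ g h a, τ g (τ h a) = τ (g * h) a)
    (hω_inv : ∀ g a, ω (τ g a) = ω a)
    (hτ_meas : ∀ a b : A, Measurable fun g : K => ω (a * τ (g : G) b))
    (hErg : ∃ F : FolnerNetIn μ K, F.ErgodicAlong ω τ)
    (c : A) (hc : ω c = 0) (ε : ℝ) (hε : 0 < ε) :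
    ∃ n ∈ Submodule.span ℂ {u : A | ∃ k ∈ K, ∃ v, u = v - τ k⁻¹ v},
      ∀ y, ‖ω ((c - n) * y)‖ ≤ ε * ‖y‖ := by
  obtain ⟨F, hF⟩ := hErg
  obtain ⟨E, _, _, ι, h1, h2⟩ := aux_gns ω hω_pos hω_one
  set N := Submodule.span ℂ {u : A | ∃ k ∈ K, ∃ v, u = v - τ k⁻¹ v} with hN
  have hnorm : ∀ x, ((‖ι x‖ ^ 2 : ℝ) : ℂ) = ω (star x * x) := by
    intro x
    rw [← h1, inner_self_eq_norm_sq_to_K]; norm_cast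
  have hisom : ∀ g x, ‖ι (τ g x)‖ = ‖ι x‖ := by
    intro g x
    have h3 : ‖ι (τ g x)‖ ^ 2 = ‖ι x‖ ^ 2 := by
      have : ((‖ι (τ g x)‖ ^ 2 : ℝ) : ℂ) = ((‖ι x‖ ^ 2 : ℝ) : ℂ) := by
        rw [hnorm, hnorm, ← map_star, ← map_mul, hω_inv]
      exact_mod_cast this
    exact (sq_eq_sq₀ (norm_nonneg _) (norm_nonneg _)).1 h3
  have hN0 : ∀ n ∈ N, ω n = 0 := by
    intro n hn
    induction hn using Submodule.span_induction with
    | mem x hx =>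
      obtain ⟨k, _, v, rfl⟩ := hx
      rw [map_sub, hω_inv, sub_self]
    | zero => simp
    | add x y _ _ hx hy => rw [map_add, hx, hy, add_zero]
    | smul a x _ hx => rw [map_smul, hx, smul_zero]
  obtain ⟨n', hn', hnε⟩ := aux_approx (N.map ι) (ι c) (by
    intro η hη w hw hwn
    obtain ⟨n, hn, hne⟩ := hw
    obtain ⟨w0, rfl, hw0⟩ : ∃ w0, w = ι w0 ∧ ω w0 = 0 := by
      refine ⟨c - n, ?_, ?_⟩
      · rw [map_sub, hne]; abel
      · rw [map_sub, hc, hN0 n hn, sub_zero]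
    have key : ∀ k ∈ K, ‖ω (star w0 * τ k w0) - ω (star w0 * w0)‖ ≤ 2 * η * ‖ι w0‖ := by
      intro k hk
      have hmem : τ k w0 - w0 ∈ N := by
        apply Submodule.subset_span
        exact ⟨k, hk, τ k w0, by rw [hτ_mul, inv_mul_cancel, hτ_one]⟩
      have := hwn _ (Submodule.mem_map_of_mem hmem)
      rw [h1, mul_sub, map_sub] at this
      refine this.trans ?_
      have h4 : ‖ι (τ k w0 - w0)‖ ≤ ‖ι w0‖ + ‖ι w0‖ := by
        rw [map_sub]; refine (norm_sub_le _ _).trans ?_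
        rw [hisom]
      nlinarith
    have hlim := ((hF (star w0) w0).sub_const (ω (star w0 * w0))).norm
    have hle := le_of_tendsto hlim (b := 2 * η * ‖ι w0‖) (by
      filter_upwards [F.fin] with α hα
      have hb : ∀ g ∈ F.Lam α, ‖ω (star w0 * τ g w0)‖ ≤ 2 * η * ‖ι w0‖ + ‖ω (star w0 * w0)‖ := by
        intro g hg
        have := key g ((F.meas α).2 hg)
        have h5 := norm_sub_norm_le (ω (star w0 * τ g w0)) (ω (star w0 * w0))
        linarith
      exact aux_avg hα.1 hα.2
        (aux_int hKmeas (hτ_meas _ _) (F.meas α).2 (F.meas α).1 hα.2 hb)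
        (fun g hg => key g ((F.meas α).2 hg)))
    rw [hw0, mul_zero, zero_sub, norm_neg, ← hnorm, Complex.norm_real,
      Real.norm_of_nonneg (by positivity)] at hle
    by_contra hcon
    push Not at hcon
    nlinarith [norm_nonneg (ι w0)]) ε hε
  obtain ⟨n, hn, rfl⟩ := hn'
  refine ⟨n, hn, fun y => ?_⟩
  rw [hω_tracial]
  have h6 := norm_inner_le_norm (𝕜 := ℂ) (ι (star y)) (ι (c - n))
  rw [h1, star_star, map_sub ι] at h6
  have h7 := h2 (star y)
  rw [norm_star] at h7
  calc _ ≤ _ := h6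
    _ ≤ ‖y‖ * ε := by gcongr
    _ = _ := mul_comm _ _

theorem aux_M
    {A : Type*} [NormedRing A] [StarRing A] [CStarRing A] [NormedAlgebra ℂ A]
    [CompleteSpace A] [StarModule ℂ A]
    (ω : A →ₗ[ℂ] ℂ) (hω_pos : ∀ a : A, 0 ≤ ω (star a * a)) (hω_one : ω 1 = 1)
    (hω_tracial : ∀ a b : A, ω (a * b) = ω (b * a))
    {G : Type*} [CommGroup G] [MeasurableSpace G] (μ : Measure G)
    (hTrans : ∀ (V : Set G) (g : G), MeasurableSet V → MeasurableSet (V * {g}))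
    (hRight : ∀ (V : Set G) (g : G), MeasurableSet V → μ (V * {g}) = μ V)
    (K : Set G) (hKmeas : MeasurableSet K) (hKmul : ∀ g ∈ K, ∀ h ∈ K, g * h ∈ K)
    (τ : G → A ≃⋆ₐ[ℂ] A)
    (hτ_one : ∀ a : A, τ 1 a = a)
    (hτ_mul : ∀ g h a, τ g (τ h a) = τ (g * h) a)
    (hω_inv : ∀ g a, ω (τ g a) = ω a)
    (hτ_meas : ∀ a b : A, Measurable fun g : K => ω (a * τ (g : G) b))
    (hErg : ∃ F : FolnerNetIn μ K, F.ErgodicAlong ω τ)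
    {ι : Type*} [Preorder ι] [Nonempty ι] [IsDirected ι (· ≤ ·)]
    (Λ : ι → Set G)
    (hΛ : ∀ α, MeasurableSet (Λ α) ∧ Λ α ⊆ K)
    (hΛfin : ∀ᶠ α in atTop, 0 < μ (Λ α) ∧ μ (Λ α) < ⊤)
    (hΛfolner : ∀ g ∈ K, Tendsto
      (fun α => (μ (symmDiff (Λ α) (Λ α * {g}))).toReal / (μ (Λ α)).toReal) atTop (𝓝 0))
    (u : A) : ∀ ε > (0 : ℝ), ∀ᶠ α in atTop, ∀ g₂ ∈ K, ∀ x : A,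
      ‖(μ (Λ α)).toReal⁻¹ • ∫ g in Λ α * {g₂}, ω (u * τ g x) ∂μ - ω u * ω x‖ ≤ ε * ‖x‖ := by
  have hb := aux_bound ω hω_pos hω_one
  have hb2 : ∀ (v : A) g x, ‖ω (v * τ g x)‖ ≤ ‖v‖ * ‖x‖ := fun v g x =>
    (hb _).trans ((norm_mul_le _ _).trans
      (mul_le_mul_of_nonneg_left (aux_norm _ _) (norm_nonneg _)))
  have hSK : ∀ α, ∀ g₂ ∈ K, Λ α * {g₂} ⊆ K := by
    rintro α g₂ hg _ ⟨a, ha, b, hb, rfl⟩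
    rw [Set.mem_singleton_iff.1 hb]
    exact hKmul _ ((hΛ α).2 ha) _ hg
  have hSm : ∀ α g₂, MeasurableSet (Λ α * {g₂}) := fun α g₂ => hTrans _ _ (hΛ α).1
  have hSμ : ∀ α g₂, μ (Λ α * {g₂}) = μ (Λ α) := fun α g₂ => hRight _ _ (hΛ α).1
  have hint : ∀ α, μ (Λ α) < ⊤ → ∀ g₂ ∈ K, ∀ v x,
      IntegrableOn (fun g => ω (v * τ g x)) (Λ α * {g₂}) μ := by
    intro α hα g₂ hg v x
    exact aux_int hKmeas (hτ_meas v x) (hSK α g₂ hg) (hSm α g₂) (by rwa [hSμ])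
      (fun g _ => hb2 v g x)
  let T : ι → G → A → A → ℂ := fun α g₂ x u =>
    (μ (Λ α)).toReal⁻¹ • ∫ g in Λ α * {g₂}, ω (u * τ g x) ∂μ - ω u * ω x
  have Tadd : ∀ α, μ (Λ α) < ⊤ → ∀ g₂ ∈ K, ∀ x v w,
      T α g₂ x (v + w) = T α g₂ x v + T α g₂ x w := by
    intro α hα g₂ hg x v w
    simp only [T, add_mul, map_add]
    rw [integral_add (hint α hα g₂ hg v x) (hint α hα g₂ hg w x), smul_add]
    ring
  have Tsmul : ∀ α g₂ x (a : ℂ) v, T α g₂ x (a • v) = a * T α g₂ x v := by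
    intro α g₂ x a v
    simp only [T, smul_mul_assoc, map_smul, smul_eq_mul]
    rw [integral_const_mul, mul_sub, mul_smul_comm, mul_assoc]
  let P : A → Prop := fun u => ∀ ε > (0 : ℝ), ∀ᶠ α in atTop, ∀ g₂ ∈ K, ∀ x : A,
      ‖T α g₂ x u‖ ≤ ε * ‖x‖
  have Padd : ∀ v w, P v → P w → P (v + w) := by
    intro v w hv hw ε hε
    filter_upwards [hΛfin, hv (ε / 2) (by positivity), hw (ε / 2) (by positivity)]
      with α hα h1 h2 g₂ hg x
    rw [Tadd α hα.2 g₂ hg]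
    refine (norm_add_le _ _).trans ?_
    have := h1 g₂ hg x
    have := h2 g₂ hg x
    linarith
  have Psmul : ∀ (a : ℂ) v, P v → P (a • v) := by
    intro a v hv ε hε
    filter_upwards [hv (ε / (‖a‖ + 1)) (by positivity)] with α h1 g₂ hg x
    rw [Tsmul, norm_mul]
    have h2 := h1 g₂ hg x
    calc ‖a‖ * ‖T α g₂ x v‖ ≤ (‖a‖ + 1) * (ε / (‖a‖ + 1) * ‖x‖) := by
          gcongr; linarith
      _ = ε * ‖x‖ := by field_simp
  have P1 : P 1 := by
    intro ε hε
    filter_upwards [hΛfin] with α hα g₂ hg x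
    have h1 := aux_avg (μ := μ) (S := Λ α * {g₂}) (f := fun g => ω (1 * τ g x)) (z := ω x)
      (C := ε * ‖x‖)
      (by rw [hSμ]; exact hα.1) (by rw [hSμ]; exact hα.2) (hint α hα.2 g₂ hg 1 x)
      (by
        intro g _
        rw [one_mul, hω_inv, sub_self, norm_zero]; positivity)
    rw [hSμ] at h1
    simpa only [T, hω_one, one_mul] using h1
  have Pgen : ∀ k ∈ K, ∀ v, P (v - τ k⁻¹ v) := by
    intro k hk v ε hε
    have hlim := (hΛfolner k hk).mul_const ‖v‖
    rw [zero_mul] at hlim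
    filter_upwards [hΛfin, hlim.eventually (eventually_le_nhds hε)] with α hα h1 g₂ hg x
    have hm : 0 < (μ (Λ α)).toReal := ENNReal.toReal_pos hα.1.ne' hα.2.ne
    set S := Λ α * {g₂} with hS
    have hkS : S * {k} = Λ α * {k} * {g₂} := by
      rw [hS, mul_right_comm]
    have hkS' : S * {k} = Λ α * {g₂ * k} := by
      rw [hS, mul_assoc, Set.singleton_mul_singleton]
    have e0 : ω (v - τ k⁻¹ v) = 0 := by rw [map_sub, hω_inv, sub_self]
    have e1 : ∀ g, ω (τ k⁻¹ v * τ g x) = ω (v * τ (g * k) x) := by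
      intro g
      rw [← hω_inv k, map_mul, hτ_mul, hτ_mul, mul_inv_cancel, hτ_one, mul_comm k g]
    have hi1 := hint α hα.2 g₂ hg v x
    have hi2 := hint α hα.2 g₂ hg (τ k⁻¹ v) x
    have hi3 := hint α hα.2 (g₂ * k) (hKmul _ hg _ hk) v x
    rw [← hkS'] at hi3
    have e2 : ∫ g in S, ω ((v - τ k⁻¹ v) * τ g x) ∂μ
        = ∫ g in S, ω (v * τ g x) ∂μ - ∫ g in S * {k}, ω (v * τ g x) ∂μ := by
      rw [aux_shift hTrans hRight (fun g => ω (v * τ g x)) S k]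
      simp only [← e1]
      rw [← integral_sub hi1 hi2]
      simp only [sub_mul, map_sub, hS]
    have e3 := aux_diff (hSm α g₂) (hTrans _ k (hSm α g₂)) (by rw [hSμ]; exact hα.2)
      (by rw [hRight _ _ (hSm α g₂), hSμ]; exact hα.2) hi1 hi3 (fun g => hb2 v g x)
    have e4 : symmDiff S (S * {k}) = symmDiff (Λ α) (Λ α * {k}) * {g₂} := by
      rw [hkS, hS]
      simp only [Set.mul_singleton]
      rw [Set.image_symmDiff (mul_left_injective g₂)]
    rw [e4, hRight _ _ ((hΛ α).1.symmDiff (hSm α k))] at e3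
    simp only [T]
    rw [e0, zero_mul, sub_zero, e2, norm_smul, norm_inv, Real.norm_of_nonneg hm.le,
      inv_mul_le_iff₀ hm]
    refine e3.trans ?_
    rw [div_mul_eq_mul_div, div_le_iff₀ hm] at h1
    nlinarith [norm_nonneg x]
  have Pspan : ∀ n ∈ Submodule.span ℂ {u : A | ∃ k ∈ K, ∃ v, u = v - τ k⁻¹ v}, P n := by
    intro n hn
    induction hn using Submodule.span_induction with
    | mem x hx =>
      obtain ⟨k, hk, v, rfl⟩ := hx
      exact Pgen k hk v
    | zero => simpa using Psmul 0 1 P1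
    | add x y _ _ hx hy => exact Padd x y hx hy
    | smul a x _ hx => exact Psmul a x hx
  have P0 : ∀ c, ω c = 0 → P c := by
    intro c hc ε hε
    obtain ⟨n, hn, hn'⟩ := aux_cob ω hω_pos hω_one hω_tracial μ K hKmeas τ hτ_one hτ_mul hω_inv
      hτ_meas hErg c hc (ε / 4) (by positivity)
    filter_upwards [hΛfin, Pspan n hn (ε / 2) (by positivity)] with α hα h1 g₂ hg x
    have e1 : c = n + (c - n) := by abel
    rw [e1, Tadd α hα.2 g₂ hg]
    refine (norm_add_le _ _).trans ?_
    have h2 := h1 g₂ hg x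
    have h3 : ‖T α g₂ x (c - n)‖ ≤ ε / 2 * ‖x‖ := by
      have h4 := aux_avg (μ := μ) (S := Λ α * {g₂}) (f := fun g => ω ((c - n) * τ g x))
        (z := ω (c - n) * ω x) (C := ε / 2 * ‖x‖)
        (by rw [hSμ]; exact hα.1) (by rw [hSμ]; exact hα.2) (hint α hα.2 g₂ hg (c - n) x)
        (by
          intro g _
          refine (norm_sub_le _ _).trans ?_
          have h5 := (hn' (τ g x)).trans
            (mul_le_mul_of_nonneg_left (aux_norm (τ g) x) (by positivity))
          have h6 : ‖ω (c - n) * ω x‖ ≤ ε / 4 * ‖x‖ := by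
            have := hn' (ω x • 1)
            rw [mul_smul_comm, mul_one, map_smul, smul_eq_mul, mul_comm, norm_smul] at this
            have h1 : ‖(1 : A)‖ = 1 := by
              have : Nontrivial A := by
                refine ⟨1, 0, fun h => ?_⟩
                rw [h, map_zero] at hω_one
                exact zero_ne_one hω_one
              exact CStarRing.norm_one
            rw [h1, mul_one] at this
            exact this.trans (mul_le_mul_of_nonneg_left (hb x) (by positivity))
          linarith)
      rwa [hSμ] at h4
    linarith
  have hPu : P u := by
    have e1 : u = ω u • 1 + (u - ω u • 1) := by abel
    rw [e1]
    exact Padd _ _ (Psmul _ _ P1) (P0 _ (by simp [hω_one]))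
  exact hPu

/-- **Proposition 4.3(3).** If moreover `(A, ω, τ, K)` is uniformly asymptotically abelian
with respect to `(Λ1 α)` and `ω` is tracial, then
`lim_α sup_{g₁ g₂ ∈ K} |M_{α,g₁,g₂}(ω (τ_h(a₁) τ_g(a₂) τ_{gh}(a₃) τ_g(a₄) τ_h(a₅)))
  − ω(a₅a₁) ω(a₃) ω(a₂a₄)| = 0`. -/
theorem prop_4_3_3
    -- a unital C*-algebra A
    {A : Type*} [NormedRing A] [StarRing A] [CStarRing A] [NormedAlgebra ℂ A]
    [CompleteSpace A] [StarModule ℂ A]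
    -- a tracial state ω on A
    (ω : A →ₗ[ℂ] ℂ) (hω_pos : ∀ a : A, 0 ≤ ω (star a * a)) (hω_one : ω 1 = 1)
    (hω_tracial : ∀ a b : A, ω (a * b) = ω (b * a))
    -- a right invariant measure group (G, Σ, μ) with G abelian
    {G : Type*} [CommGroup G] [MeasurableSpace G] (μ : Measure G)
    (hTrans : ∀ (V : Set G) (g : G), MeasurableSet V → MeasurableSet (V * {g}))
    (hRight : ∀ (V : Set G) (g : G), MeasurableSet V → μ (V * {g}) = μ V)
    (hInvMeas : Measurable (fun g : G => g⁻¹))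
    (hInvInv : ∀ V : Set G, MeasurableSet V → μ V⁻¹ = μ V)
    -- K is a Følner semigroup in G
    (K : Set G) (hKmeas : MeasurableSet K) (hKmul : ∀ g ∈ K, ∀ h ∈ K, g * h ∈ K)
    -- the action τ, making (A, ω, τ, K) a C*-dynamical system
    (τ : G → A ≃⋆ₐ[ℂ] A)
    (hτ_one : ∀ a : A, τ 1 a = a)
    (hτ_mul : ∀ g h a, τ g (τ h a) = τ (g * h) a)
    (hω_inv : ∀ g a, ω (τ g a) = ω a)
    (hτ_meas : ∀ a b : A, Measurable fun g : K => ω (a * τ (g : G) b))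
    -- g ↦ ‖[a, τ_g(b)]‖ is Σ|_K-measurable
    (hcomm_meas : ∀ a b : A, Measurable fun g : K => ‖a * τ (g : G) b - τ (g : G) b * a‖)
    -- the system is ergodic (w.r.t. some, equivalently every, Følner net in K)
    (hErg : ∃ F : FolnerNetIn μ K, F.ErgodicAlong ω τ)
    -- the measurability hypothesis: (g,h) ↦ ω(τ_h(a₁) τ_g(a₂) τ_{gh}(a₃) τ_g(a₄) τ_h(a₅))
    (hmeas5 : ∀ a₁ a₂ a₃ a₄ a₅ : A, Measurable fun p : K × K =>
      ω (τ (p.2 : G) a₁ * τ (p.1 : G) a₂ * τ ((p.1 : G) * (p.2 : G)) a₃ *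
          τ (p.1 : G) a₄ * τ (p.2 : G) a₅))
    -- Følner nets (Λ1 α), (Λ2 α) in K indexed by the same directed set
    {ι : Type*} [Preorder ι] [Nonempty ι] [IsDirected ι (· ≤ ·)]
    (Λ1 Λ2 : ι → Set G)
    (hΛ1 : ∀ α, MeasurableSet (Λ1 α) ∧ Λ1 α ⊆ K)
    (hΛ1fin : ∀ᶠ α in atTop, 0 < μ (Λ1 α) ∧ μ (Λ1 α) < ⊤)
    (hΛ1folner : ∀ g ∈ K, Tendsto
      (fun α => (μ (symmDiff (Λ1 α) (Λ1 α * {g}))).toReal / (μ (Λ1 α)).toReal) atTop (𝓝 0))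
    (hΛ2 : ∀ α, MeasurableSet (Λ2 α) ∧ Λ2 α ⊆ K)
    (hΛ2fin : ∀ᶠ α in atTop, 0 < μ (Λ2 α) ∧ μ (Λ2 α) < ⊤)
    (hΛ2folner : ∀ g ∈ K, Tendsto
      (fun α => (μ (symmDiff (Λ2 α) (Λ2 α * {g}))).toReal / (μ (Λ2 α)).toReal) atTop (𝓝 0))
    -- the system is uniformly asymptotically abelian with respect to (Λ1 α) (ε-form)
    (hUAA : ∀ a b : A, ∀ ε > (0 : ℝ), ∀ᶠ α in atTop, ∀ h ∈ K,
      (μ (Λ1 α)).toReal⁻¹ * ∫ g in Λ1 α * {h}, ‖a * τ g b - τ g b * a‖ ∂μ ≤ ε) :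
    -- conclusion, with the `lim sup = 0` expressed in ε-form
    ∀ a₁ a₂ a₃ a₄ a₅ : A, ∀ ε > (0 : ℝ), ∀ᶠ α in atTop, ∀ g₁ ∈ K, ∀ g₂ ∈ K,
      ‖((μ (Λ1 α)).toReal * (μ (Λ2 α)).toReal)⁻¹ •
          (∫ h in Λ1 α * {g₁}, ∫ g in Λ2 α * {g₂},
            ω (τ h a₁ * τ g a₂ * τ (g * h) a₃ * τ g a₄ * τ h a₅) ∂μ ∂μ)
        - ω (a₅ * a₁) * ω a₃ * ω (a₂ * a₄)‖ ≤ ε := by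
  intro a₁ a₂ a₃ a₄ a₅ ε hε
  have hM1 := aux_M ω hω_pos hω_one hω_tracial μ hTrans hRight K hKmeas hKmul τ hτ_one hτ_mul
    hω_inv hτ_meas hErg Λ1 hΛ1 hΛ1fin hΛ1folner
  have hM2 := aux_M ω hω_pos hω_one hω_tracial μ hTrans hRight K hKmeas hKmul τ hτ_one hτ_mul
    hω_inv hτ_meas hErg Λ2 hΛ2 hΛ2fin hΛ2folner
  have hb := aux_bound ω hω_pos hω_one
  have hSK : ∀ S : Set G, S ⊆ K → ∀ g₂ ∈ K, S * {g₂} ⊆ K := by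
    rintro S hS g₂ hg _ ⟨a, ha, b, hb, rfl⟩
    rw [Set.mem_singleton_iff.1 hb]
    exact hKmul _ (hS ha) _ hg
  set D : ℝ := ‖a₂‖ * ‖a₃‖ * ‖a₄‖ with hD
  set B : ℝ := ‖a₁‖ * ‖a₂‖ * ‖a₃‖ * ‖a₄‖ * ‖a₅‖ with hB
  have hD0 : 0 ≤ D := by positivity
  let f : G → G → ℂ := fun h g => ω (τ h a₁ * τ g a₂ * τ (g * h) a₃ * τ g a₄ * τ h a₅)
  have hfB : ∀ h g, ‖f h g‖ ≤ B := by
    intro h g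
    refine (hb _).trans ?_
    refine (norm_mul_le _ _).trans (mul_le_mul ?_ (aux_norm _ _) (norm_nonneg _) (by positivity))
    refine (norm_mul_le _ _).trans (mul_le_mul ?_ (aux_norm _ _) (norm_nonneg _) (by positivity))
    refine (norm_mul_le _ _).trans (mul_le_mul ?_ (aux_norm _ _) (norm_nonneg _) (by positivity))
    exact (norm_mul_le _ _).trans (mul_le_mul (aux_norm _ _) (aux_norm _ _) (norm_nonneg _)
      (by positivity))
  have hfeq : ∀ h g, f h g = ω ((a₅ * a₁) * τ g (τ h⁻¹ (a₂ * τ h a₃ * a₄))) := by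
    intro h g
    rw [← hω_inv h (_ * _), map_mul (τ h), hτ_mul, hτ_mul,
      show h * g * h⁻¹ = g by rw [mul_comm h, mul_inv_cancel_right]]
    simp only [f]
    rw [hω_tracial _ (τ h a₅)]
    simp only [map_mul, hτ_mul, mul_assoc]
  have hω3 : ∀ h, ω (τ h⁻¹ (a₂ * τ h a₃ * a₄)) = ω (a₄ * a₂ * τ h a₃) := by
    intro h
    rw [hω_inv, hω_tracial, mul_assoc]
  have hxn : ∀ h, ‖τ h⁻¹ (a₂ * τ h a₃ * a₄)‖ ≤ D := by
    intro h
    refine (aux_norm _ _).trans ((norm_mul_le _ _).trans ?_)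
    refine mul_le_mul_of_nonneg_right ?_ (norm_nonneg _)
    exact (norm_mul_le _ _).trans (mul_le_mul_of_nonneg_left (aux_norm _ _) (norm_nonneg _))
  set W : ℂ := ω (a₅ * a₁) with hW
  filter_upwards [hΛ1fin, hΛ2fin, hM2 (a₅ * a₁) (ε / (2 * (D + 1))) (by positivity),
    hM1 (a₄ * a₂) (ε / (2 * (‖W‖ * ‖a₃‖ + 1))) (by positivity)]
    with α hα1 hα2 h2 h1 g₁ hg₁ g₂ hg₂
  set S := Λ1 α * {g₁} with hS
  set R := Λ2 α * {g₂} with hR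
  have hSm : MeasurableSet S := hTrans _ _ (hΛ1 α).1
  have hRm : MeasurableSet R := hTrans _ _ (hΛ2 α).1
  have hSμ : μ S = μ (Λ1 α) := hRight _ _ (hΛ1 α).1
  have hRμ : μ R = μ (Λ2 α) := hRight _ _ (hΛ2 α).1
  have hSsub : S ⊆ K := hSK _ (hΛ1 α).2 _ hg₁
  have hRsub : R ⊆ K := hSK _ (hΛ2 α).2 _ hg₂
  have hSfin : μ S < ⊤ := hSμ ▸ hα1.2
  have hRfin : μ R < ⊤ := hRμ ▸ hα2.2
  set m1 := (μ (Λ1 α)).toReal with hm1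
  set m2 := (μ (Λ2 α)).toReal with hm2
  have hm1p : 0 < m1 := ENNReal.toReal_pos hα1.1.ne' hα1.2.ne
  have hm2p : 0 < m2 := ENNReal.toReal_pos hα2.1.ne' hα2.2.ne
  let Φ : G → ℂ := fun h => m2⁻¹ • ∫ g in R, f h g ∂μ
  let Ψ : G → ℂ := fun h => W * ω (a₄ * a₂ * τ h a₃)
  have hΦint : IntegrableOn Φ S μ := by
    have : IsFiniteMeasure (μ.restrict S) := ⟨by rwa [Measure.restrict_apply_univ]⟩
    have : IsFiniteMeasure (μ.restrict R) := ⟨by rwa [Measure.restrict_apply_univ]⟩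
    have hjm : AEStronglyMeasurable (fun p : G × G => f p.1 p.2)
        ((μ.restrict S).prod (μ.restrict R)) := by
      have hKK : MeasurableSet (K ×ˢ K) := hKmeas.prod hKmeas
      have hms : Measurable (fun p : (K ×ˢ K : Set (G × G)) => f p.1.1 p.1.2) := by
        have h3 : Measurable (fun p : (K ×ˢ K : Set (G × G)) =>
            ((⟨p.1.2, p.2.2⟩, ⟨p.1.1, p.2.1⟩) : K × K)) := by
          apply Measurable.prodMk
          · exact (measurable_snd.comp measurable_subtype_coe).subtype_mk
          · exact (measurable_fst.comp measurable_subtype_coe).subtype_mk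
        exact (hmeas5 a₁ a₂ a₃ a₄ a₅).comp h3
      have h4 := aemeasurable_restrict_of_measurable_subtype
        (μ := (μ.restrict S).prod (μ.restrict R)) hKK (f := fun p : G × G => f p.1 p.2) hms
      have h5 : ((μ.restrict S).prod (μ.restrict R)).restrict (K ×ˢ K)
          = (μ.restrict S).prod (μ.restrict R) := by
        rw [← Measure.prod_restrict, Measure.restrict_restrict hKmeas,
          Measure.restrict_restrict hKmeas, Set.inter_eq_right.2 hSsub,
          Set.inter_eq_right.2 hRsub]
      rw [h5] at h4
      exact h4.aestronglyMeasurable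
    have hji : Integrable (fun p : G × G => f p.1 p.2) ((μ.restrict S).prod (μ.restrict R)) :=
      Integrable.of_bound hjm B (Eventually.of_forall fun p => hfB _ _)
    exact hji.integral_prod_left.smul m2⁻¹
  have hΨint : IntegrableOn Ψ S μ := by
    refine Integrable.const_mul ?_ W
    refine aux_int hKmeas (hτ_meas _ _) hSsub hSm hSfin (C := ‖a₄ * a₂‖ * ‖a₃‖) ?_
    intro g _
    exact (hb _).trans ((norm_mul_le _ _).trans
      (mul_le_mul_of_nonneg_left (aux_norm _ _) (norm_nonneg _)))
  have hpt : ∀ h ∈ S, ‖Φ h - Ψ h‖ ≤ ε / 2 := by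
    intro h _
    have h3 := h2 g₂ hg₂ (τ h⁻¹ (a₂ * τ h a₃ * a₄))
    simp only [← hfeq] at h3
    rw [hω3] at h3
    refine h3.trans ?_
    calc ε / (2 * (D + 1)) * ‖τ h⁻¹ (a₂ * τ h a₃ * a₄)‖ ≤ ε / (2 * (D + 1)) * (D + 1) := by
          gcongr; exact (hxn h).trans (by linarith)
      _ = ε / 2 := by field_simp
  have hA : ‖m1⁻¹ • ∫ h in S, (Φ h - Ψ h) ∂μ‖ ≤ ε / 2 := by
    have h3 := norm_setIntegral_le_of_norm_le_const hSfin hpt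
    have h4 : μ.real S = m1 := by rw [hm1, ← hSμ]; rfl
    rw [h4] at h3
    rw [norm_smul, norm_inv, Real.norm_of_nonneg hm1p.le, inv_mul_le_iff₀ hm1p]
    linarith
  have hBd : ‖m1⁻¹ • ∫ h in S, Ψ h ∂μ - W * (ω (a₄ * a₂) * ω a₃)‖ ≤ ε / 2 := by
    have h3 := h1 g₁ hg₁ a₃
    have h4 : m1⁻¹ • ∫ h in S, Ψ h ∂μ - W * (ω (a₄ * a₂) * ω a₃)
        = W * (m1⁻¹ • ∫ h in S, ω (a₄ * a₂ * τ h a₃) ∂μ - ω (a₄ * a₂) * ω a₃) := by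
      simp only [Ψ]
      rw [integral_const_mul, mul_sub, mul_smul_comm]
    rw [h4, norm_mul]
    calc _ ≤ ‖W‖ * (ε / (2 * (‖W‖ * ‖a₃‖ + 1)) * ‖a₃‖) := by gcongr
      _ = ε / (2 * (‖W‖ * ‖a₃‖ + 1)) * (‖W‖ * ‖a₃‖) := by ring
      _ ≤ ε / (2 * (‖W‖ * ‖a₃‖ + 1)) * (‖W‖ * ‖a₃‖ + 1) := by gcongr; linarith
      _ = ε / 2 := by field_simp
  have hfinal : (m1 * m2)⁻¹ • (∫ h in S, ∫ g in R, f h g ∂μ ∂μ) - W * ω a₃ * ω (a₂ * a₄)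
      = m1⁻¹ • ∫ h in S, (Φ h - Ψ h) ∂μ
        + (m1⁻¹ • ∫ h in S, Ψ h ∂μ - W * (ω (a₄ * a₂) * ω a₃)) := by
    rw [integral_sub hΦint hΨint, smul_sub]
    have h5 : ∫ h in S, Φ h ∂μ = m2⁻¹ • ∫ h in S, ∫ g in R, f h g ∂μ ∂μ := integral_smul _ _
    rw [h5, smul_smul, mul_inv, hω_tracial a₂ a₄]
    ring
  change ‖(m1 * m2)⁻¹ • (∫ h in S, ∫ g in R, f h g ∂μ ∂μ) - W * ω a₃ * ω (a₂ * a₄)‖ ≤ ε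
  rw [hfinal]
  refine (norm_add_le _ _).trans ?_
  linarith
end
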